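/- arXiv:2310.17337 — 5 statements merged into one kernel-verified Lean document; each statement's English description precedes it below -/
import Mathlib

section
/- If G is a connected graph of order n that is not isomorphic to the 3-cycle C_3, then ι(G, 𝒞) ≤ n/4, where 𝒞 = {C_k : k ≥ 3} is the family of all cycles; that is, G has a set D of at most n/4 vertices such that G − N[D] contains no cycle. -/
/-!
The proof replaces cycles by cores, where a core is a nonempty vertex set inducing minimum degree at least `2`.
The vertex set of a cycle is a core, so it suffices to find a set `D` with `4 |D| ≤ n` whose closed
neighbourhood meets every core. This is proved by strong induction for every `A ⊆ V` such that no
component of `G[A]` is a triangle (`exists_hitsCores`); connectedness is not needed. All the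
notions below are relative to `G[A]`.

The induction rests on one reduction (`HitsCores.extend`): if `X ⊆ A` has at least four vertices,
no component of `A \ X` is a triangle, and a core avoiding `N[d]` avoids `X`, then `d` together
with a solution for `A \ X` is a solution for `A`. Suppose `A` has no solution.

* Deleting a vertex `x` never creates triangle components: otherwise reduce with `d = x` and `X`
  the union of `x` with all triangle components of `A \ {x}`, each of which has a neighbour of `x`.
* Some vertex has degree at least `3`: otherwise a minimal core `S` is closed under adjacency, is
  not a triangle, and so has at least four vertices; reduce with `X = S` and any `d ∈ S`.
* Let `v` have maximum degree. Reducing with `X = N[v]` shows that `A \ N[v]` has a triangle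
  component `T`, which has an edge `yx` with `y ∈ T` and `x ∈ N(v)`. Reducing with `d = y` and
  `X = T ∪ {x}` shows that `A \ X` has a triangle component `T'`. It contains `v`, as otherwise
  it would be a component of `A \ {x}`. So `T' = N[v] \ {x}` and the maximum degree is `3`.
* As `T` is not a component of `A \ {x}`, there is an edge `ab` with `a ∈ T` and `b ∈ T'`, and the
  degree bound gives `a ≠ y`. Reducing with `N[a] = T ∪ {b}` forces `x` to be adjacent to the
  third vertex of `T' = {v, b, ·}`, and reducing with `N[b] = T' ∪ {a}` forces `x` to be adjacent
  to the third vertex of `T = {y, a, ·}`. Then `x` has degree at least `4`, a contradiction.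
-/

open SimpleGraph

/-- `H` has a copy in `G`, i.e. `H` is isomorphic to a (not necessarily induced)
subgraph of `G`. -/
def HasCopy {W V : Type*} (H : SimpleGraph W) (G : SimpleGraph V) : Prop :=
  ∃ f : H →g G, Function.Injective f

/-- The closed neighbourhood `N[D]` of a set of vertices `D` in `G`. -/
def closedNbhd {V : Type*} (G : SimpleGraph V) (D : Set V) : Set V :=
  D ∪ {v | ∃ u ∈ D, G.Adj u v}

/-- `D` is an `H`-isolating set of `G`: the subgraph of `G` induced on the complement
of `N[D]` contains no copy of `H`. -/
def IsIsolating {V W : Type*} (G : SimpleGraph V) (H : SimpleGraph W) (D : Set V) : Prop :=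
  ¬ HasCopy H (G.induce (closedNbhd G D)ᶜ)

/-- The `H`-isolation number of `G`: the minimum cardinality of an `H`-isolating set. -/
noncomputable def isolNum {V W : Type*} (G : SimpleGraph V) (H : SimpleGraph W) : ℕ :=
  sInf {n | ∃ D : Set V, IsIsolating G H D ∧ D.ncard = n}

/-- `cons(T, C_k)`: from `T` and `|V(T)|` pairwise disjoint copies of the cycle `C_k`,
join each vertex of `T` to one vertex of its own copy of `C_k` by a single edge. -/
def consGraph {α : Type*} (T : SimpleGraph α) (k : ℕ) :
    SimpleGraph (α ⊕ α × Fin k) :=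
  SimpleGraph.fromRel (fun x y =>
    match x, y with
    | Sum.inl a, Sum.inl b => T.Adj a b
    | Sum.inl a, Sum.inr p => a = p.1 ∧ p.2.val = 0
    | Sum.inr p, Sum.inr q => p.1 = q.1 ∧ (cycleGraph k).Adj p.2 q.2
    | _, _ => False)

/-- `G ∈ 𝒢ₖ`: `G` is isomorphic to `cons(T, C_k)` for some tree `T`. -/
def MemG {V : Type*} (G : SimpleGraph V) (k : ℕ) : Prop :=
  ∃ (n : ℕ) (T : SimpleGraph (Fin n)), T.IsTree ∧ Nonempty (G ≃g consGraph T k)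

/-- The diamond graph `K₄⁻`, obtained from `K₄` by deleting one edge. -/
def diamondGraph : SimpleGraph (Fin 4) :=
  (completeGraph (Fin 4)).deleteEdges {s(0, 1)}

/-- `C₄⁺`: a `4`-cycle with a pendant edge attached to one of its vertices. -/
def c4plus : SimpleGraph (Fin 5) :=
  SimpleGraph.fromEdgeSet {s(0, 1), s(1, 2), s(2, 3), s(3, 0), s(0, 4)}
/-! ### Cores and triangle components -/

/-- A core: a nonempty vertex set in which every vertex has at least two neighbours, that is, one
inducing a subgraph of minimum degree at least `2`. -/
def IsCore {V : Type*} (G : SimpleGraph V) (S : Finset V) : Prop :=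
  S.Nonempty ∧ ∀ u ∈ S, ∃ a ∈ S, ∃ b ∈ S, a ≠ b ∧ G.Adj u a ∧ G.Adj u b

/-- `T` is the vertex set of a component of `G[A]` that is a triangle. -/
def IsTriComp {V : Type*} (G : SimpleGraph V) (A T : Finset V) : Prop :=
  T ⊆ A ∧ T.card = 3 ∧ (∀ s ∈ T, ∀ t ∈ T, s ≠ t → G.Adj s t) ∧
    ∀ s ∈ T, ∀ u ∈ A, G.Adj s u → u ∈ T

/-- Some set `D` with `4 |D| ≤ |A|` has a closed neighbourhood meeting every core inside `A`. -/
def HitsCores {V : Type*} (G : SimpleGraph V) (A : Finset V) : Prop :=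
  ∃ D : Finset V, 4 * D.card ≤ A.card ∧
    ∀ S ⊆ A, IsCore G S → ∃ u ∈ S, u ∈ D ∨ ∃ d ∈ D, G.Adj d u

open Classical in
/-- The reduction: a solution for `A \ X` and one vertex `d` give a solution for `A`, provided every
core avoiding `N[d]` avoids `X`. -/
theorem HitsCores.extend {V : Type*} {G : SimpleGraph V} {A X : Finset V} (d : V) (hX : X ⊆ A)
    (hc : 4 ≤ X.card) (h : HitsCores G (A \ X))
    (hS : ∀ S ⊆ A, IsCore G S → (∀ u ∈ S, u ≠ d ∧ ¬ G.Adj d u) → ∀ u ∈ S, u ∉ X) :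
    HitsCores G A := by
  obtain ⟨D, hD, hD'⟩ := h
  refine ⟨insert d D, ?_, fun S hSA hcore => ?_⟩
  · have h1 := Finset.card_insert_le d D
    have h2 := Finset.card_sdiff_add_card_eq_card hX
    omega
  · by_contra! hno
    have h1 := hS S hSA hcore fun u hu =>
      ⟨fun h => (hno u hu).1 (by simp [h]), (hno u hu).2 d (by simp)⟩
    obtain ⟨u, hu, h2⟩ := hD' S
      (fun u hu => Finset.mem_sdiff.2 ⟨hSA hu, h1 u hu⟩) hcore
    rcases h2 with h2 | ⟨e, he, h2⟩
    · exact (hno u hu).1 (by simp [h2])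
    · exact (hno u hu).2 e (by simp [he]) h2

/-! ### Two reducible configurations -/

open Classical in
/-- The case where `A \ {x}` has a triangle component: deleting `x` together with all triangle
components of `A \ {x}` leaves no triangle component. -/
theorem HitsCores.of_isTriComp_erase {V : Type*} {G : SimpleGraph V} {A : Finset V}
    (hA : ∀ T, ¬ IsTriComp G A T)
    (ih : ∀ B ⊂ A, (∀ T, ¬ IsTriComp G B T) → HitsCores G B)
    {x : V} (hx : x ∈ A) {T : Finset V} (hT : IsTriComp G (A \ {x}) T) : HitsCores G A := by
  set W : Finset V := A.filter fun u => ∃ T, IsTriComp G (A \ {x}) T ∧ u ∈ T with hW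
  have hTW : ∀ T, IsTriComp G (A \ {x}) T → T ⊆ W := fun T hT u hu =>
    Finset.mem_filter.2 ⟨(Finset.mem_sdiff.1 (hT.1 hu)).1, T, hT, hu⟩
  have hxW : x ∉ W := by
    intro h
    obtain ⟨-, T, hT, hxT⟩ := Finset.mem_filter.1 h
    simpa using hT.1 hxT
  have hXA : insert x W ⊆ A := Finset.insert_subset hx (Finset.filter_subset _ _)
  have hcard : 4 ≤ (insert x W).card := by
    rw [Finset.card_insert_of_notMem hxW]
    have := Finset.card_le_card (hTW T hT)
    have := hT.2.1
    omega
  refine HitsCores.extend x hXA hcard (ih _ ?_ ?_) ?_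
  · exact Finset.sdiff_ssubset hXA ⟨x, by simp⟩
  · intro T' hT'
    have hT'' : IsTriComp G (A \ {x}) T' := by
      refine ⟨fun u hu => ?_, hT'.2.1, hT'.2.2.1, fun s hs u hu hsu => ?_⟩
      · have := hT'.1 hu
        simp only [Finset.mem_sdiff, Finset.mem_insert, Finset.mem_singleton] at this ⊢
        tauto
      · have hs' := hT'.1 hs
        simp only [Finset.mem_sdiff, Finset.mem_insert, Finset.mem_singleton] at hs' hu
        by_cases huW : u ∈ W
        · obtain ⟨-, U, hU, huU⟩ := Finset.mem_filter.1 huW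
          have : s ∈ U := hU.2.2.2 u huU s (by simp; tauto) hsu.symm
          exact absurd (hTW U hU this) (by tauto)
        · exact hT'.2.2.2 s hs u (by simp; tauto) hsu
    obtain ⟨u, hu⟩ : T'.Nonempty := by
      rw [← Finset.card_pos, hT'.2.1]; norm_num
    have h1 := hT'.1 hu
    have h2 := hTW T' hT'' hu
    simp [h2] at h1
  · intro S hSA hS hno u hu huX
    rcases Finset.mem_insert.1 huX with rfl | huW
    · exact (hno u hu).1 rfl
    obtain ⟨-, U, hU, huU⟩ := Finset.mem_filter.1 huW
    have hxS : x ∉ S := fun h => (hno x h).1 rfl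
    obtain ⟨a, ha, b, hb, hab, hua, hub⟩ := hS.2 u hu
    have haU : a ∈ U := hU.2.2.2 u huU a (by simp [hSA ha]; rintro rfl; exact hxS ha) hua
    have hbU : b ∈ U := hU.2.2.2 u huU b (by simp [hSA hb]; rintro rfl; exact hxS hb) hub
    have hUeq : U = {u, a, b} := by
      symm
      apply Finset.eq_of_subset_of_card_le
      · intro z hz
        simp only [Finset.mem_insert, Finset.mem_singleton] at hz
        rcases hz with rfl | rfl | rfl <;> assumption
      · rw [hU.2.1, Finset.card_eq_three.2 ⟨u, a, b, hua.ne, hub.ne, hab, rfl⟩]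
    -- `U` lies inside `S`, and it has a vertex adjacent to `x` as it is not a component of `A`
    refine hA U ⟨fun z hz => (Finset.mem_sdiff.1 (hU.1 hz)).1, hU.2.1, hU.2.2.1, ?_⟩
    intro s hs w hw hsw
    by_cases hwx : w = x
    · subst hwx
      have hsS : s ∈ S := by
        rw [hUeq] at hs
        simp only [Finset.mem_insert, Finset.mem_singleton] at hs
        rcases hs with rfl | rfl | rfl <;> assumption
      exact absurd hsw.symm (hno s hsS).2
    · exact hU.2.2.2 s hs w (by simp [hw, hwx]) hsw

open Classical in
/-- The case of maximum degree at most `2`, where a minimal core is closed under adjacency. -/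
theorem HitsCores.of_degree_le_two {V : Type*} {G : SimpleGraph V} {A : Finset V}
    (hA : ∀ T, ¬ IsTriComp G A T)
    (ih : ∀ B ⊂ A, (∀ T, ¬ IsTriComp G B T) → HitsCores G B)
    (hdeg : ∀ u ∈ A, (A.filter (G.Adj u)).card ≤ 2) : HitsCores G A := by
  by_cases hex : ∃ S, S ⊆ A ∧ IsCore G S
  swap
  · exact ⟨∅, by simp, fun S h1 h2 => absurd ⟨S, h1, h2⟩ hex⟩
  obtain ⟨S, hSm⟩ := exists_minimal_of_wellFoundedLT (fun S => S ⊆ A ∧ IsCore G S) hex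
  obtain ⟨hSA, hS⟩ := hSm.prop
  have hclosed : ∀ s ∈ S, ∀ u ∈ A, G.Adj s u → u ∈ S := by
    intro s hs u hu hsu
    obtain ⟨a, ha, b, hb, hab, hsa, hsb⟩ := hS.2 s hs
    by_contra huS
    have h3 : ({a, b, u} : Finset V).card = 3 :=
      Finset.card_eq_three.2 ⟨a, b, u, hab, fun h => huS (h ▸ ha), fun h => huS (h ▸ hb), rfl⟩
    have h4 : ({a, b, u} : Finset V) ⊆ A.filter (G.Adj s) := by
      intro z hz
      simp only [Finset.mem_insert, Finset.mem_singleton] at hz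
      rcases hz with rfl | rfl | rfl <;> simp [*, hSA ha, hSA hb]
    have := Finset.card_le_card h4
    have := hdeg s (hSA hs)
    omega
  obtain ⟨d, hd⟩ := hS.1
  have hcard : 4 ≤ S.card := by
    by_contra hlt
    have key : ∀ s ∈ S, ∃ a ∈ S, ∃ b ∈ S, G.Adj s a ∧ G.Adj s b ∧ S = {s, a, b} ∧ S.card = 3 := by
      intro s hs
      obtain ⟨a, ha, b, hb, hab, hsa, hsb⟩ := hS.2 s hs
      have h3 : ({s, a, b} : Finset V).card = 3 :=
        Finset.card_eq_three.2 ⟨s, a, b, hsa.ne, hsb.ne, hab, rfl⟩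
      have hsub : ({s, a, b} : Finset V) ⊆ S := by
        intro z hz
        simp only [Finset.mem_insert, Finset.mem_singleton] at hz
        rcases hz with rfl | rfl | rfl <;> assumption
      have heq := Finset.eq_of_subset_of_card_le hsub (by omega)
      exact ⟨a, ha, b, hb, hsa, hsb, heq.symm, by rw [← heq, h3]⟩
    obtain ⟨-, -, -, -, -, -, -, h3⟩ := key d hd
    refine hA S ⟨hSA, h3, fun s hs t ht hst => ?_, hclosed⟩
    obtain ⟨a, -, b, -, hsa, hsb, heq, -⟩ := key s hs
    rw [heq] at ht
    simp only [Finset.mem_insert, Finset.mem_singleton] at ht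
    rcases ht with rfl | rfl | rfl
    · exact absurd rfl hst
    · exact hsa
    · exact hsb
  refine HitsCores.extend d hSA hcard (ih _ (Finset.sdiff_ssubset hSA hS.1) ?_) ?_
  · intro T hT
    refine hA T ⟨hT.1.trans Finset.sdiff_subset, hT.2.1, hT.2.2.1, fun s hs u hu hsu => ?_⟩
    by_cases huS : u ∈ S
    · have hs' := Finset.mem_sdiff.1 (hT.1 hs)
      exact absurd (hclosed u huS s hs'.1 hsu.symm) hs'.2
    · exact hT.2.2.2 s hs u (Finset.mem_sdiff.2 ⟨hu, huS⟩) hsu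
  · intro S' hS'A hS' hno u hu huS
    have hcore : IsCore G (S' ∩ S) := by
      refine ⟨⟨u, Finset.mem_inter.2 ⟨hu, huS⟩⟩, fun w hw => ?_⟩
      obtain ⟨hw1, hw2⟩ := Finset.mem_inter.1 hw
      obtain ⟨a, ha, b, hb, hab, hwa, hwb⟩ := hS'.2 w hw1
      exact ⟨a, Finset.mem_inter.2 ⟨ha, hclosed w hw2 a (hS'A ha) hwa⟩, b,
        Finset.mem_inter.2 ⟨hb, hclosed w hw2 b (hS'A hb) hwb⟩, hab, hwa, hwb⟩
    have hle := hSm.le_of_le ⟨Finset.inter_subset_right.trans hSA, hcore⟩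
      (Finset.inter_subset_right : S' ∩ S ⊆ S)
    exact (hno d (Finset.mem_inter.1 (hle hd)).1).1 rfl

/-! ### The induction -/

set_option maxHeartbeats 1000000 in
open Classical in
/-- The isolation bound for an induced subgraph without triangle components. -/
theorem exists_hitsCores {V : Type*} (G : SimpleGraph V) (A : Finset V)
    (hA : ∀ T, ¬ IsTriComp G A T) : HitsCores G A := by
  induction A using Finset.strongInduction with
  | H A ih =>
  by_contra hcon
  -- the reduction with `X ⊆ N[d]`, where a core avoiding `N[d]` trivially avoids `X`
  have F1 : ∀ d X, X ⊆ A → (∀ u ∈ X, u = d ∨ G.Adj d u) → 4 ≤ X.card →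
      ∃ T, IsTriComp G (A \ X) T := by
    intro d X hXA hX hc
    by_contra! hno
    refine hcon (HitsCores.extend d hXA hc (ih _ (Finset.sdiff_ssubset hXA ?_) hno) ?_)
    · rw [← Finset.card_pos]; omega
    · intro S _ _ hS u hu huX
      rcases hX u huX with h | h
      · exact (hS u hu).1 h
      · exact (hS u hu).2 h
  have F2 : ∀ x ∈ A, ∀ T, ¬ IsTriComp G (A \ {x}) T := fun x hx T hT =>
    hcon (HitsCores.of_isTriComp_erase hA ih hx hT)
  obtain ⟨w, hw, hw3⟩ : ∃ w ∈ A, 2 < (A.filter (G.Adj w)).card := by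
    by_contra! h
    exact hcon (HitsCores.of_degree_le_two hA ih h)
  obtain ⟨v, hv, hmax⟩ := A.exists_max_image (fun u => (A.filter (G.Adj u)).card) ⟨w, hw⟩
  have hv3 : 2 < (A.filter (G.Adj v)).card := hw3.trans_le (hmax w hw)
  obtain ⟨T, hTA, hT3, hTadj, hTcl⟩ := F1 v (insert v (A.filter (G.Adj v)))
    (Finset.insert_subset hv (Finset.filter_subset _ _)) (by simp; tauto)
    (by rw [Finset.card_insert_of_notMem (by simp)]; omega)
  simp only [Finset.mem_sdiff, Finset.mem_insert, Finset.mem_filter] at hTcl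
  have hTA' : ∀ t ∈ T, t ∈ A ∧ t ≠ v ∧ ¬ G.Adj v t := by
    intro t ht
    have := hTA ht
    simp only [Finset.mem_sdiff, Finset.mem_insert, Finset.mem_filter] at this
    tauto
  obtain ⟨y, hy, x, hx, hyx, hxT⟩ : ∃ y ∈ T, ∃ x ∈ A, G.Adj y x ∧ x ∉ T := by
    by_contra! h
    exact hA T ⟨fun t ht => (hTA' t ht).1, hT3, hTadj, h⟩
  -- every edge leaving `T` ends in `N(v)`
  have hTout : ∀ t ∈ T, ∀ u ∈ A, G.Adj t u → u ∉ T → G.Adj v u := by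
    intro t ht u hu htu huT
    by_contra hvu
    refine huT (hTcl t ht u ⟨hu, ?_⟩ htu)
    rintro (rfl | h)
    · exact (hTA' t ht).2.2 htu.symm
    · exact hvu h.2
  have hvx : G.Adj v x := hTout y hy x hx hyx hxT
  have hvT : v ∉ T := fun h => (hTA' v h).2.1 rfl
  obtain ⟨T', hTA2, hT3', hTadj', hTcl'⟩ := F1 y (insert x T)
    (Finset.insert_subset hx fun t ht => (hTA' t ht).1)
    (by
      intro u hu
      rcases Finset.mem_insert.1 hu with rfl | hu
      · exact Or.inr hyx
      · by_cases h : u = y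
        · exact Or.inl h
        · exact Or.inr (hTadj y hy u hu (Ne.symm h)))
    (by rw [Finset.card_insert_of_notMem hxT]; omega)
  simp only [Finset.mem_sdiff, Finset.mem_insert] at hTcl'
  have hTA2' : ∀ t ∈ T', t ∈ A ∧ t ≠ x ∧ t ∉ T := by
    intro t ht
    have := hTA2 ht
    simp only [Finset.mem_sdiff, Finset.mem_insert] at this
    tauto
  have hvT' : v ∈ T' := by
    by_contra hvT'
    have hnv : ∀ t ∈ T', ¬ G.Adj v t := fun t ht h =>
      hvT' (hTcl' t ht v ⟨hv, by rintro (h | h); exacts [hvx.ne h, hvT h]⟩ h.symm)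
    refine F2 x hx T' ⟨fun t ht => ?_, hT3', hTadj', fun s hs u hu hsu => ?_⟩
    · simp [hTA2' t ht]
    · simp only [Finset.mem_sdiff, Finset.mem_singleton] at hu
      refine hTcl' s hs u ⟨hu.1, ?_⟩ hsu
      rintro (h | h)
      · exact hu.2 h
      · exact hnv s hs (hTout u h s (hTA2' s hs).1 hsu.symm (hTA2' s hs).2.2)
  -- `N[v] = T' ∪ {x}`
  have hNv : ∀ u ∈ A, G.Adj v u → u ≠ x → u ∈ T' := fun u hu hvu hux =>
    hTcl' v hvT' u ⟨hu, by rintro (h | h); exacts [hux h, (hTA' u h).2.2 hvu]⟩ hvu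
  have hdeg : ∀ u ∈ A, (A.filter (G.Adj u)).card ≤ 3 := by
    intro u hu
    refine (hmax u hu).trans ?_
    have hsub : A.filter (G.Adj v) ⊆ insert x (T'.erase v) := by
      intro z hz
      obtain ⟨hz, hvz⟩ := Finset.mem_filter.1 hz
      by_cases hzx : z = x
      · simp [hzx]
      · simp [hNv z hz hvz hzx, hvz.ne']
    refine (Finset.card_le_card hsub).trans ((Finset.card_insert_le _ _).trans ?_)
    rw [Finset.card_erase_of_mem hvT', hT3']
  have hdeg4 : ∀ u ∈ A, ∀ p ∈ A, ∀ q ∈ A, ∀ r ∈ A, ∀ s ∈ A, G.Adj u p → G.Adj u q → G.Adj u r →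
      G.Adj u s → p ≠ q → p ≠ r → p ≠ s → q ≠ r → q ≠ s → r ≠ s → False := by
    intro u hu p hp q hq r hr s hs h1 h2 h3 h4 h5 h6 h7 h8 h9 h10
    have hc : ({p, q, r, s} : Finset V).card = 4 := by
      rw [Finset.card_insert_of_notMem (by simp [h5, h6, h7]),
        Finset.card_eq_three.2 ⟨q, r, s, h8, h9, h10, rfl⟩]
    have hsub : ({p, q, r, s} : Finset V) ⊆ A.filter (G.Adj u) := by
      intro z hz
      simp only [Finset.mem_insert, Finset.mem_singleton] at hz
      rcases hz with rfl | rfl | rfl | rfl <;> simp [*]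
    have := Finset.card_le_card hsub
    have := hdeg u hu
    omega
  obtain ⟨a, ha, b, hb, hbx, hab, hbT⟩ :
      ∃ a ∈ T, ∃ b ∈ A, b ≠ x ∧ G.Adj a b ∧ b ∉ T := by
    by_contra! h
    refine F2 x hx T ⟨fun t ht => ?_, hT3, hTadj, fun s hs u hu hsu => ?_⟩
    · simp only [Finset.mem_sdiff, Finset.mem_singleton]
      exact ⟨(hTA' t ht).1, fun h => hxT (h ▸ ht)⟩
    · simp only [Finset.mem_sdiff, Finset.mem_singleton] at hu
      exact h s hs u hu.1 hu.2 hsu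
  have hvb : G.Adj v b := hTout a ha b hb hab hbT
  have hbT' : b ∈ T' := hNv b hb hvb hbx
  -- a vertex of a three-element set other than two given ones
  have third : ∀ U : Finset V, U.card = 3 → ∀ p q, ∃ r ∈ U, r ≠ p ∧ r ≠ q := by
    intro U hU p q
    obtain ⟨r, hr, hr'⟩ := Finset.exists_mem_notMem_of_card_lt_card
      (s := {p, q}) (t := U) (by have := Finset.card_le_two (a := p) (b := q); omega)
    simp only [Finset.mem_insert, Finset.mem_singleton] at hr'
    exact ⟨r, hr, by tauto⟩
  have hay : a ≠ y := by
    rintro rfl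
    obtain ⟨p, hp, hpa, -⟩ := third T hT3 a a
    obtain ⟨q, hq, hqa, hqp⟩ := third T hT3 a p
    exact hdeg4 a (hTA' a ha).1 p (hTA' p hp).1 q (hTA' q hq).1 x hx b hb
      (hTadj a ha p hp hpa.symm) (hTadj a ha q hq hqa.symm) hyx hab hqp.symm
      (fun h => hxT (h ▸ hp)) (fun h => hbT (h ▸ hp)) (fun h => hxT (h ▸ hq))
      (fun h => hbT (h ▸ hq)) hbx.symm
  obtain ⟨c, hc, hcv, hcb⟩ := third T' hT3' v b
  obtain ⟨c', hc', hcy, hca⟩ := third T hT3 y a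
  -- a triangle component contained in `A \ ({x} ∪ T ∪ T')` would be one of `A \ {x}`
  have hrest : ∀ U : Finset V, U.card = 3 → (∀ s ∈ U, ∀ t ∈ U, s ≠ t → G.Adj s t) →
      (∀ s ∈ U, s ∈ A ∧ s ≠ x ∧ s ∉ T ∧ s ∉ T') →
      (∀ s ∈ U, ∀ u ∈ A, u ≠ x → u ∉ T → u ∉ T' → G.Adj s u → u ∈ U) → False := by
    intro U hU3 hUadj hUA hUcl
    refine F2 x hx U ⟨fun t ht => ?_, hU3, hUadj, fun s hs u hu hsu => ?_⟩
    · simp [hUA t ht]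
    · simp only [Finset.mem_sdiff, Finset.mem_singleton] at hu
      obtain ⟨h1, h2, h3, h4⟩ := hUA s hs
      refine hUcl s hs u hu.1 hu.2 (fun h => ?_) (fun h => ?_) hsu
      · exact h4 (hNv s h1 (hTout u h s h1 hsu.symm h3) h2)
      · exact h4 (hTcl' u h s ⟨h1, by tauto⟩ hsu.symm)
  -- the triangle component left by `N[a] = T ∪ {b}` contains `x`, hence also `v` and `c`
  have hxc : G.Adj x c := by
    obtain ⟨U, hUA, hU3, hUadj, hUcl⟩ := F1 a (insert b T)
      (Finset.insert_subset hb fun t ht => (hTA' t ht).1)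
      (by
        intro u hu
        rcases Finset.mem_insert.1 hu with rfl | hu
        · exact Or.inr hab
        · by_cases h : u = a
          · exact Or.inl h
          · exact Or.inr (hTadj a ha u hu (Ne.symm h)))
      (by rw [Finset.card_insert_of_notMem hbT]; omega)
    have hUA' : ∀ t ∈ U, t ∈ A ∧ t ≠ b ∧ t ∉ T := by
      intro t ht
      have := hUA ht
      simp only [Finset.mem_sdiff, Finset.mem_insert] at this
      tauto
    simp only [Finset.mem_sdiff, Finset.mem_insert] at hUcl
    have hvU : v ∈ U → x ∈ U := fun h => hUcl v h x ⟨hx, by tauto⟩ hvx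
    have hxU : x ∈ U := by
      by_contra hxU
      refine hrest U hU3 hUadj (fun s hs => ⟨(hUA' s hs).1, fun h => hxU (h ▸ hs),
        (hUA' s hs).2.2, fun hs' => ?_⟩) (fun s hs u hu h1 h2 h3 hsu =>
        hUcl s hs u ⟨hu, fun h => h.elim (fun h => h3 (h ▸ hbT')) h2⟩ hsu)
      by_cases hsv : s = v
      · exact hxU (hvU (hsv ▸ hs))
      · exact hxU (hvU (hUcl s hs v ⟨hv, by have := hvb.ne; tauto⟩ (hTadj' s hs' v hvT' hsv)))
    have hvU' : v ∈ U := hUcl x hxU v ⟨hv, by have := hvb.ne; tauto⟩ hvx.symm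
    have hcU : c ∈ U := hUcl v hvU' c ⟨(hTA2' c hc).1, by have := (hTA2' c hc).2.2; tauto⟩
      (hTadj' v hvT' c hc hcv.symm)
    exact hUadj x hxU c hcU (hTA2' c hc).2.1.symm
  have haT' : a ∉ T' := fun h => (hTA2' a h).2.2 ha
  have hyT' : y ∉ T' := fun h => (hTA2' y h).2.2 hy
  -- the triangle component left by `N[b] = T' ∪ {a}` contains `x`, hence also `y` and `c'`
  have hxc' : G.Adj x c' := by
    obtain ⟨U, hUA, hU3, hUadj, hUcl⟩ := F1 b (insert a T')
      (Finset.insert_subset (hTA' a ha).1 fun t ht => (hTA2' t ht).1)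
      (by
        intro u hu
        rcases Finset.mem_insert.1 hu with rfl | hu
        · exact Or.inr hab.symm
        · by_cases h : u = b
          · exact Or.inl h
          · exact Or.inr (hTadj' b hbT' u hu (Ne.symm h)))
      (by rw [Finset.card_insert_of_notMem haT']; omega)
    have hUA' : ∀ t ∈ U, t ∈ A ∧ t ≠ a ∧ t ∉ T' := by
      intro t ht
      have := hUA ht
      simp only [Finset.mem_sdiff, Finset.mem_insert] at this
      tauto
    simp only [Finset.mem_sdiff, Finset.mem_insert] at hUcl
    have hxT' : x ∉ T' := fun h => (hTA2' x h).2.1 rfl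
    have hxa : x ≠ a := fun h => hxT (h ▸ ha)
    have hyU : y ∈ U → x ∈ U := fun h => hUcl y h x ⟨hx, by tauto⟩ hyx
    have hxU : x ∈ U := by
      by_contra hxU
      refine hrest U hU3 hUadj (fun s hs => ⟨(hUA' s hs).1, fun h => hxU (h ▸ hs),
        fun hs' => ?_, (hUA' s hs).2.2⟩) (fun s hs u hu h1 h2 h3 hsu =>
        hUcl s hs u ⟨hu, fun h => h.elim (fun h => h2 (h ▸ ha)) h3⟩ hsu)
      by_cases hsy : s = y
      · exact hxU (hyU (hsy ▸ hs))
      · exact hxU (hyU (hUcl s hs y ⟨(hTA' y hy).1, by have := hay.symm; tauto⟩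
          (hTadj s hs' y hy hsy)))
    have hyU' : y ∈ U := hUcl x hxU y ⟨(hTA' y hy).1, by have := hay.symm; tauto⟩ hyx.symm
    have hcU : c' ∈ U := hUcl y hyU' c'
      ⟨(hTA' c' hc').1, by have : c' ∉ T' := fun h => (hTA2' c' h).2.2 hc'
                           tauto⟩
      (hTadj y hy c' hc' hcy.symm)
    exact hUadj x hxU c' hcU (fun h => hxT (h ▸ hc'))
  have hcT : c ∉ T := (hTA2' c hc).2.2
  exact hdeg4 x hx v hv c (hTA2' c hc).1 y (hTA' y hy).1 c' (hTA' c' hc').1 hvx.symm hxc hyx.symm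
    hxc' hcv.symm (fun h => hvT (h ▸ hy)) (fun h => hvT (h ▸ hc')) (fun h => hcT (h ▸ hy))
    (fun h => hcT (h ▸ hc')) hcy.symm

/-! ### From cores to cycles -/

open Classical in
theorem not_isTriComp_univ {V : Type*} [Fintype V] {G : SimpleGraph V} (hconn : G.Connected)
    (hne : ¬ Nonempty (G ≃g cycleGraph 3)) (T : Finset V) : ¬ IsTriComp G Finset.univ T := by
  rintro ⟨-, hT3, hadj, hcl⟩
  obtain ⟨t, ht⟩ : T.Nonempty := by rw [← Finset.card_pos, hT3]; norm_num
  have hall : ∀ u, u ∈ T := by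
    intro u
    obtain ⟨p⟩ := hconn.preconnected t u
    induction p with
    | nil => exact ht
    | cons h p ih => exact ih (hcl _ ht _ (Finset.mem_univ _) h)
  have hcard : Fintype.card V = 3 := by
    rw [← hT3, ← Finset.card_univ, Finset.eq_univ_of_forall hall]
  refine hne ⟨⟨Fintype.equivFinOfCardEq hcard, fun {a b} => ?_⟩⟩
  rw [cycleGraph_three_eq_top, top_adj]
  constructor
  · intro h
    exact hadj a (hall a) b (hall b) fun h' => h (by rw [h'])
  · intro h h'
    exact h.ne ((Fintype.equivFinOfCardEq hcard).injective h')

open Classical in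
theorem isCore_image_of_cycleGraph {V W : Type*} {G : SimpleGraph V} {H : SimpleGraph W} {k : ℕ}
    (hk : 3 ≤ k) (f : cycleGraph k →g H) (hf : Function.Injective f) (e : H ↪g G) :
    IsCore G (Finset.univ.image fun i => e (f i)) := by
  obtain ⟨m, rfl⟩ : ∃ m, k = m + 3 := ⟨k - 3, by omega⟩
  refine ⟨⟨_, Finset.mem_image_of_mem _ (Finset.mem_univ 0)⟩, fun u hu => ?_⟩
  obtain ⟨i, -, rfl⟩ := Finset.mem_image.1 hu
  refine ⟨_, Finset.mem_image_of_mem _ (Finset.mem_univ (i + 1)), _,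
    Finset.mem_image_of_mem _ (Finset.mem_univ (i - 1)), ?_, ?_, ?_⟩
  · intro h
    have h1 : i + 1 = i - 1 := hf (e.injective h)
    -- `i + 1 = i - 1` would give `2 = 0` modulo `k ≥ 3`
    have h2 : (1 : Fin (m + 3)) + 1 = 0 := by
      have : i + (1 + 1) = i + 0 := by rw [← add_assoc, h1]; simp
      exact add_left_cancel this
    have h3 := congrArg Fin.val h2
    simp [Fin.val_add, Nat.mod_eq_of_lt] at h3
  · exact e.map_adj_iff.2 (f.map_adj (cycleGraph_adj.2 (Or.inr (by simp))))
  · exact e.map_adj_iff.2 (f.map_adj (cycleGraph_adj.2 (Or.inl (by simp))))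

theorem stmt8 {V : Type*} [Fintype V] (G : SimpleGraph V)
    (hconn : G.Connected) (hne : ¬ Nonempty (G ≃g cycleGraph 3)) (n : ℕ)
    (hn : n = Fintype.card V) :
    ((sInf {s | ∃ D : Set V, (∀ k, 3 ≤ k →
        ¬ HasCopy (cycleGraph k) (G.induce (closedNbhd G D)ᶜ)) ∧ D.ncard = s} : ℕ) : ℚ)
        ≤ n / 4 ∧
      ∃ D : Set V, (D.ncard : ℚ) ≤ n / 4 ∧
        ∀ k, 3 ≤ k → ¬ HasCopy (cycleGraph k) (G.induce (closedNbhd G D)ᶜ) := by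
  have key : ∃ D : Set V, (D.ncard : ℚ) ≤ n / 4 ∧
      ∀ k, 3 ≤ k → ¬ HasCopy (cycleGraph k) (G.induce (closedNbhd G D)ᶜ) := by
    obtain ⟨D, hD, hcores⟩ := exists_hitsCores G Finset.univ (not_isTriComp_univ hconn hne)
    refine ⟨D, ?_, ?_⟩
    · rw [Set.ncard_coe_finset, le_div_iff₀ (by norm_num), hn]
      rw [Finset.card_univ] at hD
      have : ((4 * D.card : ℕ) : ℚ) ≤ (Fintype.card V : ℕ) := by exact_mod_cast hD
      push_cast at this
      linarith
    · classical
      rintro k hk ⟨f, hf⟩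
      obtain ⟨u, hu, hu'⟩ := hcores _ (Finset.subset_univ _)
        (isCore_image_of_cycleGraph hk f hf (Embedding.induce _))
      obtain ⟨i, -, rfl⟩ := Finset.mem_image.1 hu
      refine (f i).2 ?_
      change (f i : V) ∈ D ∨ ∃ d ∈ D, G.Adj d (f i : V) at hu'
      simpa [closedNbhd] using hu'
  obtain ⟨D, hD, hD'⟩ := key
  refine ⟨le_trans ?_ hD, D, hD, hD'⟩
  exact Nat.cast_le.2 (Nat.sInf_le ⟨D, hD', rfl⟩)
end

section
/- If G is a connected graph of order n that is not isomorphic to the 3-cycle C_3, then ι(G, C_3) ≤ n/4. -/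
open SimpleGraph

/-!
Call a triangle contained in a vertex set `S` *closed in `S`* if no edge joins it to the rest of `S`.
The theorem follows from a version without connectivity (`exists_hitting`): if no triangle is closed
in `S`, then some `D` with `4|D| ≤ |S|` has a closed neighbourhood meeting every triangle of `S`.
A connected graph that is not itself a triangle has no triangle closed in `V`.

The proof is by induction on `|S|`. Assume that `S` contains a triangle, and let `v` have maximum
degree inside `S`; this degree is at least `3`. Put `S' = S \ N[v]`, and let `B` be the set of
triangles closed in `S'`. They are pairwise disjoint, each is linked to some `x ∈ N(v)`, and the
induction hypothesis applies to `R = S' \ ⋃ B`.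

* If `B` is empty, take `v` and a solution for `R`, which is small enough as `|N[v]| ≥ 4`. If some
  `x` is linked to two members of `B`, add a set `X ⊆ N(v)` with `|X| ≤ |B| - 1` such that each
  member of `B` is linked to some vertex of `X`; this is small enough as `|N[v]| ≥ 1 + |X|`.
  See `exists_hitting_of_collision`.
* Otherwise let `x` be linked to a vertex `y` of some `T ∈ B`, and let `S'' = S \ (T ∪ {x})`. As
  `N[y]` contains the four vertices of `T ∪ {x}`, the vertex `y` and a solution for `S''` do the
  job, provided no triangle is closed in `S''`.
* If a triangle `Q` is closed in `S''`, then `v ∈ Q`, so `N[v] ∩ S = Q ∪ {x}` and the maximum degree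
  is `3`. Now `x` and a solution for `S \ (Q ∪ T ∪ {x})` suffice: a missed triangle would lie in
  `Q ∪ T` and meet both, and its only vertex on one side would have degree at least `4`.
  See `exists_hitting_of_private` for this case and the previous one.
-/

/-! ### Closed triangles -/

/-- `T` is a triangle in `S` with no edge to the rest of `S`, i.e. a triangle component of `G[S]`. -/
def ClosedTri {V : Type*} (G : SimpleGraph V) (S T : Finset V) : Prop :=
  T ⊆ S ∧ G.IsNClique 3 T ∧ ∀ a ∈ T, ∀ b ∈ S, G.Adj a b → b ∈ T

/-- The closed neighbourhood of `D`, taken in `G` and not just in `G[S]`, meets every triangle in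
`S`. It is not required that `D ⊆ S`. -/
def Hits {V : Type*} (G : SimpleGraph V) (S D : Finset V) : Prop :=
  ∀ U ⊆ S, G.IsNClique 3 U → ∃ d ∈ D, ∃ u ∈ U, u = d ∨ G.Adj d u

section

variable {V : Type*} [DecidableEq V] {G : SimpleGraph V}

lemma clique_subset_of_meets {S T U : Finset V}
    (hT : ∀ a ∈ T, ∀ b ∈ S, G.Adj a b → b ∈ T) (hU : U ⊆ S) (hc : G.IsNClique 3 U)
    {a : V} (haU : a ∈ U) (haT : a ∈ T) : U ⊆ T := by
  intro b hb
  by_cases hab : a = b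
  · exact hab ▸ haT
  · exact hT a haT b (hU hb) (hc.isClique haU hb hab)

lemma ClosedTri.eq_of_meets {S T U : Finset V} (hT : ClosedTri G S T) (hU : U ⊆ S)
    (hc : G.IsNClique 3 U) {a : V} (haU : a ∈ U) (haT : a ∈ T) : U = T :=
  Finset.eq_of_subset_of_card_le (clique_subset_of_meets hT.2.2 hU hc haU haT)
    (by rw [hT.2.1.card_eq, hc.card_eq])

/-! ### A vertex `v`, its neighbours and the triangles closed in `S \ N[v]` -/

/-- The case in which a set of fewer than `|B|` neighbours of `v` is linked to all the triangles
closed in `S \ N[v]`, whose set is `B`; the hypothesis `B = ∅` covers the case of no such triangle. -/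
lemma exists_hitting_of_collision [Fintype V] [DecidableRel G.Adj] {S : Finset V}
    (ih : ∀ R : Finset V, R.card < S.card → (∀ T, ¬ ClosedTri G R T) →
      ∃ D : Finset V, 4 * D.card ≤ R.card ∧ Hits G R D)
    {v : V} (hv : v ∈ S) (hdeg : 3 ≤ (S.filter (G.Adj v)).card) (B : Finset (Finset V))
    (hB : ∀ T, T ∈ B ↔ ClosedTri G (S.filter fun u => u ≠ v ∧ ¬ G.Adj v u) T)
    (f : Finset V → V)
    (hf : ∀ T ∈ B, f T ∈ S ∧ G.Adj v (f T) ∧ ∃ y ∈ T, G.Adj (f T) y)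
    (hcard : B = ∅ ∨ (B.image f).card < B.card) :
    ∃ D : Finset V, 4 * D.card ≤ S.card ∧ Hits G S D := by
  set S' := S.filter fun u => u ≠ v ∧ ¬ G.Adj v u with hS'
  set A := S.filter (G.Adj v) with hA
  have hUsub : B.biUnion id ⊆ S' := by
    intro a ha
    obtain ⟨T, hT, haT⟩ := Finset.mem_biUnion.1 ha
    exact ((hB T).1 hT).1 haT
  have hUcard : (B.biUnion id).card = 3 * B.card := by
    rw [Finset.card_biUnion, Finset.sum_congr rfl (g := fun _ => 3)]
    · simp [mul_comm]
    · intro T hT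
      exact ((hB T).1 hT).2.1.card_eq
    · intro T hT U hU hne
      rw [Function.onFun, Finset.disjoint_left]
      intro a haT haU
      exact hne (((hB U).1 hU).eq_of_meets ((hB T).1 hT).1 ((hB T).1 hT).2.1 haT haU)
  have hSA : S'.card + A.card + 1 = S.card := by
    have h1 : S = insert v (S' ∪ A) := by
      ext u
      simp only [hS', hA, Finset.mem_insert, Finset.mem_union, Finset.mem_filter]
      grind
    have h2 : Disjoint S' A := by
      rw [Finset.disjoint_left]
      simp only [hS', hA, Finset.mem_filter]
      tauto
    have h3 : v ∉ S' ∪ A := by simp [hS', hA]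
    conv_rhs => rw [h1]
    rw [Finset.card_insert_of_notMem h3, Finset.card_union_of_disjoint h2]
  set R := S' \ B.biUnion id with hR
  have hRcard : R.card + 3 * B.card = S'.card := by
    rw [hR, ← hUcard]; exact Finset.card_sdiff_add_card_eq_card hUsub
  have hRbad : ∀ T, ¬ ClosedTri G R T := by
    rintro T ⟨h1, h2, h3⟩
    -- No edge joins `R` to `⋃ B`, so a triangle closed in `R` would be closed in `S'`.
    have hT : T ∈ B := by
      rw [hB]
      refine ⟨fun a ha => (Finset.mem_sdiff.1 (h1 ha)).1, h2, fun a ha b hb hab => ?_⟩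
      have haR := Finset.mem_sdiff.1 (h1 ha)
      refine h3 a ha b (Finset.mem_sdiff.2 ⟨hb, fun hb' => haR.2 ?_⟩) hab
      obtain ⟨U, hU, hbU⟩ := Finset.mem_biUnion.1 hb'
      exact Finset.mem_biUnion.2 ⟨U, hU, ((hB U).1 hU).2.2 b hbU a haR.1 hab.symm⟩
    obtain ⟨a, ha⟩ : T.Nonempty := by
      rw [← Finset.card_pos, h2.card_eq]; norm_num
    exact (Finset.mem_sdiff.1 (h1 ha)).2 (Finset.mem_biUnion.2 ⟨T, hT, ha⟩)
  obtain ⟨D, hDcard, hD⟩ := ih R (by omega) hRbad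
  refine ⟨insert v (B.image f ∪ D), ?_, ?_⟩
  · have h1 := Finset.card_insert_le v (B.image f ∪ D)
    have h2 := Finset.card_union_le (B.image f) D
    have h3 : (B.image f).card ≤ A.card := by
      apply Finset.card_le_card
      intro x hx
      obtain ⟨T, hT, rfl⟩ := Finset.mem_image.1 hx
      exact Finset.mem_filter.2 ⟨(hf T hT).1, (hf T hT).2.1⟩
    rcases hcard with h | h
    · have : (B.image f).card = 0 := by simp [h]
      omega
    · omega
  · intro U hU hc
    by_cases hUS : U ⊆ S'
    · by_cases hUR : U ⊆ R
      · obtain ⟨d, hd, u, hu, h⟩ := hD U hUR hc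
        exact ⟨d, by simp [hd], u, hu, h⟩
      · obtain ⟨a, haU, haR⟩ := Finset.not_subset.1 hUR
        have ha : a ∈ B.biUnion id := by
          by_contra h
          exact haR (Finset.mem_sdiff.2 ⟨hUS haU, h⟩)
        obtain ⟨T, hT, haT⟩ := Finset.mem_biUnion.1 ha
        have hUT := ((hB T).1 hT).eq_of_meets hUS hc haU haT
        obtain ⟨-, -, y, hy, hadj⟩ := hf T hT
        exact ⟨f T, by simp only [Finset.mem_insert, Finset.mem_union]
                       exact Or.inr (Or.inl (Finset.mem_image_of_mem f hT)),
          y, hUT ▸ hy, Or.inr hadj⟩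
    · obtain ⟨a, haU, haS⟩ := Finset.not_subset.1 hUS
      refine ⟨v, by simp, a, haU, ?_⟩
      have := hU haU
      simp only [hS', Finset.mem_filter] at haS
      tauto

/-! ### Degrees at triangles -/

/-- A vertex of a triangle `T ⊆ S` with two neighbours in `S \ T` has degree at least `4` in `S`. -/
lemma four_le_degree [Fintype V] [DecidableRel G.Adj] {S T : Finset V} (hTS : T ⊆ S)
    (hT : G.IsNClique 3 T) {c a b : V} (hc : c ∈ T) (ha : a ∈ S) (hb : b ∈ S) (haT : a ∉ T)
    (hbT : b ∉ T) (hab : a ≠ b) (hca : G.Adj c a) (hcb : G.Adj c b) :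
    4 ≤ (S.filter (G.Adj c)).card := by
  have hsub : insert a (insert b (T.erase c)) ⊆ S.filter (G.Adj c) := by
    intro u hu
    simp only [Finset.mem_insert, Finset.mem_erase] at hu
    rcases hu with rfl | rfl | ⟨hne, hu⟩
    · simp [ha, hca]
    · simp [hb, hcb]
    · exact Finset.mem_filter.2 ⟨hTS hu, hT.isClique hc hu hne.symm⟩
  have h := Finset.card_le_card hsub
  rw [Finset.card_insert_of_notMem (by simp [hab, haT]),
    Finset.card_insert_of_notMem (by simp [hbT]), Finset.card_erase_of_mem hc, hT.card_eq] at h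
  exact h

/-- If all degrees in `S` are at most `3`, a triangle cannot be split between two disjoint
triangles: its only vertex on one side would have too many neighbours. -/
lemma triangle_not_split [Fintype V] [DecidableRel G.Adj] {S Q T U : Finset V}
    (hmax : ∀ u ∈ S, (S.filter (G.Adj u)).card ≤ 3)
    (hQS : Q ⊆ S) (hTS : T ⊆ S) (hQ : G.IsNClique 3 Q) (hT : G.IsNClique 3 T)
    (hQT : Disjoint Q T) (hU : G.IsNClique 3 U) (hUsub : U ⊆ Q ∪ T) : U ⊆ Q ∨ U ⊆ T := by
  have key : ∀ {P P' : Finset V}, P ⊆ S → P' ⊆ S → G.IsNClique 3 P → Disjoint P P' →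
      ∀ c ∈ U, c ∈ P → ∀ a ∈ U, ∀ b ∈ U, a ∈ P' → b ∈ P' → a ≠ b → False := by
    intro P P' hPS hPS' hP hd c hc hcP a ha b hb haP hbP hab
    have haP' := Finset.disjoint_right.1 hd haP
    have hbP' := Finset.disjoint_right.1 hd hbP
    have h := four_le_degree hPS hP hcP (hPS' haP) (hPS' hbP) haP' hbP' hab
      (hU.isClique hc ha (by rintro rfl; exact haP' hcP))
      (hU.isClique hc hb (by rintro rfl; exact hbP' hcP))
    have := hmax c (hPS hcP)
    omega
  by_contra hcon
  push Not at hcon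
  obtain ⟨⟨t, htU, htQ⟩, ⟨q, hqU, hqT⟩⟩ := And.imp Finset.not_subset.1 Finset.not_subset.1 hcon
  have hqQ : q ∈ Q := (Finset.mem_union.1 (hUsub hqU)).resolve_right hqT
  have htT : t ∈ T := (Finset.mem_union.1 (hUsub htU)).resolve_left htQ
  obtain ⟨w, hwU, hw⟩ : ∃ w ∈ U, w ∉ ({q, t} : Finset V) := by
    apply Finset.exists_mem_notMem_of_card_lt_card
    rw [hU.card_eq]
    exact lt_of_le_of_lt Finset.card_le_two (by norm_num)
  simp only [Finset.mem_insert, Finset.mem_singleton, not_or] at hw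
  rcases Finset.mem_union.1 (hUsub hwU) with hwQ | hwT
  · exact key hTS hQS hT hQT.symm t htU htT w hwU q hqU hwQ hqQ hw.1
  · exact key hQS hTS hQ hQT q hqU hqQ w hwU t htU hwT htT hw.2

/-- A triangle in `S` that is not closed in `S` has a vertex of degree at least `3` in `S`; only the
existence of such a vertex in `S` is recorded. -/
lemma exists_three_le_degree [Fintype V] [DecidableRel G.Adj] {S T : Finset V} (hTS : T ⊆ S)
    (hT : G.IsNClique 3 T) (hbad : ¬ ClosedTri G S T) :
    ∃ a ∈ S, 3 ≤ (S.filter (G.Adj a)).card := by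
  have : ∃ a ∈ T, ∃ b ∈ S, G.Adj a b ∧ b ∉ T := by
    by_contra h
    push Not at h
    exact hbad ⟨hTS, hT, h⟩
  obtain ⟨a, ha, b, hb, hab, hbT⟩ := this
  refine ⟨a, hTS ha, ?_⟩
  have hsub : insert b (T.erase a) ⊆ S.filter (G.Adj a) := by
    intro u hu
    simp only [Finset.mem_insert, Finset.mem_erase] at hu
    rcases hu with rfl | ⟨hne, hu⟩
    · simp [hb, hab]
    · exact Finset.mem_filter.2 ⟨hTS hu, hT.isClique ha hu hne.symm⟩
  have h := Finset.card_le_card hsub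
  rw [Finset.card_insert_of_notMem (by simp [hbT]), Finset.card_erase_of_mem ha,
    hT.card_eq] at h
  exact h

/-! ### A triangle with a private neighbour -/

/-- The case in which a closed triangle `T` of `S \ N[v]` is linked through `y ∈ T` to `x ∈ N(v)`,
and `x` is linked to no other closed triangle of `S \ N[v]`. -/
lemma exists_hitting_of_private [Fintype V] [DecidableRel G.Adj] {S : Finset V}
    (ih : ∀ R : Finset V, R.card < S.card → (∀ T, ¬ ClosedTri G R T) →
      ∃ D : Finset V, 4 * D.card ≤ R.card ∧ Hits G R D)
    (hS : ∀ T, ¬ ClosedTri G S T)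
    {v : V} (hv : v ∈ S)
    (hmax : ∀ u ∈ S, (S.filter (G.Adj u)).card ≤ (S.filter (G.Adj v)).card)
    {T : Finset V} (hT : ClosedTri G (S.filter fun u => u ≠ v ∧ ¬ G.Adj v u) T)
    {x y : V} (hx : x ∈ S) (hvx : G.Adj v x) (hy : y ∈ T) (hxy : G.Adj x y)
    (hpriv : ∀ Q, ClosedTri G (S.filter fun u => u ≠ v ∧ ¬ G.Adj v u) Q →
      (∃ z ∈ Q, G.Adj x z) → Q = T) :
    ∃ D : Finset V, 4 * D.card ≤ S.card ∧ Hits G S D := by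
  obtain ⟨hTS', hTc, hTcl⟩ := hT
  have hTS : T ⊆ S := hTS'.trans (Finset.filter_subset _ _)
  have hTv : ∀ a ∈ T, a ≠ v ∧ ¬ G.Adj v a := fun a ha => (Finset.mem_filter.1 (hTS' ha)).2
  have hxT : x ∉ T := fun h => (hTv x h).2 hvx
  have hxTS : insert x T ⊆ S := Finset.insert_subset hx hTS
  have hxTcard : (insert x T).card = 4 := by
    rw [Finset.card_insert_of_notMem hxT, hTc.card_eq]
  have hcard := Finset.card_sdiff_add_card_eq_card hxTS
  rw [hxTcard] at hcard
  set S'' := S \ insert x T with hS''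
  have hmem : ∀ a, a ∈ S'' ↔ a ∈ S ∧ a ≠ x ∧ a ∉ T := by
    intro a; simp [hS'', not_or]
  have hvS'' : v ∈ S'' := (hmem v).2 ⟨hv, hvx.ne, fun h => (hTv v h).1 rfl⟩
  have hQv : ∀ Q, ClosedTri G S'' Q → v ∈ Q := by
    rintro Q ⟨hQS, hQc, hQcl⟩
    by_contra hvQ
    have hQfree : ∀ a ∈ Q, a ≠ v ∧ ¬ G.Adj v a := fun a ha =>
      ⟨fun h => hvQ (h ▸ ha), fun h => hvQ (hQcl a ha v hvS'' h.symm)⟩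
    have hQS' : Q ⊆ S.filter fun u => u ≠ v ∧ ¬ G.Adj v u := fun a ha =>
      Finset.mem_filter.2 ⟨((hmem a).1 (hQS ha)).1, hQfree a ha⟩
    have hQT : ∀ a ∈ Q, ∀ b ∈ T, ¬ G.Adj a b := fun a ha b hb hab =>
      ((hmem a).1 (hQS ha)).2.2 (hTcl b hb a (hQS' ha) hab.symm)
    -- As `Q` is not closed in `S`, it has an edge leaving it in `S`, which can only go to `x`.
    have hlink : ∃ z ∈ Q, G.Adj x z := by
      by_contra hno
      push Not at hno
      refine hS Q ⟨hQS'.trans (Finset.filter_subset _ _), hQc, fun a ha b hb hab => ?_⟩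
      refine hQcl a ha b ((hmem b).2 ⟨hb, ?_, fun h => hQT a ha b h hab⟩) hab
      rintro rfl
      exact hno a ha hab.symm
    have hQeq : Q = T := by
      refine hpriv Q ⟨hQS', hQc, fun a ha b hb hab => ?_⟩ hlink
      have hb' := Finset.mem_filter.1 hb
      refine hQcl a ha b ((hmem b).2 ⟨hb'.1, ?_, fun h => hQT a ha b h hab⟩) hab
      rintro rfl
      exact hb'.2.2 hvx
    obtain ⟨z, hz, -⟩ := hlink
    exact ((hmem z).1 (hQS hz)).2.2 (hQeq ▸ hz)
  by_cases hbad : ∀ Q, ¬ ClosedTri G S'' Q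
  · obtain ⟨D, hDc, hD⟩ := ih S'' (by omega) hbad
    refine ⟨insert y D, ?_, ?_⟩
    · have := Finset.card_insert_le y D
      omega
    · intro U hU hc
      by_cases hUS : U ⊆ S''
      · obtain ⟨d, hd, u, hu, h⟩ := hD U hUS hc
        exact ⟨d, by simp [hd], u, hu, h⟩
      · obtain ⟨a, haU, haS⟩ := Finset.not_subset.1 hUS
        refine ⟨y, by simp, a, haU, ?_⟩
        by_cases hax : a = x
        · exact Or.inr (hax ▸ hxy.symm)
        · have haT : a ∈ T := by
            by_contra h
            exact haS ((hmem a).2 ⟨hU haU, hax, h⟩)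
          by_cases hay : a = y
          · exact Or.inl hay
          · exact Or.inr (hTc.isClique hy haT (Ne.symm hay))
  · push Not at hbad
    obtain ⟨Q, hQ⟩ := hbad
    have hvQ := hQv Q hQ
    obtain ⟨hQS'', hQc, hQcl⟩ := hQ
    have hQS : Q ⊆ S := hQS''.trans Finset.sdiff_subset
    have hQT : Disjoint Q T := Finset.disjoint_left.2 fun a ha => ((hmem a).1 (hQS'' ha)).2.2
    have hNv : S.filter (G.Adj v) ⊆ insert x (Q.erase v) := by
      intro a ha
      obtain ⟨haS, hva⟩ := Finset.mem_filter.1 ha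
      by_cases hax : a = x
      · simp [hax]
      · exact Finset.mem_insert_of_mem (Finset.mem_erase.2 ⟨hva.ne', hQcl v hvQ a
          ((hmem a).2 ⟨haS, hax, fun h => (hTv a h).2 hva⟩) hva⟩)
    have hle3 : ∀ u ∈ S, (S.filter (G.Adj u)).card ≤ 3 := by
      intro u hu
      refine (hmax u hu).trans ((Finset.card_le_card hNv).trans ?_)
      have := Finset.card_insert_le x (Q.erase v)
      rw [Finset.card_erase_of_mem hvQ, hQc.card_eq] at this
      exact this
    have hvQadj : ∀ a ∈ Q, a ≠ v → G.Adj v a := fun a ha h => hQc.isClique hvQ ha h.symm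
    have hRcard := Finset.card_sdiff_add_card_eq_card hQS''
    rw [hQc.card_eq] at hRcard
    set R := S'' \ Q with hR
    have hRbad : ∀ P, ¬ ClosedTri G R P := by
      rintro P ⟨hPR, hPc, hPcl⟩
      have hvP : v ∈ P := by
        refine hQv P ⟨hPR.trans Finset.sdiff_subset, hPc, fun a ha b hb hab => ?_⟩
        have ha' := Finset.mem_sdiff.1 (hPR ha)
        exact hPcl a ha b (Finset.mem_sdiff.2 ⟨hb, fun h =>
          ha'.2 (hQcl b h a ha'.1 hab.symm)⟩) hab
      exact (Finset.mem_sdiff.1 (hPR hvP)).2 hvQ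
    obtain ⟨D, hDc, hD⟩ := ih R (by omega) hRbad
    refine ⟨insert x D, ?_, ?_⟩
    · have := Finset.card_insert_le x D
      omega
    · intro U hU hc
      by_contra hmiss
      have hxU : x ∉ U := fun h => hmiss ⟨x, by simp, x, h, Or.inl rfl⟩
      have hvU : v ∉ U := fun h => hmiss ⟨x, by simp, v, h, Or.inr hvx.symm⟩
      have hyU : y ∉ U := fun h => hmiss ⟨x, by simp, y, h, Or.inr hxy⟩
      have hsub : U ⊆ Q ∪ T := by
        intro a haU
        by_contra haQT
        rw [Finset.mem_union, not_or] at haQT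
        have hRsub : U ⊆ R := by
          have hcl : ∀ c ∈ R, ∀ b ∈ S.erase x, G.Adj c b → b ∈ R := by
            intro c hcR b hb hcb
            obtain ⟨hc1, hc2⟩ := Finset.mem_sdiff.1 hcR
            obtain ⟨hbx, hbS⟩ := Finset.mem_erase.1 hb
            have hcv : c ≠ v := fun h => hc2 (h ▸ hvQ)
            have hc1' := (hmem c).1 hc1
            have hcnv : ¬ G.Adj v c := fun h => hc2 (hQcl v hvQ c hc1 h)
            have hbT : b ∉ T := fun h => hc1'.2.2 (hTcl b h c
              (Finset.mem_filter.2 ⟨hc1'.1, hcv, hcnv⟩) hcb.symm)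
            exact Finset.mem_sdiff.2 ⟨(hmem b).2 ⟨hbS, hbx, hbT⟩,
              fun h => hc2 (hQcl b h c hc1 hcb.symm)⟩
          refine clique_subset_of_meets hcl (fun b hb => Finset.mem_erase.2
            ⟨fun h => hxU (h ▸ hb), hU hb⟩) hc haU ?_
          exact Finset.mem_sdiff.2 ⟨(hmem a).2 ⟨hU haU, fun h => hxU (h ▸ haU), haQT.2⟩, haQT.1⟩
        obtain ⟨d, hd, u, hu, h⟩ := hD U hRsub hc
        exact hmiss ⟨d, by simp [hd], u, hu, h⟩
      rcases triangle_not_split hle3 hQS hTS hQc hTc hQT hc hsub with h | h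
      · exact hvU ((Finset.eq_of_subset_of_card_le h (by rw [hQc.card_eq, hc.card_eq])) ▸ hvQ)
      · exact hyU ((Finset.eq_of_subset_of_card_le h (by rw [hTc.card_eq, hc.card_eq])) ▸ hy)

/-! ### The bound without connectivity -/

/-- The disconnected form of the theorem: if no component of `G[S]` is a triangle, some set of at
most `|S| / 4` vertices has a closed neighbourhood meeting all triangles in `S`. -/
lemma exists_hitting [Fintype V] [DecidableRel G.Adj] (S : Finset V)
    (hS : ∀ T, ¬ ClosedTri G S T) :
    ∃ D : Finset V, 4 * D.card ≤ S.card ∧ Hits G S D := by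
  classical
  induction hk : S.card using Nat.strong_induction_on generalizing S with
  | _ k ih0 =>
  subst hk
  have ih : ∀ R : Finset V, R.card < S.card → (∀ T, ¬ ClosedTri G R T) →
      ∃ D : Finset V, 4 * D.card ≤ R.card ∧ Hits G R D := fun R h1 h2 => ih0 _ h1 R h2 rfl
  by_cases htri : ∃ T ⊆ S, G.IsNClique 3 T
  swap
  · exact ⟨∅, by simp, fun U hU hc => absurd ⟨U, hU, hc⟩ htri⟩
  obtain ⟨T₀, hT₀, hT₀c⟩ := htri
  obtain ⟨a, haS, ha⟩ := exists_three_le_degree hT₀ hT₀c (hS T₀)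
  obtain ⟨v, hv, hmax⟩ := Finset.exists_max_image S (fun u => (S.filter (G.Adj u)).card) ⟨a, haS⟩
  have hdeg : 3 ≤ (S.filter (G.Adj v)).card := ha.trans (hmax a haS)
  set B : Finset (Finset V) :=
    Finset.univ.filter (ClosedTri G (S.filter fun u => u ≠ v ∧ ¬ G.Adj v u)) with hBdef
  have hB : ∀ T, T ∈ B ↔ ClosedTri G (S.filter fun u => u ≠ v ∧ ¬ G.Adj v u) T := by
    intro T; simp [hBdef]
  have hlink : ∀ T, ∃ x, T ∈ B → x ∈ S ∧ G.Adj v x ∧ ∃ y ∈ T, G.Adj x y := by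
    intro T
    by_cases hTB : T ∈ B
    swap
    · exact ⟨v, fun h => absurd h hTB⟩
    obtain ⟨h1, h2, h3⟩ := (hB T).1 hTB
    by_contra hno
    push Not at hno
    refine hS T ⟨h1.trans (Finset.filter_subset _ _), h2, fun b hb c hc hbc => ?_⟩
    have hb' := Finset.mem_filter.1 (h1 hb)
    refine h3 b hb c (Finset.mem_filter.2 ⟨hc, ?_, fun hvc => ?_⟩) hbc
    · rintro rfl
      exact hb'.2.2 hbc.symm
    · exact (hno c).2 hc hvc b hb hbc.symm
  choose f hf using hlink
  by_cases hB0 : B = ∅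
  · exact exists_hitting_of_collision ih hv hdeg B hB f hf (Or.inl hB0)
  obtain ⟨T, hT⟩ := Finset.nonempty_iff_ne_empty.2 hB0
  obtain ⟨hx, hvx, y, hy, hxy⟩ := hf T hT
  by_cases hpriv : ∀ Q ∈ B, (∃ z ∈ Q, G.Adj (f T) z) → Q = T
  · exact exists_hitting_of_private ih hS hv hmax ((hB T).1 hT) hx hvx hy hxy
      fun Q hQ => hpriv Q ((hB Q).2 hQ)
  · push Not at hpriv
    obtain ⟨Q, hQ, hz, hne⟩ := hpriv
    -- Redirecting `Q` to `f T` makes the choice of links non-injective.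
    refine exists_hitting_of_collision ih hv hdeg B hB (Function.update f Q (f T)) ?_
      (Or.inr ?_)
    · intro P hP
      by_cases hPQ : P = Q
      · subst hPQ
        simpa using ⟨hx, hvx, hz⟩
      · simpa [Function.update_of_ne hPQ] using hf P hP
    · refine lt_of_le_of_ne Finset.card_image_le fun h => hne ?_
      refine Finset.card_image_iff.1 h hQ hT ?_
      simp [Function.update_of_ne (Ne.symm hne)]

end

/-! ### Triangles as copies of the cycle graph -/

lemma cycleGraph_three_adj (a b : Fin 3) : (cycleGraph 3).Adj a b ↔ a ≠ b := by
  revert a b; decide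

/-- In a connected graph a triangle closed in the whole vertex set is the whole graph. -/
lemma iso_of_closedTri {V : Type*} [Fintype V] {G : SimpleGraph V} (hconn : G.Connected)
    {T : Finset V} (hT : ClosedTri G Finset.univ T) : Nonempty (G ≃g cycleGraph 3) := by
  classical
  obtain ⟨-, hc, hcl⟩ := hT
  have hwalk : ∀ {a b : V}, G.Walk a b → a ∈ T → b ∈ T := by
    intro a b w
    induction w with
    | nil => exact id
    | cons h _ ihw => exact fun ha => ihw (hcl _ ha _ (Finset.mem_univ _) h)
  obtain ⟨a, ha⟩ : T.Nonempty := by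
    rw [← Finset.card_pos, hc.card_eq]; norm_num
  have huniv : ∀ b, b ∈ T := fun b => hwalk (hconn.preconnected a b).some ha
  have hcard : Fintype.card V = 3 := by
    rw [← hc.card_eq, ← Finset.card_univ, Finset.eq_univ_iff_forall.2 huniv]
  let e := Fintype.equivFinOfCardEq hcard
  refine ⟨⟨e, fun {b c} => ?_⟩⟩
  rw [cycleGraph_three_adj, e.injective.ne_iff]
  exact ⟨fun h => hc.isClique (huniv b) (huniv c) h, fun h => h.ne⟩

lemma isIsolating_of_hits {V : Type*} [Fintype V] {G : SimpleGraph V} {D : Finset V}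
    (hD : Hits G Finset.univ D) : IsIsolating G (cycleGraph 3) (D : Set V) := by
  classical
  rintro ⟨f, hf⟩
  let g : Fin 3 ↪ V := ⟨fun i => (f i : V), fun i j h => hf (Subtype.ext h)⟩
  obtain ⟨d, hd, u, hu, h⟩ := hD (Finset.univ.map g) (Finset.subset_univ _) (by
    refine ⟨?_, by simp⟩
    intro a ha b hb hab
    simp only [Finset.coe_map, Finset.coe_univ, Set.image_univ, Set.mem_range] at ha hb
    obtain ⟨i, rfl⟩ := ha
    obtain ⟨j, rfl⟩ := hb
    have hij : i ≠ j := fun h => hab (by rw [h])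
    exact f.map_rel ((cycleGraph_three_adj i j).2 hij))
  obtain ⟨i, -, rfl⟩ := Finset.mem_map.1 hu
  refine (f i).2 ?_
  rcases h with h | h
  · left
    change (g i) ∈ _
    rw [h]; exact hd
  · exact Or.inr ⟨d, hd, h⟩

theorem stmt9 {V : Type*} [Fintype V] (G : SimpleGraph V)
    (hconn : G.Connected) (hne : ¬ Nonempty (G ≃g cycleGraph 3)) (n : ℕ)
    (hn : n = Fintype.card V) :
    (isolNum G (cycleGraph 3) : ℚ) ≤ n / 4 := by
  classical
  obtain ⟨D, hcard, hD⟩ := exists_hitting (G := G) Finset.univ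
    fun T hT => hne (iso_of_closedTri hconn hT)
  have hle : isolNum G (cycleGraph 3) ≤ D.card :=
    Nat.sInf_le ⟨D, isIsolating_of_hits hD, Set.ncard_coe_finset D⟩
  rw [Finset.card_univ, ← hn] at hcard
  have h : 4 * isolNum G (cycleGraph 3) ≤ n := by omega
  have h' : (4 * isolNum G (cycleGraph 3) : ℚ) ≤ n := by exact_mod_cast h
  linarith
end

section
/- Let G be a connected graph with m edges that is not isomorphic to C_3. Then ι(G, C_3) ≤ (m + 1)/5, with equality if and only if G ∈ 𝒢_3, i.e., G is isomorphic to cons(T, C_3) for some tree T. -/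
/-!
Write `e(S)` for the number of edges spanned by a vertex set `S`. For a connected `S` that is not
a triangle, either some `D` dominating a vertex of every triangle in `S` satisfies
`5 * |D| ≤ e(S)`, or `S` spans a graph made of `n` vertices with a pendant triangle attached to
each, with `5 * n = e(S) + 1`; in the latter case those `n` vertices form a dominating choice of
`D`. This dichotomy (`TriIso.core`) is proved by strong induction on `e(S)`.

* If `x y` is an edge in no triangle and its deletion keeps `S` connected, delete it: a set that
  works without the edge works with it, and one edge has been gained.
* If there is a bridge with no side a triangle, combine the two sides (`TriIso.Bridge.join`).
  Equality can survive only if both sides are of the extremal form, and then the bridge must join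
  two tree vertices: otherwise one end of the bridge can replace two tree vertices
  (`TriIso.ConsOn.join_strict`).
* If a triangle `A` is attached by a bridge to `y`, put `y` in `D` and treat the components of
  `S \ (A ∪ {y})` separately (`TriIso.Bridge.pendant`). Triangle components are dominated by `y`
  and cost nothing; the others have at least two edges to `y`, by the previous case. Hence the
  bound is strict as soon as there is such a component, and otherwise `S` is a triangle with a
  pendant edge.
* If every edge lies in a triangle (`TriIso.all_edges_tri`), some vertex `v` has degree at least
  three and its closed neighbourhood spans at least five edges, which pay for `v`. A triangle
  component of the rest has at least two edges leaving it, because those edges lie in triangles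
  too, so it has the five edges needed to pay for one more vertex.

The separate treatment of components is `TriIso.decomp_total`: the sets of edges meeting different
components are disjoint, so the bounds add up.

For the equality case, `cons(T, C₃)` has `|E(T)| + 4 * |V(T)|` edges, `T` is connected if
`cons(T, C₃)` is, and an isolating set needs a vertex in each of the `|V(T)|` disjoint sets formed
by a tree vertex and its triangle. An edge count then shows that the extremal graphs are exactly
those for which `T` is a tree.
-/

open SimpleGraph

namespace TriIso
open scoped Classical
set_option linter.unusedSectionVars false

section
variable {V : Type*} [Fintype V]

/-- `v` lies in the closed neighbourhood of `D`. -/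
def Dom (G : SimpleGraph V) (D : Finset V) (v : V) : Prop :=
  ∃ u ∈ D, u = v ∨ G.Adj u v

/-- Every triangle of `G` with vertices in `S` has a vertex in the closed neighbourhood of `D`.
The set `D` need not be contained in `S`. -/
def Hits (G : SimpleGraph V) (S D : Finset V) : Prop :=
  ∀ a ∈ S, ∀ b ∈ S, ∀ c ∈ S, G.Adj a b → G.Adj b c → G.Adj a c →
    Dom G D a ∨ Dom G D b ∨ Dom G D c

/-- `S` induces a connected subgraph of `G`, expressed by cuts: every proper nonempty part of `S`
sends an edge to the rest of `S`. -/
def Conn (G : SimpleGraph V) (S : Finset V) : Prop :=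
  S.Nonempty ∧ ∀ A ⊆ S, A.Nonempty → A ≠ S → ∃ x ∈ A, ∃ y ∈ S \ A, G.Adj x y

/-- `S` is the vertex set of a triangle of `G`. -/
def IsTri (G : SimpleGraph V) (S : Finset V) : Prop :=
  ∃ a b c, G.Adj a b ∧ G.Adj b c ∧ G.Adj a c ∧ S = {a, b, c}

/-- The edges of `G` with both ends in `S`. -/
noncomputable def edgesIn (G : SimpleGraph V) (S : Finset V) : Finset (Sym2 V) :=
  Finset.univ.filter fun e => e ∈ G.edgeSet ∧ ∀ v ∈ e, v ∈ S

/-- The edges of `G` with both ends in `S` and at least one end in `K`. -/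
noncomputable def touch (G : SimpleGraph V) (S K : Finset V) : Finset (Sym2 V) :=
  (edgesIn G S).filter fun e => ∃ v ∈ K, v ∈ e

/-- Adjacency in the triangle `1, 2, 3` with the pendant edge `0 1`: the pattern formed by a tree
vertex `0` and its own copy of `C₃`. -/
def paw (k l : Fin 4) : Prop := k ≠ l ∧ (k = 0 → l = 1) ∧ (l = 0 → k = 1)

/-- The subgraph induced on `S` is `cons(T, C₃)` for some graph `T` on an index type `ι`: the
vertex `f i 0` is the tree vertex `i`, and `f i 1, f i 2, f i 3` is its triangle, attached at
`f i 1`. Different indices are joined only through tree vertices. That `T` is a tree is encoded by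
the edge count in the last conjunct. -/
def ConsOn (G : SimpleGraph V) (S : Finset V) : Prop :=
  ∃ (ι : Type) (_ : Fintype ι) (f : ι → Fin 4 → V),
    (∀ i j k l, f i k = f j l → i = j ∧ k = l) ∧
    (∀ v, v ∈ S ↔ ∃ i k, f i k = v) ∧
    (∀ i k l, G.Adj (f i k) (f i l) ↔ paw k l) ∧
    (∀ i j k l, i ≠ j → G.Adj (f i k) (f j l) → k = 0 ∧ l = 0) ∧
    5 * Fintype.card ι = (edgesIn G S).card + 1

/-- The dichotomy proved for every connected non-triangle `S`: a strict form of the bound, or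
the extremal structure. -/
def Res (G : SimpleGraph V) (S : Finset V) : Prop :=
  (∃ D, Hits G S D ∧ 5 * D.card ≤ (edgesIn G S).card) ∨ ConsOn G S

/-- `x y` is the only edge between `A` and `S \ A`, with `x` in `A`. -/
structure Bridge (G : SimpleGraph V) (S A : Finset V) (x y : V) : Prop where
  sub : A ⊆ S
  hx : x ∈ A
  hy : y ∈ S
  hyA : y ∉ A
  adj : G.Adj x y
  uniq : ∀ a ∈ A, ∀ b ∈ S, b ∉ A → G.Adj a b → a = x ∧ b = y

variable {G : SimpleGraph V} {S A K Q W : Finset V} {x y v : V}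

/-! ### Edge sets, bridges and triangles -/

lemma mem_edgesIn {a b : V} : s(a, b) ∈ edgesIn G S ↔ G.Adj a b ∧ a ∈ S ∧ b ∈ S := by
  simp [edgesIn]

lemma mem_touch {a b : V} :
    s(a, b) ∈ touch G S K ↔ G.Adj a b ∧ a ∈ S ∧ b ∈ S ∧ (a ∈ K ∨ b ∈ K) := by
  simp only [touch, Finset.mem_filter, mem_edgesIn, Sym2.mem_iff]
  constructor
  · rintro ⟨⟨h, ha, hb⟩, v, hv, rfl | rfl⟩ <;> tauto
  · rintro ⟨h, ha, hb, hK | hK⟩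
    · exact ⟨⟨h, ha, hb⟩, a, hK, Or.inl rfl⟩
    · exact ⟨⟨h, ha, hb⟩, b, hK, Or.inr rfl⟩

lemma Dom.mono {D D' : Finset V} (h : D ⊆ D') (hv : Dom G D v) : Dom G D' v := by
  obtain ⟨u, hu, h'⟩ := hv
  exact ⟨u, h hu, h'⟩

lemma Hits.mono {D D' : Finset V} (h : D ⊆ D') (hv : Hits G S D) : Hits G S D' := by
  intro a ha b hb c hc h1 h2 h3
  rcases hv a ha b hb c hc h1 h2 h3 with h' | h' | h'
  · exact Or.inl (h'.mono h)
  · exact Or.inr (Or.inl (h'.mono h))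
  · exact Or.inr (Or.inr (h'.mono h))

lemma Bridge.symm (h : Bridge G S A x y) : Bridge G S (S \ A) y x where
  sub := Finset.sdiff_subset
  hx := by simp [h.hy, h.hyA]
  hy := h.sub h.hx
  hyA := by simp [h.hx]
  adj := h.adj.symm
  uniq := by
    intro a ha b hb hbA hab
    simp only [Finset.mem_sdiff] at ha hbA
    have := h.uniq b (by tauto) a ha.1 ha.2 hab.symm
    tauto

lemma Bridge.conn_left (h : Bridge G S A x y) (hS : Conn G S) : Conn G A := by
  -- a part of `A` avoiding `x` sends no edge out of `A`
  have key : ∀ B ⊆ A, B.Nonempty → x ∉ B → ∃ a ∈ B, ∃ b ∈ A \ B, G.Adj a b := by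
    intro B hB hne hxB
    obtain ⟨a, ha, b, hb, hab⟩ := hS.2 B (hB.trans h.sub) hne
      (fun e => hxB (e ▸ h.sub h.hx))
    simp only [Finset.mem_sdiff] at hb
    by_cases hbA : b ∈ A
    · exact ⟨a, ha, b, by simp [hbA, hb.2], hab⟩
    · exact absurd ((h.uniq a (hB ha) b hb.1 hbA hab).1 ▸ ha) hxB
  refine ⟨⟨x, h.hx⟩, fun B hB hne hBA => ?_⟩
  by_cases hxB : x ∈ B
  · have hne' : (A \ B).Nonempty := by
      rw [Finset.sdiff_nonempty]
      exact fun h' => hBA (hB.antisymm h')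
    obtain ⟨a, ha, b, hb, hab⟩ := key (A \ B) Finset.sdiff_subset hne' (by simp [hxB])
    simp only [Finset.mem_sdiff] at ha hb
    exact ⟨b, by tauto, a, by simp [ha], hab.symm⟩
  · exact key B hB hne hxB

lemma Bridge.card (h : Bridge G S A x y) :
    (edgesIn G S).card = (edgesIn G A).card + (edgesIn G (S \ A)).card + 1 := by
  have hd : Disjoint (edgesIn G A) (edgesIn G (S \ A)) := by
    rw [Finset.disjoint_left]
    intro e
    induction e with | h a b => ?_
    simp only [mem_edgesIn, Finset.mem_sdiff]
    tauto
  have hn : s(x, y) ∉ edgesIn G A ∪ edgesIn G (S \ A) := by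
    have := h.hyA
    have := h.hx
    simp only [Finset.mem_union, mem_edgesIn, Finset.mem_sdiff]
    tauto
  rw [← Finset.card_union_of_disjoint hd, ← Finset.card_insert_of_notMem hn]
  congr 1
  ext e
  induction e with | h a b => ?_
  simp only [mem_edgesIn, Finset.mem_insert, Finset.mem_union, Finset.mem_sdiff, Sym2.eq_iff]
  have h1 := h.uniq a
  have h2 := h.uniq b
  have h3 := @h.sub
  constructor
  · rintro ⟨hab, ha, hb⟩
    have h4 := fun hA => h1 hA b hb
    have h5 := fun hA => h2 hA a ha
    have h6 := hab.symm
    tauto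
  · rintro ((⟨rfl, rfl⟩ | ⟨rfl, rfl⟩) | h | h)
    · exact ⟨h.adj, h.sub h.hx, h.hy⟩
    · exact ⟨h.adj.symm, h.hy, h.sub h.hx⟩
    · exact ⟨h.1, h3 h.2.1, h3 h.2.2⟩
    · tauto

/-- A triangle cannot use exactly one edge across a cut, so the two sides of a bridge can be
treated independently. -/
lemma Bridge.hits (h : Bridge G S A x y) {D D' : Finset V} (hD : Hits G A D)
    (hD' : Hits G (S \ A) D') : Hits G S (D ∪ D') := by
  have hD1 := hD.mono (Finset.subset_union_left (s₂ := D'))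
  have hD2 := hD'.mono (Finset.subset_union_right (s₁ := D))
  intro a ha b hb c hc hab hbc hac
  have e1 := hab.ne
  have e2 := hbc.ne
  have e3 := hac.ne
  -- two of the three edges of a triangle meeting both sides would cross
  have u := fun p hp q hq => h.uniq p hp q hq
  by_cases hA : a ∈ A <;> by_cases hB : b ∈ A <;> by_cases hC : c ∈ A
  · exact hD1 a hA b hB c hC hab hbc hac
  · have h1 := u a hA c hc hC hac
    have h2 := u b hB c hc hC hbc
    exact absurd (h1.1.trans h2.1.symm) e1
  · have h1 := u a hA b hb hB hab
    have h2 := u c hC b hb hB hbc.symm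
    exact absurd (h1.1.trans h2.1.symm) e3
  · have h1 := u a hA b hb hB hab
    have h2 := u a hA c hc hC hac
    exact absurd (h1.2.trans h2.2.symm) e2
  · have h1 := u b hB a ha hA hab.symm
    have h2 := u c hC a ha hA hac.symm
    exact absurd (h1.1.trans h2.1.symm) e2
  · have h1 := u b hB a ha hA hab.symm
    have h2 := u b hB c hc hC hbc
    exact absurd (h1.2.trans h2.2.symm) e3
  · have h1 := u c hC a ha hA hac.symm
    have h2 := u c hC b hb hB hbc.symm
    exact absurd (h1.2.trans h2.2.symm) e1
  · exact hD2 a (by simp [ha, hA]) b (by simp [hb, hB]) c (by simp [hc, hC]) hab hbc hac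

lemma IsTri.card (h : IsTri G S) : (edgesIn G S).card = 3 := by
  obtain ⟨a, b, c, hab, hbc, hac, rfl⟩ := h
  have e1 := hab.ne
  have e2 := hbc.ne
  have e3 := hac.ne
  have : edgesIn G {a, b, c} = {s(a, b), s(b, c), s(a, c)} := by
    ext e
    induction e with | h p q => ?_
    simp only [mem_edgesIn, Finset.mem_insert, Finset.mem_singleton, Sym2.eq_iff]
    constructor
    · rintro ⟨hpq, rfl | rfl | rfl, rfl | rfl | rfl⟩ <;> simp_all
    · have := hab.symm
      have := hbc.symm
      have := hac.symm
      rintro ((⟨rfl, rfl⟩ | ⟨rfl, rfl⟩) | (⟨rfl, rfl⟩ | ⟨rfl, rfl⟩) | ⟨rfl, rfl⟩ | ⟨rfl, rfl⟩) <;>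
        simp_all
  rw [this]
  rw [Finset.card_eq_three]
  refine ⟨_, _, _, ?_, ?_, ?_, rfl⟩ <;> simp only [ne_eq, Sym2.eq_iff] <;> tauto

lemma IsTri.card_vertices (h : IsTri G S) : S.card = 3 := by
  obtain ⟨a, b, c, hab, hbc, hac, rfl⟩ := h
  exact Finset.card_eq_three.2 ⟨a, b, c, hab.ne, hac.ne, hbc.ne, rfl⟩

/-- Inside a triangle it is enough to dominate one vertex: no other triangle fits into `S`. -/
lemma IsTri.hits (h : IsTri G S) {D : Finset V} (hv : v ∈ S) (hD : Dom G D v) :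
    Hits G S D := by
  intro a ha b hb c hc hab hbc hac
  have hsub : ({a, b, c} : Finset V) ⊆ S := by
    intro z hz
    simp only [Finset.mem_insert, Finset.mem_singleton] at hz
    rcases hz with rfl | rfl | rfl <;> assumption
  have hcard : ({a, b, c} : Finset V).card = 3 :=
    Finset.card_eq_three.2 ⟨a, b, c, hab.ne, hac.ne, hbc.ne, rfl⟩
  have heq := Finset.eq_of_subset_of_card_le hsub (by rw [hcard, h.card_vertices])
  rw [← heq] at hv
  simp only [Finset.mem_insert, Finset.mem_singleton] at hv
  rcases hv with rfl | rfl | rfl <;> tauto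

/-- In `cons(T, C₃)` all tree vertices but one, together with any set dominating a vertex of the
remaining triangle, meet every triangle. Triangles of `T` are covered as well, since `T` is not
assumed acyclic here. -/
lemma cons_hits {ι : Type} {f : ι → Fin 4 → V}
    (hS : ∀ v, v ∈ S ↔ ∃ i k, f i k = v)
    (hpaw : ∀ i k l, G.Adj (f i k) (f i l) ↔ paw k l)
    (hout : ∀ i j k l, i ≠ j → G.Adj (f i k) (f j l) → k = 0 ∧ l = 0)
    {D : Finset V} {i₀ : ι} (hD : ∀ i, i ≠ i₀ → f i 0 ∈ D)
    {k₀ : Fin 4} (hk₀ : k₀ ≠ 0) (hi₀ : Dom G D (f i₀ k₀)) : Hits G S D := by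
  have hroot : ∀ i, i ≠ i₀ → Dom G D (f i 0) := fun i hi => ⟨_, hD i hi, Or.inl rfl⟩
  -- every pendant triangle contains a dominated vertex
  have htri : ∀ i, ∃ k, k ≠ 0 ∧ Dom G D (f i k) := by
    intro i
    by_cases hi : i = i₀
    · exact ⟨k₀, hk₀, hi ▸ hi₀⟩
    · refine ⟨1, by decide, _, hD i hi, Or.inr ((hpaw _ _ _).2 ?_)⟩
      simp [paw]
  intro a ha b hb c hc hab hbc hac
  obtain ⟨i, k, rfl⟩ := (hS a).1 ha
  obtain ⟨j, l, rfl⟩ := (hS b).1 hb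
  obtain ⟨h, m, rfl⟩ := (hS c).1 hc
  have o1 := hout i j k l
  have o2 := hout j h l m
  have o3 := hout i h k m
  by_cases hij : i = j
  · subst hij
    by_cases hih : i = h
    · subst hih
      rw [hpaw] at hab hbc hac
      obtain ⟨n, hn, hd⟩ := htri i
      have : n = k ∨ n = l ∨ n = m := by
        clear * - hab hbc hac hn
        revert k l m n
        unfold paw
        decide
      rcases this with rfl | rfl | rfl <;> tauto
    · obtain ⟨rfl, rfl⟩ := o2 hih hbc
      obtain ⟨rfl, -⟩ := o3 hih hac
      exact absurd hab (G.loopless.irrefl _)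
  · obtain ⟨rfl, rfl⟩ := o1 hij hab
    by_cases hi : i = i₀
    · exact Or.inr (Or.inl (hroot j (fun e => hij (hi.trans e.symm))))
    · exact Or.inl (hroot i hi)

lemma ConsOn.bound (h : ConsOn G S) (hne : S.Nonempty) :
    ∃ D, Hits G S D ∧ 5 * D.card ≤ (edgesIn G S).card + 1 := by
  obtain ⟨ι, _, f, -, hS, hpaw, hout, hcard⟩ := h
  obtain ⟨v, hv⟩ := hne
  obtain ⟨i₀, -, -⟩ := (hS v).1 hv
  refine ⟨Finset.univ.image fun i => f i 0, ?_, ?_⟩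
  · refine cons_hits hS hpaw hout (i₀ := i₀) (k₀ := 1) (fun i _ => by simp) (by decide) ?_
    exact ⟨f i₀ 0, by simp, Or.inr ((hpaw _ _ _).2 (by simp [paw]))⟩
  · have := Finset.card_image_le (s := (Finset.univ : Finset ι)) (f := fun i => f i 0)
    rw [Finset.card_univ] at this
    omega

lemma Res.bound (h : Res G S) (hne : S.Nonempty) :
    ∃ D, Hits G S D ∧ 5 * D.card ≤ (edgesIn G S).card + 1 := by
  rcases h with ⟨D, h1, h2⟩ | h
  · exact ⟨D, h1, by omega⟩
  · exact h.bound hne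

/-! ### Combining the two sides of a bridge -/

/-- A bridge between two extremal graphs with an end `y` outside the tree vertices: the other end
`x` dominates a vertex of the triangle of `y` and one of the block of `x`, so it replaces the tree
vertices of both blocks. -/
lemma ConsOn.join_strict (h : Bridge G S A x y) {ι κ : Type} [Fintype ι] [Fintype κ]
    {f : ι → Fin 4 → V} {g : κ → Fin 4 → V}
    (hS : ∀ v, v ∈ A ↔ ∃ i k, f i k = v)
    (hpaw : ∀ i k l, G.Adj (f i k) (f i l) ↔ paw k l)
    (hout : ∀ i j k l, i ≠ j → G.Adj (f i k) (f j l) → k = 0 ∧ l = 0)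
    (hcard : 5 * Fintype.card ι = (edgesIn G A).card + 1)
    (hS' : ∀ v, v ∈ S \ A ↔ ∃ i k, g i k = v)
    (hpaw' : ∀ i k l, G.Adj (g i k) (g i l) ↔ paw k l)
    (hout' : ∀ i j k l, i ≠ j → G.Adj (g i k) (g j l) → k = 0 ∧ l = 0)
    (hcard' : 5 * Fintype.card κ = (edgesIn G (S \ A)).card + 1)
    {i₀ : ι} {k₀ : Fin 4} (hx : f i₀ k₀ = x) {j₀ : κ} {l₀ : Fin 4} (hy : g j₀ l₀ = y)
    (hl : l₀ ≠ 0) : ∃ D, Hits G S D ∧ 5 * D.card ≤ (edgesIn G S).card := by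
  set D₁ := insert x ((Finset.univ.erase i₀).image fun i => f i 0) with hD₁
  set D₂ := insert x ((Finset.univ.erase j₀).image fun j => g j 0) with hD₂
  refine ⟨D₁ ∪ D₂, h.hits ?_ ?_, ?_⟩
  · by_cases hk : k₀ = 0
    · refine cons_hits hS hpaw hout (i₀ := i₀) (k₀ := 1) ?_ (by decide) ?_
      · intro i hi
        exact Finset.mem_insert_of_mem (Finset.mem_image_of_mem _ (by simp [hi]))
      · exact ⟨x, by simp [hD₁], Or.inr (hx ▸ (hpaw _ _ _).2 (by simp [paw, hk]))⟩
    · refine cons_hits hS hpaw hout (i₀ := i₀) (k₀ := k₀) ?_ hk ?_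
      · intro i hi
        exact Finset.mem_insert_of_mem (Finset.mem_image_of_mem _ (by simp [hi]))
      · exact ⟨x, by simp [hD₁], Or.inl hx.symm⟩
  · refine cons_hits hS' hpaw' hout' (i₀ := j₀) (k₀ := l₀) ?_ hl ?_
    · intro i hi
      exact Finset.mem_insert_of_mem (Finset.mem_image_of_mem _ (by simp [hi]))
    · exact ⟨x, by simp [hD₂], Or.inr (hy ▸ h.adj)⟩
  · have hu : D₁ ∪ D₂ = insert x (((Finset.univ.erase i₀).image fun i => f i 0) ∪
        ((Finset.univ.erase j₀).image fun j => g j 0)) := by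
      rw [hD₁, hD₂]
      ext z
      simp only [Finset.mem_union, Finset.mem_insert]
      tauto
    have c0 := Finset.card_insert_le x (((Finset.univ.erase i₀).image fun i => f i 0) ∪
        ((Finset.univ.erase j₀).image fun j => g j 0))
    have c1 := Finset.card_union_le ((Finset.univ.erase i₀).image fun i => f i 0)
      ((Finset.univ.erase j₀).image fun j => g j 0)
    have c2 := Finset.card_image_le (s := Finset.univ.erase i₀) (f := fun i => f i 0)
    have c3 := Finset.card_image_le (s := Finset.univ.erase j₀) (f := fun j => g j 0)
    rw [Finset.card_erase_of_mem (Finset.mem_univ _), Finset.card_univ] at c2 c3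
    rw [hu]
    have := h.card
    have : 0 < Fintype.card ι := Fintype.card_pos_iff.2 ⟨i₀⟩
    have : 0 < Fintype.card κ := Fintype.card_pos_iff.2 ⟨j₀⟩
    omega

lemma Bridge.join (h : Bridge G S A x y) (hA : Res G A) (hB : Res G (S \ A)) : Res G S := by
  have hcard := h.card
  have hAne : A.Nonempty := ⟨x, h.hx⟩
  have hBne : (S \ A).Nonempty := ⟨y, h.symm.hx⟩
  by_cases hsA : ∃ D, Hits G A D ∧ 5 * D.card ≤ (edgesIn G A).card
  · obtain ⟨D, h1, h2⟩ := hsA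
    obtain ⟨D', h3, h4⟩ := hB.bound hBne
    have := Finset.card_union_le D D'
    exact Or.inl ⟨D ∪ D', h.hits h1 h3, by omega⟩
  by_cases hsB : ∃ D, Hits G (S \ A) D ∧ 5 * D.card ≤ (edgesIn G (S \ A)).card
  · obtain ⟨D, h1, h2⟩ := hsB
    obtain ⟨D', h3, h4⟩ := hA.bound hAne
    have := Finset.card_union_le D' D
    exact Or.inl ⟨D' ∪ D, h.hits h3 h1, by omega⟩
  obtain ⟨ι, _, f, finj, fS, fpaw, fout, fcard⟩ := hA.resolve_left hsA
  obtain ⟨κ, _, g, ginj, gS, gpaw, gout, gcard⟩ := hB.resolve_left hsB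
  obtain ⟨i₀, k₀, hx⟩ := (fS x).1 h.hx
  obtain ⟨j₀, l₀, hy⟩ := (gS y).1 h.symm.hx
  by_cases hl : l₀ = 0
  swap
  · exact Or.inl (ConsOn.join_strict h fS fpaw fout fcard gS gpaw gout gcard hx hy hl)
  by_cases hk : k₀ = 0
  swap
  · have hAA : S \ (S \ A) = A := Finset.sdiff_sdiff_eq_self h.sub
    exact Or.inl (ConsOn.join_strict h.symm gS gpaw gout gcard
      (by rwa [hAA]) fpaw fout (by rwa [hAA]) hy hx hk)
  subst hl hk
  -- the bridge joins two tree vertices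
  have fA : ∀ i k, f i k ∈ A := fun i k => (fS _).2 ⟨i, k, rfl⟩
  have gB : ∀ i k, g i k ∈ S \ A := fun i k => (gS _).2 ⟨i, k, rfl⟩
  have gB1 : ∀ i k, g i k ∈ S := fun i k => (Finset.mem_sdiff.1 (gB i k)).1
  have gB2 : ∀ i k, g i k ∉ A := fun i k => (Finset.mem_sdiff.1 (gB i k)).2
  have cross : ∀ i j k l, G.Adj (f i k) (g j l) → k = 0 ∧ l = 0 := by
    intro i j k l hadj
    obtain ⟨h1, h2⟩ := h.uniq _ (fA i k) _ (gB1 j l) (gB2 j l) hadj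
    exact ⟨(finj _ _ _ _ (h1.trans hx.symm)).2, (ginj _ _ _ _ (h2.trans hy.symm)).2⟩
  refine Or.inr ⟨ι ⊕ κ, inferInstance, Sum.elim f g, ?_, ?_, ?_, ?_, ?_⟩
  · rintro (i | i) (j | j) k l hij
    · obtain ⟨rfl, rfl⟩ := finj i j k l hij
      exact ⟨rfl, rfl⟩
    · exact absurd (show g j l ∈ A from (show f i k = g j l from hij) ▸ fA i k) (gB2 j l)
    · exact absurd (show g i k ∈ A from (show g i k = f j l from hij) ▸ fA j l) (gB2 i k)
    · obtain ⟨rfl, rfl⟩ := ginj i j k l hij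
      exact ⟨rfl, rfl⟩
  · intro v
    constructor
    · intro hv
      by_cases hvA : v ∈ A
      · obtain ⟨i, k, rfl⟩ := (fS v).1 hvA
        exact ⟨Sum.inl i, k, rfl⟩
      · obtain ⟨i, k, rfl⟩ := (gS v).1 (by simp [hv, hvA])
        exact ⟨Sum.inr i, k, rfl⟩
    · rintro ⟨i | i, k, rfl⟩
      · exact h.sub (fA i k)
      · exact gB1 i k
  · rintro (i | i) k l
    · exact fpaw i k l
    · exact gpaw i k l
  · rintro (i | i) (j | j) k l hij hadj
    · exact fout i j k l (fun e => hij (e ▸ rfl)) hadj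
    · exact cross i j k l hadj
    · exact (cross j i l k hadj.symm).symm
    · exact gout i j k l (fun e => hij (e ▸ rfl)) hadj
  · rw [Fintype.card_sum]
    omega

/-! ### Treating components separately -/

/-- No edge of `G` leads from `K` to `W \ K`, i.e. `K` is a union of components of `W` when
`K ⊆ W`. -/
def Closed (G : SimpleGraph V) (W K : Finset V) : Prop :=
  ∀ a ∈ K, ∀ b ∈ W, G.Adj a b → b ∈ K

lemma touch_card_ge {L : Finset (Sym2 V)} (hK : K ⊆ S) (hL : L ⊆ touch G S K)
    (hd : Disjoint (edgesIn G K) L) :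
    (edgesIn G K).card + L.card ≤ (touch G S K).card := by
  rw [← Finset.card_union_of_disjoint hd]
  refine Finset.card_le_card (Finset.union_subset ?_ hL)
  intro e
  induction e with | h a b => ?_
  rw [mem_edgesIn, mem_touch]
  exact fun ⟨h, ha, hb⟩ => ⟨h, hK ha, hK hb, Or.inl ha⟩

lemma touch_card_le : (touch G S K).card ≤ (edgesIn G S).card :=
  Finset.card_le_card (Finset.filter_subset _ _)

lemma touch_one (hK : K ⊆ S) {u q : V} (hu : u ∈ K) (hq : q ∈ S) (hqK : q ∉ K)
    (hadj : G.Adj u q) : (edgesIn G K).card + 1 ≤ (touch G S K).card := by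
  refine touch_card_ge (L := {s(u, q)}) hK ?_ ?_
  · rw [Finset.singleton_subset_iff, mem_touch]
    exact ⟨hadj, hK hu, hq, Or.inl hu⟩
  · rw [Finset.disjoint_singleton_right, mem_edgesIn]
    tauto

lemma touch_two (hK : K ⊆ S) {u q u' q' : V} (hu : u ∈ K) (hq : q ∈ S) (hqK : q ∉ K)
    (hadj : G.Adj u q) (hu' : u' ∈ K) (hq' : q' ∈ S) (hqK' : q' ∉ K)
    (hadj' : G.Adj u' q') (hne : u ≠ u' ∨ q ≠ q') :
    (edgesIn G K).card + 2 ≤ (touch G S K).card := by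
  have hne' : s(u, q) ≠ s(u', q') := by
    rw [ne_eq, Sym2.eq_iff]
    rintro (⟨rfl, rfl⟩ | ⟨rfl, rfl⟩)
    · simp at hne
    · exact hqK hu'
  have := touch_card_ge (G := G) (L := {s(u, q), s(u', q')}) hK ?_ ?_
  · rwa [Finset.card_pair hne'] at this
  · intro e he
    rw [Finset.mem_insert, Finset.mem_singleton] at he
    rcases he with rfl | rfl <;> rw [mem_touch]
    · exact ⟨hadj, hK hu, hq, Or.inl hu⟩
    · exact ⟨hadj', hK hu', hq', Or.inl hu'⟩
  · rw [Finset.disjoint_insert_right, Finset.disjoint_singleton_right, mem_edgesIn, mem_edgesIn]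
    tauto

/-- If every component `K` of `W` has a set that, with the help of `v`, meets all triangles in `K`
and is paid for by the edges meeting `K`, then so does every nonempty union `R` of components:
split `R` until it is connected. The additive constant `c` survives at least once. -/
lemma decomp {c : ℕ}
    (hK : ∀ K ⊆ W, Closed G W K → Conn G K →
      ∃ D, Hits G K (insert v D) ∧ 5 * D.card + c ≤ (touch G S K).card) :
    ∀ R ⊆ W, R.Nonempty → Closed G W R →
      ∃ D, Hits G R (insert v D) ∧ 5 * D.card + c ≤ (touch G S R).card := by
  intro R
  induction R using Finset.strongInduction with
  | H R ih =>
  intro hRW hR hcl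
  by_cases hc : Conn G R
  · exact hK R hRW hcl hc
  -- a disconnected `R` splits into two parts without edges between them
  have : ∃ A ⊆ R, A.Nonempty ∧ A ≠ R ∧ ∀ a ∈ A, ∀ b ∈ R \ A, ¬ G.Adj a b := by
    by_contra hcon
    refine hc ⟨hR, fun A h1 h2 h3 => ?_⟩
    by_contra h4
    push Not at h4
    exact hcon ⟨A, h1, h2, h3, h4⟩
  obtain ⟨A, hAR, hA, hAne, hno⟩ := this
  have hB : (R \ A).Nonempty := by
    rw [Finset.sdiff_nonempty]
    exact fun h' => hAne (hAR.antisymm h')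
  have hclA : Closed G W A := by
    intro a ha b hb hab
    by_contra hbA
    exact hno a ha b (Finset.mem_sdiff.2 ⟨hcl a (hAR ha) b hb hab, hbA⟩) hab
  have hclB : Closed G W (R \ A) := by
    intro a ha b hb hab
    rw [Finset.mem_sdiff]
    refine ⟨hcl a (Finset.mem_sdiff.1 ha).1 b hb hab, fun hbA => hno b hbA a ha hab.symm⟩
  obtain ⟨D₁, h1, h2⟩ := ih A (Finset.ssubset_iff_subset_ne.2 ⟨hAR, hAne⟩)
    (hAR.trans hRW) hA hclA
  obtain ⟨D₂, h3, h4⟩ := ih (R \ A) (Finset.sdiff_ssubset hAR hA)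
    (Finset.sdiff_subset.trans hRW) hB hclB
  refine ⟨D₁ ∪ D₂, ?_, ?_⟩
  · have m1 := h1.mono (D' := insert v (D₁ ∪ D₂))
      (Finset.insert_subset_insert _ Finset.subset_union_left)
    have m2 := h3.mono (D' := insert v (D₁ ∪ D₂))
      (Finset.insert_subset_insert _ Finset.subset_union_right)
    intro a ha b hb c hc hab hbc hac
    by_cases haA : a ∈ A
    · exact m1 a haA b (hclA a haA b (hRW hb) hab) c (hclA a haA c (hRW hc) hac) hab hbc hac
    · have haB : a ∈ R \ A := Finset.mem_sdiff.2 ⟨ha, haA⟩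
      exact m2 a haB b (hclB a haB b (hRW hb) hab) c (hclB a haB c (hRW hc) hac) hab hbc hac
  · have hd : Disjoint (touch G S A) (touch G S (R \ A)) := by
      rw [Finset.disjoint_left]
      intro e
      induction e with | h a b => ?_
      have n1 := hno a
      have n2 := hno b
      rw [mem_touch, mem_touch]
      rintro ⟨hab, -, -, hA'⟩ ⟨-, -, -, hB'⟩
      have hba := hab.symm
      simp only [Finset.mem_sdiff] at *
      rcases hA' with hA' | hA' <;> rcases hB' with hB' | hB'
      · exact hB'.2 hA'
      · exact n1 hA' b hB' hab
      · exact n2 hA' a hB' hba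
      · exact hB'.2 hA'
    have hsub : touch G S A ∪ touch G S (R \ A) ⊆ touch G S R := by
      intro e
      induction e with | h a b => ?_
      have n1 := @hAR a
      have n2 := @hAR b
      simp only [Finset.mem_union, mem_touch, Finset.mem_sdiff]
      tauto
    have c1 := Finset.card_le_card hsub
    rw [Finset.card_union_of_disjoint hd] at c1
    have c2 := Finset.card_union_le D₁ D₂
    omega

/-- In a connected `S`, every union of components of `S \ Q` sends an edge to `Q`. -/
lemma link (hS : Conn G S) (hQ : Q ⊆ S) (hQne : Q.Nonempty) (hK : K ⊆ S \ Q)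
    (hKne : K.Nonempty) (hcl : Closed G (S \ Q) K) : ∃ u ∈ K, ∃ q ∈ Q, G.Adj u q := by
  obtain ⟨q, hq⟩ := hQne
  obtain ⟨u, hu, w, hw, huw⟩ := hS.2 K (hK.trans Finset.sdiff_subset) hKne
    (by rintro rfl; exact (Finset.mem_sdiff.1 (hK (hQ hq))).2 hq)
  rw [Finset.mem_sdiff] at hw
  refine ⟨u, hu, w, ?_, huw⟩
  by_contra hwQ
  exact hw.2 (hcl u hu w (Finset.mem_sdiff.2 ⟨hw.1, hwQ⟩) huw)

/-- If `v` alone meets all triangles that use a vertex of `Q`, then `Q` can be removed: the edges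
inside `Q` pay for `v`, and the edges meeting `S \ Q` pay for the components of `S \ Q`. -/
lemma decomp_total {c : ℕ} (hQ : Q ⊆ S) (hne : (S \ Q).Nonempty)
    (hQhit : ∀ a ∈ S, ∀ b ∈ S, ∀ c ∈ S, G.Adj a b → G.Adj b c → G.Adj a c → a ∈ Q →
      Dom G {v} a ∨ Dom G {v} b ∨ Dom G {v} c)
    (hK : ∀ K ⊆ S \ Q, Closed G (S \ Q) K → Conn G K →
      ∃ D, Hits G K (insert v D) ∧ 5 * D.card + c ≤ (touch G S K).card) :
    ∃ D, Hits G S D ∧ 5 * D.card + c + (edgesIn G Q).card ≤ 5 + (edgesIn G S).card := by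
  obtain ⟨D, h1, h2⟩ := decomp hK _ Finset.Subset.rfl hne (fun a _ b hb _ => hb)
  refine ⟨insert v D, ?_, ?_⟩
  · have hv : ({v} : Finset V) ⊆ insert v D := by simp
    intro a ha b hb c hc hab hbc hac
    have q := fun p hp r hr s hs h1 h2 h3 h4 =>
      (hQhit p hp r hr s hs h1 h2 h3 h4).imp (Dom.mono hv) (Or.imp (Dom.mono hv) (Dom.mono hv))
    by_cases hA : a ∈ Q
    · exact q a ha b hb c hc hab hbc hac hA
    by_cases hB : b ∈ Q
    · have := q b hb c hc a ha hbc hac.symm hab.symm hB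
      tauto
    by_cases hC : c ∈ Q
    · have := q c hc a ha b hb hac.symm hab hbc.symm hC
      tauto
    exact h1 a (by simp [ha, hA]) b (by simp [hb, hB]) c (by simp [hc, hC]) hab hbc hac
  · have hd : Disjoint (touch G S (S \ Q)) (edgesIn G Q) := by
      rw [Finset.disjoint_left]
      intro e
      induction e with | h a b => ?_
      rw [mem_touch, mem_edgesIn]
      simp only [Finset.mem_sdiff]
      tauto
    have hsub : touch G S (S \ Q) ∪ edgesIn G Q ⊆ edgesIn G S := by
      intro e
      induction e with | h a b => ?_
      have n1 := @hQ a
      have n2 := @hQ b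
      simp only [Finset.mem_union, mem_touch, mem_edgesIn]
      tauto
    have c1 := Finset.card_le_card hsub
    rw [Finset.card_union_of_disjoint hd] at c1
    have c2 := Finset.card_insert_le v D
    omega

/-! ### The inductive argument -/

lemma IsTri.exists_of_mem (h : IsTri G A) (hx : x ∈ A) :
    ∃ p q, G.Adj x p ∧ G.Adj p q ∧ G.Adj x q ∧ A = {x, p, q} := by
  obtain ⟨a, b, c, hab, hbc, hac, rfl⟩ := h
  simp only [Finset.mem_insert, Finset.mem_singleton] at hx
  rcases hx with rfl | rfl | rfl
  · exact ⟨b, c, hab, hbc, hac, rfl⟩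
  · exact ⟨a, c, hab.symm, hac, hbc, by ext; simp; tauto⟩
  · exact ⟨a, b, hac.symm, hab, hbc.symm, by ext; simp; tauto⟩

/-- A triangle with a pendant edge is extremal, with a one-vertex tree. -/
lemma Bridge.pendant_cons (h : Bridge G S A x y) (hA : IsTri G A) (hSA : S = insert y A) :
    ConsOn G S := by
  have hcard := h.card
  have hsd : S \ A = {y} := by
    have := h.hyA
    rw [hSA]
    ext z
    simp only [Finset.mem_sdiff, Finset.mem_insert, Finset.mem_singleton]
    constructor
    · tauto
    · rintro rfl
      tauto
  have h0 : (edgesIn G {y}).card = 0 := by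
    rw [Finset.card_eq_zero, Finset.eq_empty_iff_forall_notMem]
    intro e
    induction e with | h a b => ?_
    simp only [mem_edgesIn, Finset.mem_singleton]
    rintro ⟨hab, rfl, rfl⟩
    exact hab.ne rfl
  rw [hsd, h0, hA.card] at hcard
  obtain ⟨p, q, hxp, hpq, hxq, rfl⟩ := hA.exists_of_mem h.hx
  have hyA := h.hyA
  simp only [Finset.mem_insert, Finset.mem_singleton, not_or] at hyA
  obtain ⟨n1, n2, n3⟩ := hyA
  have e1 := hxp.ne
  have e2 := hpq.ne
  have e3 := hxq.ne
  have hpy : ¬ G.Adj p y := fun hadj =>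
    e1 (h.uniq p (by simp) y h.hy h.hyA hadj).1.symm
  have hqy : ¬ G.Adj q y := fun hadj =>
    e3 (h.uniq q (by simp) y h.hy h.hyA hadj).1.symm
  have hyp : ¬ G.Adj y p := fun hadj => hpy hadj.symm
  have hyq : ¬ G.Adj y q := fun hadj => hqy hadj.symm
  have hxy := h.adj
  refine ⟨Unit, inferInstance, fun _ => ![y, x, p, q], ?_, ?_, ?_, ?_, ?_⟩
  · rintro ⟨⟩ ⟨⟩ k l hkl
    refine ⟨rfl, ?_⟩
    fin_cases k <;> fin_cases l <;> simp_all
  · intro v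
    rw [hSA]
    simp [Fin.exists_fin_succ, eq_comm]
  · rintro ⟨⟩ k l
    have := hxy.symm
    have := hxp.symm
    have := hpq.symm
    have := hxq.symm
    fin_cases k <;> fin_cases l <;> simp_all [paw]
  · rintro ⟨⟩ ⟨⟩ k l hij
    exact absurd rfl hij
  · simp [hcard]

/-- The case of a triangle `A` attached to `y` by a bridge, when every bridge has a triangle on
one of its sides. The set `A ∪ {y}` spans only four edges, so the missing unit for strictness has
to come from a further component. -/
lemma Bridge.pendant (hS : Conn G S) (h : Bridge G S A x y) (hA : IsTri G A)
    (ih : ∀ K ⊆ S, (edgesIn G K).card < (edgesIn G S).card → Conn G K → ¬ IsTri G K → Res G K)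
    (hbr : ∀ B u w, Bridge G S B u w → IsTri G B ∨ IsTri G (S \ B)) : Res G S := by
  set Q := insert y A with hQdef
  have hQ : Q ⊆ S := Finset.insert_subset h.hy h.sub
  by_cases hne : (S \ Q).Nonempty
  swap
  · rw [Finset.sdiff_nonempty, not_not] at hne
    exact Or.inr (h.pendant_cons hA (hne.antisymm hQ))
  have hxy : Dom G {y} x := ⟨y, by simp, Or.inr h.adj.symm⟩
  have hAS : ∀ a ∈ A, ∀ b ∈ S, b ∉ A → G.Adj a b → a = x ∧ b = y := h.uniq
  have hQcard : 4 ≤ (edgesIn G Q).card := by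
    have hb : Bridge G Q A x y :=
      ⟨Finset.subset_insert _ _, h.hx, Finset.mem_insert_self _ _, h.hyA, h.adj,
        fun a ha b hb => h.uniq a ha b (hQ hb)⟩
    have := hb.card
    have := hA.card
    omega
  suffices hdec : ∃ D, Hits G S D ∧
      5 * D.card + 1 + (edgesIn G Q).card ≤ 5 + (edgesIn G S).card by
    obtain ⟨D, h1, h2⟩ := hdec
    exact Or.inl ⟨D, h1, by omega⟩
  refine decomp_total (v := y) hQ hne ?_ ?_
  · intro a ha b hb c hc hab hbc hac haQ
    rw [hQdef, Finset.mem_insert] at haQ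
    rcases haQ with rfl | haA
    · exact Or.inl ⟨a, by simp, Or.inl rfl⟩
    by_cases hbA : b ∈ A
    · by_cases hcA : c ∈ A
      · exact hA.hits h.hx hxy a haA b hbA c hcA hab hbc hac
      · exact Or.inl ((hAS a haA c hc hcA hac).1 ▸ hxy)
    · exact Or.inl ((hAS a haA b hb hbA hab).1 ▸ hxy)
  · intro K hKR hcl hK
    have hKS : K ⊆ S := hKR.trans Finset.sdiff_subset
    have hKQ : ∀ z ∈ K, z ∉ Q := fun z hz => (Finset.mem_sdiff.1 (hKR hz)).2
    have hyK : y ∉ K := fun hy => hKQ y hy (Finset.mem_insert_self _ _)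
    -- all edges leaving `K` end in `y`
    have hlink : ∀ u ∈ K, ∀ q ∈ S, q ∉ K → G.Adj u q → q = y := by
      intro u hu q hq hqK huq
      by_contra hqy
      by_cases hqA : q ∈ A
      · have := (hAS q hqA u (hKS hu) (fun hu' => hKQ u hu (Finset.mem_insert_of_mem hu'))
          huq.symm).2
        exact hyK (this ▸ hu)
      · exact hqK (hcl u hu q (Finset.mem_sdiff.2 ⟨hq, by simp [hQdef, hqy, hqA]⟩) huq)
    obtain ⟨u, hu, q, hq, huq⟩ := link hS hQ ⟨y, Finset.mem_insert_self _ _⟩ hKR hK.1 hcl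
    obtain rfl := hlink u hu q (hQ hq) (fun hqK => hKQ q hqK hq) huq
    have ht := touch_one hKS hu h.hy hyK huq
    by_cases hKtri : IsTri G K
    · refine ⟨∅, hKtri.hits hu ⟨q, by simp, Or.inr huq.symm⟩, ?_⟩
      simp only [Finset.card_empty]
      omega
    have hlt : (edgesIn G K).card < (edgesIn G S).card := by
      have := touch_card_le (G := G) (S := S) (K := K)
      omega
    obtain ⟨D, h1, h2⟩ := (ih K hKS hlt hK hKtri).bound hK.1
    by_cases htwo : ∃ u' ∈ K, u' ≠ u ∧ G.Adj u' q
    · obtain ⟨u', hu', hne', hadj'⟩ := htwo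
      have := touch_two hKS hu h.hy hyK huq hu' h.hy hyK hadj' (Or.inl hne'.symm)
      exact ⟨D, h1.mono (Finset.subset_insert _ _), by omega⟩
    · push Not at htwo
      -- a single edge to `y` would be a bridge with no triangle on either side
      have hb : Bridge G S K u q := by
        refine ⟨hKS, hu, h.hy, hyK, huq, fun a ha b hb hbK hab => ?_⟩
        obtain rfl := hlink a ha b hb hbK hab
        refine ⟨?_, rfl⟩
        by_contra hau
        exact htwo a ha hau hab
      have hT := ((hbr _ _ _ hb).resolve_left hKtri).card_vertices
      have hle : Q.card ≤ (S \ K).card := Finset.card_le_card fun z hz =>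
        Finset.mem_sdiff.2 ⟨hQ hz, fun hzK => hKQ z hzK hz⟩
      rw [hQdef, Finset.card_insert_of_notMem h.hyA, hA.card_vertices, hT] at hle
      omega

/-- The case where every edge lies in a triangle. -/
lemma all_edges_tri (hS : Conn G S) (htri : ¬ IsTri G S)
    (hT : ∀ a ∈ S, ∀ b ∈ S, G.Adj a b → ∃ z ∈ S, G.Adj a z ∧ G.Adj b z)
    (hex : ∃ a ∈ S, ∃ b ∈ S, ∃ c ∈ S, G.Adj a b ∧ G.Adj b c ∧ G.Adj a c)
    (ih : ∀ K ⊆ S, (edgesIn G K).card < (edgesIn G S).card → Conn G K → ¬ IsTri G K → Res G K) :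
    ∃ D, Hits G S D ∧ 5 * D.card ≤ (edgesIn G S).card := by
  -- a triangle `v p q` with a further neighbour `r` of `v`
  obtain ⟨v, hv, p, hp, q, hq, r, hr, hvp, hpq, hvq, hvr, hrp, hrq⟩ :
      ∃ v ∈ S, ∃ p ∈ S, ∃ q ∈ S, ∃ r ∈ S, G.Adj v p ∧ G.Adj p q ∧ G.Adj v q ∧ G.Adj v r ∧
        r ≠ p ∧ r ≠ q := by
    obtain ⟨a, ha, b, hb, c, hc, hab, hbc, hac⟩ := hex
    have hsub : ({a, b, c} : Finset V) ⊆ S := by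
      intro z hz
      simp only [Finset.mem_insert, Finset.mem_singleton] at hz
      rcases hz with rfl | rfl | rfl <;> assumption
    have hT3 : IsTri G {a, b, c} := ⟨a, b, c, hab, hbc, hac, rfl⟩
    obtain ⟨v, hv, r, hr, hvr⟩ := hS.2 _ hsub ⟨a, by simp⟩ (fun e => htri (e ▸ hT3))
    obtain ⟨p, q, hvp, hpq, hvq, heq⟩ := hT3.exists_of_mem hv
    rw [heq] at hsub hr
    simp only [Finset.mem_sdiff, Finset.mem_insert, Finset.mem_singleton, not_or] at hr
    exact ⟨v, hsub (by simp), p, hsub (by simp), q, hsub (by simp), r, hr.1,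
      hvp, hpq, hvq, hvr, hr.2.2.1, hr.2.2.2⟩
  obtain ⟨s, hs, hvs, hrs⟩ := hT v hv r hr hvr
  set Q := S.filter fun z => z = v ∨ G.Adj v z with hQdef
  have hQ : Q ⊆ S := Finset.filter_subset _ _
  have hmQ : ∀ z, z ∈ Q ↔ z ∈ S ∧ (z = v ∨ G.Adj v z) := fun z => by simp [hQdef]
  have hvQ : v ∈ Q := (hmQ v).2 ⟨hv, Or.inl rfl⟩
  -- the closed neighbourhood of `v` spans five edges
  have hQcard : 5 ≤ (edgesIn G Q).card := by
    have n1 := hvp.ne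
    have n2 := hpq.ne
    have n3 := hvq.ne
    have n4 := hvr.ne
    have n5 := hvs.ne
    have n6 := hrs.ne
    have hsub : ({s(v, p), s(v, q), s(v, r), s(p, q), s(r, s)} : Finset (Sym2 V)) ⊆
        edgesIn G Q := by
      intro e he
      simp only [Finset.mem_insert, Finset.mem_singleton] at he
      rcases he with rfl | rfl | rfl | rfl | rfl <;> rw [mem_edgesIn, hmQ, hmQ] <;> tauto
    refine le_trans (le_of_eq ?_) (Finset.card_le_card hsub)
    rw [Finset.card_insert_of_notMem, Finset.card_insert_of_notMem,
      Finset.card_insert_of_notMem, Finset.card_insert_of_notMem, Finset.card_singleton]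
    all_goals
      simp only [Finset.mem_insert, Finset.mem_singleton, Sym2.eq_iff]
      grind
  by_cases hne : (S \ Q).Nonempty
  swap
  · rw [Finset.sdiff_nonempty, not_not] at hne
    have hSQ := hne.antisymm hQ
    refine ⟨{v}, ?_, by rw [hSQ]; simpa using hQcard⟩
    intro a ha b hb c hc hab hbc hac
    have := ((hmQ a).1 (hne ha)).2
    exact Or.inl ⟨v, by simp, this.imp Eq.symm id⟩
  suffices hdec : ∃ D, Hits G S D ∧
      5 * D.card + 0 + (edgesIn G Q).card ≤ 5 + (edgesIn G S).card by
    obtain ⟨D, h1, h2⟩ := hdec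
    exact ⟨D, h1, by omega⟩
  refine decomp_total (v := v) hQ hne ?_ ?_
  · intro a ha b hb c hc hab hbc hac haQ
    exact Or.inl ⟨v, by simp, ((hmQ a).1 haQ).2.imp Eq.symm id⟩
  · intro K hKR hcl hK
    have hKS : K ⊆ S := hKR.trans Finset.sdiff_subset
    have hKQ : ∀ z ∈ K, z ∉ Q := fun z hz => (Finset.mem_sdiff.1 (hKR hz)).2
    obtain ⟨u, hu, w, hw, huw⟩ := link hS hQ ⟨v, hvQ⟩ hKR hK.1 hcl
    have hwK : w ∉ K := fun h' => hKQ w h' hw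
    have ht := touch_one hKS hu (hQ hw) hwK huw
    by_cases hKtri : IsTri G K
    · refine ⟨{u}, hKtri.hits hu ⟨u, by simp, Or.inl rfl⟩, ?_⟩
      -- the triangle through the edge `u w` provides a second edge leaving `K`
      obtain ⟨z, hz, huz, hwz⟩ := hT u (hKS hu) w (hQ hw) huw
      have h3 := hKtri.card
      have : (edgesIn G K).card + 2 ≤ (touch G S K).card := by
        by_cases hzK : z ∈ K
        · exact touch_two hKS hu (hQ hw) hwK huw hzK (hQ hw) hwK hwz.symm (Or.inl huz.ne)
        · exact touch_two hKS hu (hQ hw) hwK huw hu hz hzK huz (Or.inr hwz.ne)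
      simp only [Finset.card_singleton]
      omega
    · have hlt : (edgesIn G K).card < (edgesIn G S).card := by
        have := touch_card_le (G := G) (S := S) (K := K)
        omega
      obtain ⟨D, h1, h2⟩ := (ih K hKS hlt hK hKtri).bound hK.1
      exact ⟨D, h1.mono (Finset.subset_insert _ _), by omega⟩

/-- The bound and the structure of its extremal cases, in terms of vertex sets. -/
theorem core (n : ℕ) : ∀ (G : SimpleGraph V) (S : Finset V), (edgesIn G S).card = n →
    Conn G S → ¬ IsTri G S → Res G S := by
  induction n using Nat.strong_induction_on with
  | _ n ih₀ =>
  rintro G S rfl hS htri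
  have ih : ∀ K ⊆ S, (edgesIn G K).card < (edgesIn G S).card → Conn G K → ¬ IsTri G K →
      Res G K := fun K _ hlt h1 h2 => ih₀ _ hlt G K rfl h1 h2
  by_cases hex : ∃ a ∈ S, ∃ b ∈ S, ∃ c ∈ S, G.Adj a b ∧ G.Adj b c ∧ G.Adj a c
  swap
  · push Not at hex
    exact Or.inl ⟨∅, fun a ha b hb c hc h1 h2 h3 => absurd h3 (hex a ha b hb c hc h1 h2), by simp⟩
  by_cases hT : ∀ a ∈ S, ∀ b ∈ S, G.Adj a b → ∃ z ∈ S, G.Adj a z ∧ G.Adj b z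
  · exact Or.inl (all_edges_tri hS htri hT hex ih)
  push Not at hT
  obtain ⟨x, hx, y, hy, hxy, hz⟩ := hT
  by_cases hbr : ∃ B u w, Bridge G S B u w ∧ ¬ IsTri G B ∧ ¬ IsTri G (S \ B)
  · obtain ⟨B, u, w, hb, h1, h2⟩ := hbr
    have hcard := hb.card
    exact hb.join (ih _ hb.sub (by omega) (hb.conn_left hS) h1)
      (ih _ hb.symm.sub (by omega) (hb.symm.conn_left hS) h2)
  have hbr' : ∀ B u w, Bridge G S B u w → IsTri G B ∨ IsTri G (S \ B) := by
    intro B u w hb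
    by_contra hcon
    push Not at hcon
    exact hbr ⟨B, u, w, hb, hcon⟩
  have hadj : ∀ a b, (G.deleteEdges {s(x, y)}).Adj a b ↔ G.Adj a b ∧ s(a, b) ≠ s(x, y) := by
    intro a b
    simp [SimpleGraph.deleteEdges_adj]
  by_cases hc : Conn (G.deleteEdges {s(x, y)}) S
  · have hsub : edgesIn (G.deleteEdges {s(x, y)}) S ⊆ (edgesIn G S).erase s(x, y) := by
      intro e
      induction e with | h a b => ?_
      rw [Finset.mem_erase, mem_edgesIn, mem_edgesIn, hadj]
      tauto
    have hmem : s(x, y) ∈ edgesIn G S := mem_edgesIn.2 ⟨hxy, hx, hy⟩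
    have hle := Finset.card_le_card hsub
    rw [Finset.card_erase_of_mem hmem] at hle
    have hpos : 0 < (edgesIn G S).card := Finset.card_pos.2 ⟨_, hmem⟩
    have htri' : ¬ IsTri (G.deleteEdges {s(x, y)}) S := by
      rintro ⟨a, b, c, h1, h2, h3, h4⟩
      exact htri ⟨a, b, c, ((hadj _ _).1 h1).1, ((hadj _ _).1 h2).1, ((hadj _ _).1 h3).1, h4⟩
    obtain ⟨D, h1, h2⟩ := (ih₀ _ (by omega) _ S rfl hc htri').bound hS.1
    refine Or.inl ⟨D, ?_, by omega⟩
    have hdom : ∀ v, Dom (G.deleteEdges {s(x, y)}) D v → Dom G D v := by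
      rintro v ⟨u, hu, h'⟩
      exact ⟨u, hu, h'.imp id fun h'' => ((hadj _ _).1 h'').1⟩
    -- the deleted edge lies in no triangle
    have hkeep : ∀ a b c, c ∈ S → G.Adj a b → G.Adj a c → G.Adj b c →
        (G.deleteEdges {s(x, y)}).Adj a b := by
      intro a b c hcS hab hac hbc
      refine (hadj _ _).2 ⟨hab, fun e => ?_⟩
      rw [Sym2.eq_iff] at e
      rcases e with ⟨rfl, rfl⟩ | ⟨rfl, rfl⟩
      · exact hz c hcS hac hbc
      · exact hz c hcS hbc hac
    intro a ha b hb c hc hab hbc hac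
    exact (h1 a ha b hb c hc (hkeep a b c hc hab hac hbc)
      (hkeep b c a ha hbc hab.symm hac.symm) (hkeep a c b hb hac hab hbc.symm)).imp (hdom a)
      (Or.imp (hdom b) (hdom c))
  · -- the edge `x y` is a bridge, and one of its sides is a triangle
    have : ∃ A ⊆ S, A.Nonempty ∧ A ≠ S ∧
        ∀ a ∈ A, ∀ b ∈ S \ A, ¬ (G.deleteEdges {s(x, y)}).Adj a b := by
      by_contra hcon
      refine hc ⟨hS.1, fun A h1 h2 h3 => ?_⟩
      by_contra h4
      push Not at h4
      exact hcon ⟨A, h1, h2, h3, h4⟩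
    obtain ⟨A, hAS, hA, hAne, hno⟩ := this
    have hno' : ∀ a ∈ A, ∀ b ∈ S, b ∉ A → G.Adj a b → s(a, b) = s(x, y) := by
      intro a ha b hb hbA hab
      by_contra hne
      exact hno a ha b (Finset.mem_sdiff.2 ⟨hb, hbA⟩) ((hadj _ _).2 ⟨hab, hne⟩)
    obtain ⟨u, hu, w, hw, huw⟩ := hS.2 A hAS hA hAne
    rw [Finset.mem_sdiff] at hw
    have hb : Bridge G S A u w := by
      refine ⟨hAS, hu, hw.1, hw.2, huw, fun a ha b hb hbA hab => ?_⟩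
      have e := (hno' a ha b hb hbA hab).trans (hno' u hu w hw.1 hw.2 huw).symm
      rw [Sym2.eq_iff] at e
      rcases e with e | ⟨rfl, rfl⟩
      · exact e
      · exact absurd ha hw.2
    rcases hbr' A u w hb with h' | h'
    · exact hb.pendant hS h' ih hbr'
    · exact hb.symm.pendant hS h' ih hbr'

/-! ### Transfer to the isolation number -/

lemma card_edgesIn_univ : (edgesIn G Finset.univ).card = Nat.card G.edgeSet := by
  have : edgesIn G Finset.univ = G.edgeFinset := by
    ext e
    simp [edgesIn]
  rw [this, edgeFinset_card, Nat.card_eq_fintype_card]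

lemma conn_univ (h : G.Connected) : Conn G Finset.univ := by
  have := h.nonempty
  refine ⟨Finset.univ_nonempty, fun A _ ⟨u, hu⟩ hne => ?_⟩
  obtain ⟨w, hw⟩ : ∃ w, w ∉ A := by
    by_contra hcon
    push Not at hcon
    exact hne (Finset.eq_univ_iff_forall.2 hcon)
  obtain ⟨p⟩ := h.preconnected u w
  obtain ⟨d, -, h1, h2⟩ := p.exists_boundary_dart (↑A : Set V) (by simpa using hu) (by simpa using hw)
  exact ⟨d.fst, by simpa using h1, d.snd, by simpa using h2, d.adj⟩

lemma IsTri.iso (h : IsTri G Finset.univ) : Nonempty (G ≃g cycleGraph 3) := by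
  have hc := h.card_vertices
  obtain ⟨a, b, c, hab, hbc, hac, hu⟩ := h
  have htop : G = ⊤ := by
    ext p q
    rw [top_adj]
    refine ⟨fun h => h.ne, fun hpq => ?_⟩
    have hp := Finset.mem_univ p
    have hq := Finset.mem_univ q
    rw [hu] at hp hq
    simp only [Finset.mem_insert, Finset.mem_singleton] at hp hq
    have := hab.symm
    have := hbc.symm
    have := hac.symm
    rcases hp with rfl | rfl | rfl <;> rcases hq with rfl | rfl | rfl <;> tauto
  rw [htop, cycleGraph_three_eq_top]
  exact ⟨Iso.completeGraph (Fintype.equivOfCardEq (by simpa using hc))⟩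

lemma isolNum_le {D : Finset V} (h : Hits G Finset.univ D) :
    isolNum G (cycleGraph 3) ≤ D.card := by
  refine Nat.sInf_le ⟨↑D, ?_, Set.ncard_coe_finset D⟩
  rintro ⟨f, -⟩
  have hf : ∀ i j : Fin 3, i ≠ j → G.Adj (f i) (f j) := by
    intro i j hij
    have : (cycleGraph 3).Adj i j := by rwa [cycleGraph_three_eq_top, top_adj]
    exact f.map_adj this
  have hn : ∀ i, ¬ Dom G D (f i) := by
    rintro i ⟨u, hu, h'⟩
    refine (f i).2 ?_
    rcases h' with rfl | h'
    · exact Or.inl hu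
    · exact Or.inr ⟨u, hu, h'⟩
  rcases h _ (Finset.mem_univ (f 0 : V)) _ (Finset.mem_univ (f 1 : V)) _
    (Finset.mem_univ (f 2 : V)) (hf _ _ (by decide)) (hf _ _ (by decide))
    (hf _ _ (by decide)) with h' | h' | h'
  · exact hn _ h'
  · exact hn _ h'
  · exact hn _ h'

end

/-! ### The graphs `cons(T, C₃)` -/

section
variable {α : Type*} {T : SimpleGraph α}

lemma cons_inl_inl {a b : α} : (consGraph T 3).Adj (Sum.inl a) (Sum.inl b) ↔ T.Adj a b := by
  simp only [consGraph, fromRel_adj, ne_eq, Sum.inl.injEq]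
  exact ⟨fun h => h.2.elim id Adj.symm, fun h => ⟨h.ne, Or.inl h⟩⟩

lemma cons_inl_inr {a : α} {p : α × Fin 3} :
    (consGraph T 3).Adj (Sum.inl a) (Sum.inr p) ↔ a = p.1 ∧ p.2 = 0 := by
  simp only [consGraph, fromRel_adj, ne_eq, reduceCtorEq, not_false_eq_true, true_and, or_false,
    Fin.ext_iff, Fin.val_zero]

lemma cons_inr_inl {a : α} {p : α × Fin 3} :
    (consGraph T 3).Adj (Sum.inr p) (Sum.inl a) ↔ a = p.1 ∧ p.2 = 0 := by
  rw [adj_comm, cons_inl_inr]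

lemma cons_inr_inr {p q : α × Fin 3} :
    (consGraph T 3).Adj (Sum.inr p) (Sum.inr q) ↔ p.1 = q.1 ∧ p.2 ≠ q.2 := by
  obtain ⟨a, k⟩ := p
  obtain ⟨b, l⟩ := q
  simp only [consGraph, fromRel_adj, cycleGraph_three_eq_top, top_adj, ne_eq, Sum.inr.injEq,
    Prod.mk.injEq]
  tauto

/-- The tree vertex to whose block (itself and its triangle) a vertex of `cons(T, C₃)` belongs. -/
def base : α ⊕ α × Fin 3 → α := Sum.elim id Prod.fst

/-- Contracting each block to its tree vertex maps walks of `cons(T, C₃)` to walks of `T`. -/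
lemma connected_of_cons (h : (consGraph T 3).Connected) : T.Connected := by
  have hstep : ∀ u w, (consGraph T 3).Adj u w → T.Reachable (base u) (base w) := by
    rintro (a | p) (b | q) hadj
    · exact (cons_inl_inl.1 hadj).reachable
    · exact (cons_inl_inr.1 hadj).1 ▸ Reachable.refl _
    · exact (cons_inr_inl.1 hadj).1 ▸ Reachable.refl _
    · exact (show base (Sum.inr p) = base (Sum.inr q) from (cons_inr_inr.1 hadj).1) ▸
        Reachable.refl _
  have hwalk : ∀ u w, (consGraph T 3).Walk u w → T.Reachable (base u) (base w) := by
    intro u w p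
    induction p with
    | nil => exact Reachable.refl _
    | cons hadj _ ih => exact (hstep _ _ hadj).trans ih
  have hne : Nonempty α := h.nonempty.map base
  refine ⟨fun a b => ?_⟩
  obtain ⟨p⟩ := h.preconnected (Sum.inl a) (Sum.inl b)
  exact hwalk _ _ p

lemma card_edges_cons [Fintype α] :
    Nat.card (consGraph T 3).edgeSet = Nat.card T.edgeSet + 4 * Fintype.card α := by
  -- count ordered pairs of adjacent vertices on both sides
  have h1 := two_mul_card_edgeFinset (consGraph T 3)
  have h2 := two_mul_card_edgeFinset T
  rw [Finset.card_filter, Fintype.sum_prod_type] at h1 h2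
  simp only [Fintype.sum_sum_type, Fintype.sum_prod_type, Fin.sum_univ_three, cons_inl_inl,
    cons_inl_inr, cons_inr_inl, cons_inr_inr, Finset.sum_add_distrib] at h1
  rw [← h2] at h1
  simp at h1
  rw [Nat.card_eq_fintype_card, Nat.card_eq_fintype_card, ← edgeFinset_card, ← edgeFinset_card]
  omega
end

section
variable {V : Type*} [Fintype V] {G : SimpleGraph V}

/-- An isolating set meets each of the `n` disjoint blocks, as the closed neighbourhood of a
triangle is contained in its block. -/
lemma le_isolNum {n : ℕ} {T : SimpleGraph (Fin n)} (φ : G ≃g consGraph T 3) :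
    n ≤ isolNum G (cycleGraph 3) := by
  have hne : {k | ∃ D : Set V, IsIsolating G (cycleGraph 3) D ∧ D.ncard = k}.Nonempty := by
    refine ⟨_, Set.univ, ?_, rfl⟩
    rintro ⟨f, -⟩
    exact (f 0).2 (Or.inl trivial)
  obtain ⟨D, hD, hcard⟩ := Nat.sInf_mem hne
  unfold isolNum
  rw [← hcard]
  have hsurj : ∀ i : Fin n, ∃ d ∈ D, base (φ d) = i := by
    intro i
    by_contra hcon
    push Not at hcon
    -- otherwise the triangle attached at `i` survives
    have hout : ∀ k : Fin 3, φ.symm (Sum.inr (i, k)) ∈ (closedNbhd G D)ᶜ := by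
      rintro k (hk | ⟨u, hu, hadj⟩)
      · exact hcon _ hk (by simp [base])
      · have hadj' : (consGraph T 3).Adj (φ u) (Sum.inr (i, k)) := by
          have := φ.map_adj_iff.2 hadj
          rwa [RelIso.apply_symm_apply] at this
        refine hcon u hu ?_
        rcases hφ : φ u with a | p
        · rw [hφ, cons_inl_inr] at hadj'
          exact hadj'.1
        · rw [hφ, cons_inr_inr] at hadj'
          exact hadj'.1
    refine hD ⟨⟨fun k => ⟨φ.symm (Sum.inr (i, k)), hout k⟩, ?_⟩, ?_⟩
    · intro k l hkl
      rw [comap_adj]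
      exact φ.symm.map_adj_iff.2 (cons_inr_inr.2 ⟨rfl, hkl.ne⟩)
    · intro k l hkl
      have := congrArg Subtype.val hkl
      simpa using this
  have himg : (fun d => base (φ d)) '' D = Set.univ :=
    Set.eq_univ_of_forall fun i => hsurj i
  have := Set.ncard_image_le (f := fun d => base (φ d)) (Set.toFinite D)
  rw [himg, Set.ncard_univ, Nat.card_eq_fintype_card, Fintype.card_fin] at this
  exact this

lemma memG_of_consOn (hG : G.Connected) (h : ConsOn G Finset.univ) : MemG G 3 := by
  obtain ⟨ι, _, f, hinj, hS, hpaw, hout, hcard⟩ := h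
  rw [card_edgesIn_univ] at hcard
  set e := Fintype.equivFin ι
  let T : SimpleGraph (Fin (Fintype.card ι)) := G.comap fun i => f (e.symm i) 0
  let g : Fin (Fintype.card ι) ⊕ Fin (Fintype.card ι) × Fin 3 → V :=
    Sum.elim (fun i => f (e.symm i) 0) (fun p => f (e.symm p.1) p.2.succ)
  have hg : Function.Bijective g := by
    constructor
    · rintro (i | ⟨i, k⟩) (j | ⟨j, l⟩) hij
      · exact congrArg _ (e.symm.injective (hinj _ _ _ _ hij).1)
      · exact absurd (hinj _ _ _ _ hij).2 (Fin.succ_ne_zero l).symm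
      · exact absurd (hinj _ _ _ _ hij).2 (Fin.succ_ne_zero k)
      · have := hinj _ _ _ _ hij
        obtain rfl : i = j := e.symm.injective this.1
        obtain rfl : k = l := Fin.succ_injective _ this.2
        rfl
    · intro v
      obtain ⟨i, k, rfl⟩ := (hS v).1 (Finset.mem_univ v)
      induction k using Fin.cases with
      | zero => exact ⟨Sum.inl (e i), by simp [g]⟩
      | succ k => exact ⟨Sum.inr (e i, k), by simp [g]⟩
  have key : ∀ i j k l, G.Adj (f (e.symm i) k) (f (e.symm j) l) ↔
      (i = j ∧ paw k l) ∨ (i ≠ j ∧ k = 0 ∧ l = 0 ∧ T.Adj i j) := by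
    intro i j k l
    by_cases hij : i = j
    · subst hij
      simp [hpaw]
    · constructor
      · intro hadj
        obtain ⟨rfl, rfl⟩ := hout _ _ _ _ (fun h => hij (e.symm.injective h)) hadj
        exact Or.inr ⟨hij, rfl, rfl, hadj⟩
      · rintro (⟨h, -⟩ | ⟨-, rfl, rfl, h⟩)
        · exact absurd h hij
        · exact h
  let φ : consGraph T 3 ≃g G := ⟨Equiv.ofBijective g hg, by
    rintro (i | ⟨i, k⟩) (j | ⟨j, l⟩)
    · exact (cons_inl_inl (T := T)).symm
    · refine (key i j 0 l.succ).trans (Iff.trans ?_ cons_inl_inr.symm)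
      simp only [paw]
      fin_cases l <;> simp
    · refine (key i j k.succ 0).trans (Iff.trans ?_ cons_inr_inl.symm)
      simp only [paw]
      fin_cases k <;> simp [eq_comm]
    · refine (key i j k.succ l.succ).trans (Iff.trans ?_ cons_inr_inr.symm)
      simp [paw, Fin.succ_ne_zero]⟩
  refine ⟨_, T, ?_, ⟨φ.symm⟩⟩
  -- the edge count of the extremal structure forces `T` to have one edge less than vertices
  rw [isTree_iff_connected_and_card]
  refine ⟨connected_of_cons (φ.connected_iff.2 hG), ?_⟩
  have h1 := Nat.card_congr φ.mapEdgeSet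
  rw [card_edges_cons, Fintype.card_fin] at h1
  rw [Nat.card_eq_fintype_card (α := Fin _), Fintype.card_fin]
  omega
end

end TriIso

theorem stmt10 {V : Type*} [Fintype V] (G : SimpleGraph V) [DecidableRel G.Adj]
    (hconn : G.Connected) (hne : ¬ Nonempty (G ≃g cycleGraph 3)) (m : ℕ)
    (hm : m = G.edgeFinset.card) :
    (isolNum G (cycleGraph 3) : ℚ) ≤ (m + 1) / 5 ∧
      ((isolNum G (cycleGraph 3) : ℚ) = (m + 1) / 5 ↔ MemG G 3) := by
  have hm' : m = Nat.card G.edgeSet := by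
    rw [hm, edgeFinset_card, Nat.card_eq_fintype_card]
  have hconn' := TriIso.conn_univ hconn
  have hres := TriIso.core _ G Finset.univ rfl hconn' fun h => hne h.iso
  have hle : 5 * isolNum G (cycleGraph 3) ≤ m + 1 := by
    obtain ⟨D, h1, h2⟩ := hres.bound hconn'.1
    have := TriIso.isolNum_le h1
    rw [TriIso.card_edgesIn_univ] at h2
    omega
  have hiff : 5 * isolNum G (cycleGraph 3) = m + 1 ↔ MemG G 3 := by
    constructor
    · intro heq
      rcases hres with ⟨D, h1, h2⟩ | h
      · have := TriIso.isolNum_le h1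
        rw [TriIso.card_edgesIn_univ] at h2
        omega
      · exact TriIso.memG_of_consOn hconn h
    · rintro ⟨n, T, hT, ⟨φ⟩⟩
      have h1 := TriIso.le_isolNum φ
      have h2 := (isTree_iff_connected_and_card.1 hT).2
      have h3 := Nat.card_congr φ.mapEdgeSet
      rw [TriIso.card_edges_cons, Fintype.card_fin] at h3
      rw [Nat.card_eq_fintype_card (α := Fin _), Fintype.card_fin] at h2
      omega
  rw [← hiff, le_div_iff₀ (by norm_num), eq_div_iff (by norm_num)]
  constructor
  · have : ((5 * isolNum G (cycleGraph 3) : ℕ) : ℚ) ≤ ((m + 1 : ℕ) : ℚ) := by exact_mod_cast hle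
    push_cast at this
    linarith
  · rw [mul_comm]
    exact_mod_cast Iff.rfl
end

section
/- For every integer k ≥ 3, if G is a connected graph with m edges that is not isomorphic to the complete graph K_k, then ι(G, K_k) ≤ (m + 1)/(k(k−1)/2 + 2). -/
/-!
Write `t = k(k-1)/2 + 2`. For a vertex set `S` inducing a connected subgraph that is not a
`k`-clique, strong induction on `S` gives a set `D` with `t |D| ≤ e(S) + 1` whose closed
neighbourhood meets every `k`-clique in `S`.

If `S` contains a `k`-clique, choose a vertex `x` and a set `X` with `x ∈ X ⊆ S` as follows.
* If for some vertex `x ∈ S` a `k`-clique `C₀` is a component of `S \ {x}`, then `X = C₀ ∪ {x}`.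
* Otherwise `x` is a vertex of a `k`-clique having a neighbour in `S` outside the clique, and
  `X = N[x] ∩ S`.

In both cases `X` spans at least `t - 1` edges, and every `k`-clique in `S` that is not contained
in `S \ X` meets `N[x]`. So it is enough to treat each component `C` of `S \ X` with at most
`f(C) / t` vertices, where `f(C)` counts the edges of `S` meeting `C`; the values `f(C)` and the
number of edges within `X` add up to `e(S)`. As `S` is connected, `f(C) ≥ e(C) + 1`, so the induction
hypothesis settles every component that is not a `k`-clique. If `C` is a `k`-clique, then in the
first case `x` already has a neighbour in `C`, and in the second case `C` sends edges to at least
two vertices outside, so `f(C) ≥ t` pays for one vertex of `C`.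

Connectedness is used in its cut form (`CutConn`), and edges are counted as ordered pairs, which
doubles every count. The lemma `glue` combines the solutions on components.
-/

open SimpleGraph

namespace CliqueIsolation

open Finset

variable {V : Type*}

/-! ### Cuts, cliques and pair counts -/

/-- `S` induces a connected (or empty) subgraph, in cut form: every nonempty proper subset of `S`
has an edge to the rest of `S`. -/
def CutConn (G : SimpleGraph V) (S : Finset V) : Prop :=
  ∀ C ⊆ S, C.Nonempty → C ≠ S → ∃ a ∈ C, ∃ b ∈ S, b ∉ C ∧ G.Adj a b

/-- No edge joins `C` to a vertex of `R` outside `C`. -/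
def NoExit (G : SimpleGraph V) (C R : Finset V) : Prop :=
  ∀ a ∈ C, ∀ b ∈ R, b ∉ C → ¬ G.Adj a b

/-- The closed neighbourhood of `D` meets every `k`-clique contained in `R`. -/
def Hits (G : SimpleGraph V) (k : ℕ) (D R : Finset V) : Prop :=
  ∀ T ⊆ R, G.IsNClique k T → ∃ v ∈ T, ∃ u ∈ D, u = v ∨ G.Adj u v

open Classical in
/-- Ordered pairs of adjacent vertices of `S`; there are twice as many as edges of `G[S]`. -/
noncomputable def pairs (G : SimpleGraph V) (S : Finset V) : Finset (V × V) :=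
  (S ×ˢ S).filter fun p => G.Adj p.1 p.2

open Classical in
/-- Ordered pairs of adjacent vertices of `S` with at least one entry in `C`. -/
noncomputable def touching (G : SimpleGraph V) (S C : Finset V) : Finset (V × V) :=
  (pairs G S).filter fun p => p.1 ∈ C ∨ p.2 ∈ C

variable {G : SimpleGraph V} {k : ℕ}

/-! ### Counting pairs of adjacent vertices -/

lemma mem_pairs {S : Finset V} {p : V × V} :
    p ∈ pairs G S ↔ (p.1 ∈ S ∧ p.2 ∈ S) ∧ G.Adj p.1 p.2 := by
  simp [pairs]

lemma mem_touching {S C : Finset V} {p : V × V} :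
    p ∈ touching G S C ↔ ((p.1 ∈ S ∧ p.2 ∈ S) ∧ G.Adj p.1 p.2) ∧ (p.1 ∈ C ∨ p.2 ∈ C) := by
  simp [touching, mem_pairs]

open Classical in
lemma card_pairs_split {S X : Finset V} (hX : X ⊆ S) :
    #(touching G S (S \ X)) + #(pairs G X) = #(pairs G S) := by
  rw [← card_union_of_disjoint]
  · congr 1
    ext p
    simp only [mem_union, mem_touching, mem_pairs, mem_sdiff]
    have h1 := @hX p.1
    have h2 := @hX p.2
    tauto
  · rw [Finset.disjoint_left]
    intro p
    simp only [mem_touching, mem_pairs, mem_sdiff]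
    tauto

open Classical in
lemma card_touching_add_le {S R C : Finset V} (hC : C ⊆ R) (hcl : NoExit G C R) :
    #(touching G S C) + #(touching G S (R \ C)) ≤ #(touching G S R) := by
  rw [← card_union_of_disjoint]
  · apply card_le_card
    intro p
    simp only [mem_union, mem_touching, mem_sdiff]
    have h1 := @hC p.1
    have h2 := @hC p.2
    tauto
  · rw [Finset.disjoint_left]
    intro p
    simp only [mem_touching, mem_sdiff]
    have h1 := fun h => hcl p.1 h p.2
    have h2 := fun h => hcl p.2 h p.1
    have h3 : G.Adj p.1 p.2 → G.Adj p.2 p.1 := fun h => h.symm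
    tauto

lemma touching_subset {S C : Finset V} : touching G S C ⊆ pairs G S :=
  fun _ hp => mem_pairs.2 (mem_touching.1 hp).1

open Classical in
lemma card_touching_ge_two {S C : Finset V} (hC : C ⊆ S) {a b : V} (ha : a ∈ C) (hb : b ∈ S)
    (hbC : b ∉ C) (hab : G.Adj a b) : #(pairs G C) + 2 ≤ #(touching G S C) := by
  have h2 : #({(a, b), (b, a)} : Finset (V × V)) = 2 := by
    rw [card_pair]
    simp only [ne_eq, Prod.mk.injEq, not_and]
    intro h; exact absurd h hab.ne
  rw [← h2, ← card_union_of_disjoint]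
  · apply card_le_card
    intro p hp
    simp only [mem_union, mem_pairs, mem_insert, mem_singleton] at hp
    rw [mem_touching]
    rcases hp with ⟨⟨h1, h2⟩, h3⟩ | rfl | rfl
    · exact ⟨⟨⟨hC h1, hC h2⟩, h3⟩, Or.inl h1⟩
    · exact ⟨⟨⟨hC ha, hb⟩, hab⟩, Or.inl ha⟩
    · exact ⟨⟨⟨hb, hC ha⟩, hab.symm⟩, Or.inr ha⟩
  · rw [Finset.disjoint_right]
    intro p hp hp'
    simp only [mem_insert, mem_singleton] at hp
    rw [mem_pairs] at hp'
    rcases hp with rfl | rfl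
    · exact hbC hp'.1.2
    · exact hbC hp'.1.1

open Classical in
lemma card_touching_ge_four {S C : Finset V} (hC : C ⊆ S) {a b a' b' : V} (ha : a ∈ C) (hb : b ∈ S)
    (hbC : b ∉ C) (hab : G.Adj a b) (ha' : a' ∈ C) (hb' : b' ∈ S)
    (hbC' : b' ∉ C) (hab' : G.Adj a' b') (hne : b ≠ b') :
    #(pairs G C) + 4 ≤ #(touching G S C) := by
  -- Count inside `S \ {b'}` using the edge `ab`; restoring `b'` adds the edge `a'b'`.
  have h1 := card_touching_ge_two (G := G) (S := S.erase b')
    (fun x hx => mem_erase.2 ⟨fun h => hbC' (h ▸ hx), hC hx⟩) ha (mem_erase.2 ⟨hne, hb⟩) hbC hab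
  have h2 : #({(a', b'), (b', a')} : Finset (V × V)) = 2 := by
    rw [card_pair]
    simp only [ne_eq, Prod.mk.injEq, not_and]
    intro h; exact absurd h hab'.ne
  have h3 : #(touching G (S.erase b') C) + 2 ≤ #(touching G S C) := by
    rw [← h2, ← card_union_of_disjoint]
    · apply card_le_card
      intro p hp
      simp only [mem_union, mem_touching, mem_insert, mem_singleton, mem_erase] at hp
      rw [mem_touching]
      rcases hp with h | rfl | rfl
      · tauto
      · exact ⟨⟨⟨hC ha', hb'⟩, hab'⟩, Or.inl ha'⟩
      · exact ⟨⟨⟨hb', hC ha'⟩, hab'.symm⟩, Or.inr ha'⟩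
    · rw [Finset.disjoint_right]
      intro p hp hp'
      simp only [mem_insert, mem_singleton] at hp
      simp only [mem_touching, mem_erase] at hp'
      rcases hp with rfl | rfl <;> simp at hp'
  omega

open Classical in
lemma card_pairs_clique {T : Finset V} (hT : G.IsNClique k T) : #(pairs G T) = k * k - k := by
  rw [← hT.card_eq, ← offDiag_card]
  congr 1
  ext p
  rw [mem_pairs, mem_offDiag]
  constructor
  · rintro ⟨⟨h1, h2⟩, h3⟩; exact ⟨h1, h2, h3.ne⟩
  · rintro ⟨h1, h2, h3⟩; exact ⟨⟨h1, h2⟩, hT.isClique h1 h2 h3⟩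

/-! ### Decomposition into components -/

open Classical in
/-- Every nonempty set has a connected component, obtained as a minimal nonempty subset without
edges to the rest. -/
lemma exists_component {R : Finset V} (hR : R.Nonempty) :
    ∃ C ⊆ R, C.Nonempty ∧ CutConn G C ∧ NoExit G C R := by
  have hne : (R.powerset.filter fun C => C.Nonempty ∧ NoExit G C R).Nonempty :=
    ⟨R, mem_filter.2 ⟨mem_powerset_self R, hR, fun _ _ _ hb hbR => absurd hb hbR⟩⟩
  obtain ⟨C, hC, hmin⟩ := exists_min_image _ card hne
  simp only [mem_filter, mem_powerset] at hC hmin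
  refine ⟨C, hC.1, hC.2.1, ?_, hC.2.2⟩
  intro B hB hBn hBC
  by_contra! hcon
  have hle := hmin B ⟨hB.trans hC.1, hBn, fun a ha b hb hbB hab => by
    by_cases hbC : b ∈ C
    · exact hcon a ha b hbC hbB hab
    · exact hC.2.2 a (hB ha) b hb hbC hab⟩
  exact hBC (eq_of_subset_of_card_le hB hle)

open Classical in
/-- Solutions on the components of `R`, each assisted by the vertex `x`, combine to a solution on
`R`. -/
lemma glue (hk : 3 ≤ k) (t : ℕ) (x : V) (S : Finset V) (R : Finset V)
    (h : ∀ C ⊆ R, C.Nonempty → CutConn G C → NoExit G C R →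
      ∃ D : Finset V, t * #D ≤ #(touching G S C) ∧ Hits G k (insert x D) C) :
    ∃ D : Finset V, t * #D ≤ #(touching G S R) ∧ Hits G k (insert x D) R := by
  induction R using Finset.strongInduction with
  | H R ih =>
  rcases R.eq_empty_or_nonempty with rfl | hR
  · refine ⟨∅, by simp, ?_⟩
    intro T hT hc
    have := hc.card_eq
    rw [subset_empty.1 hT, card_empty] at this
    omega
  obtain ⟨C, hCR, hCn, hCc, hCe⟩ := exists_component (G := G) hR
  obtain ⟨D₁, hD₁, hH₁⟩ := h C hCR hCn hCc hCe
  obtain ⟨D₂, hD₂, hH₂⟩ := ih (R \ C) (sdiff_ssubset hCR hCn) (by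
    intro B hB hBn hBc hBe
    refine h B (hB.trans sdiff_subset) hBn hBc ?_
    intro a ha b hb hbB hab
    have haR := mem_sdiff.1 (hB ha)
    by_cases hbC : b ∈ C
    · exact hCe b hbC a haR.1 haR.2 hab.symm
    · exact hBe a ha b (mem_sdiff.2 ⟨hb, hbC⟩) hbB hab)
  refine ⟨D₁ ∪ D₂, ?_, ?_⟩
  · calc t * #(D₁ ∪ D₂) ≤ t * (#D₁ + #D₂) := Nat.mul_le_mul_left _ (card_union_le _ _)
      _ = t * #D₁ + t * #D₂ := by ring
      _ ≤ _ := Nat.add_le_add hD₁ hD₂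
      _ ≤ _ := card_touching_add_le hCR hCe
  · intro T hT hc
    by_cases hTC : ∃ a ∈ T, a ∈ C
    · obtain ⟨a, haT, haC⟩ := hTC
      have hsub : T ⊆ C := by
        intro b hb
        by_contra hbC
        exact hCe a haC b (hT hb) hbC
          (hc.isClique haT hb (fun hab => hbC (hab ▸ haC)))
      obtain ⟨v, hv, u, hu, huv⟩ := hH₁ T hsub hc
      refine ⟨v, hv, u, ?_, huv⟩
      simp only [mem_insert, mem_union] at hu ⊢; tauto
    · push Not at hTC
      obtain ⟨v, hv, u, hu, huv⟩ := hH₂ T (fun b hb => mem_sdiff.2 ⟨hT hb, hTC b hb⟩) hc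
      refine ⟨v, hv, u, ?_, huv⟩
      simp only [mem_insert, mem_union] at hu ⊢; tauto

/-! ### The induction -/

open Classical in
/-- The inductive step once the vertex `x` and the set `X` have been chosen. -/
lemma step (hk : 3 ≤ k) {S X : Finset V} {x : V} (hX : X ⊆ S) (hxX : x ∈ X)
    (hS : CutConn G S)
    (ih : ∀ C ⊂ S, CutConn G C → ¬ G.IsNClique k C →
      ∃ D : Finset V, (k * k - k + 4) * #D ≤ #(pairs G C) + 2 ∧ Hits G k D C)
    (hcard : k * k - k + 2 ≤ #(pairs G X))
    (hhit : ∀ T ⊆ S, G.IsNClique k T → ¬ T ⊆ S \ X → ∃ v ∈ T, x = v ∨ G.Adj x v)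
    (hclique : ∀ C ⊆ S \ X, NoExit G C (S \ X) → G.IsNClique k C →
      (∃ v ∈ C, G.Adj x v) ∨ k * k - k + 4 ≤ #(touching G S C)) :
    ∃ D : Finset V, (k * k - k + 4) * #D ≤ #(pairs G S) + 2 ∧ Hits G k D S := by
  obtain ⟨D, hD, hH⟩ := glue (G := G) hk (k * k - k + 4) x S (S \ X) (by
    intro C hC hCn hCc hCe
    have hCS : C ⊆ S := hC.trans sdiff_subset
    have hxC : x ∉ C := fun h => (mem_sdiff.1 (hC h)).2 hxX
    have hCne : C ≠ S := fun h => hxC (h ▸ hX hxX)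
    by_cases hcl : G.IsNClique k C
    · have huniq : ∀ T ⊆ C, G.IsNClique k T → T = C := fun T hT hTc =>
        eq_of_subset_of_card_le hT (by rw [hTc.card_eq, hcl.card_eq])
      rcases hclique C hC hCe hcl with ⟨v, hv, hxv⟩ | hbig
      · refine ⟨∅, by simp, fun T hT hTc => ?_⟩
        rw [huniq T hT hTc]
        exact ⟨v, hv, x, by simp, Or.inr hxv⟩
      · obtain ⟨v, hv⟩ := hCn
        refine ⟨{v}, by simpa using hbig, fun T hT hTc => ?_⟩
        rw [huniq T hT hTc]
        exact ⟨v, hv, v, by simp, Or.inl rfl⟩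
    · obtain ⟨D, hD, hH⟩ := ih C (hCS.ssubset_of_ne hCne) hCc hcl
      obtain ⟨a, ha, b, hb, hbC, hab⟩ := hS C hCS hCn hCne
      refine ⟨D, hD.trans (card_touching_ge_two hCS ha hb hbC hab), fun T hT hTc => ?_⟩
      obtain ⟨v, hv, u, hu, huv⟩ := hH T hT hTc
      exact ⟨v, hv, u, mem_insert_of_mem hu, huv⟩)
  refine ⟨insert x D, ?_, ?_⟩
  · have h1 := card_pairs_split (G := G) hX
    have h2 : (k * k - k + 4) * #(insert x D) ≤ (k * k - k + 4) * (#D + 1) :=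
      Nat.mul_le_mul_left _ (card_insert_le _ _)
    rw [mul_add, mul_one] at h2
    omega
  · intro T hT hTc
    by_cases hTR : T ⊆ S \ X
    · exact hH T hTR hTc
    · obtain ⟨v, hv, hxv⟩ := hhit T hT hTc hTR
      exact ⟨v, hv, x, by simp, hxv⟩

open Classical in
/-- The theorem for induced connected subgraphs, with all edge counts doubled. -/
lemma main (hk : 3 ≤ k) (S : Finset V) (hS : CutConn G S) (hne : ¬ G.IsNClique k S) :
    ∃ D : Finset V, (k * k - k + 4) * #D ≤ #(pairs G S) + 2 ∧ Hits G k D S := by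
  induction S using Finset.strongInduction with
  | H S ih =>
  have ih' : ∀ C ⊂ S, CutConn G C → ¬ G.IsNClique k C →
      ∃ D : Finset V, (k * k - k + 4) * #D ≤ #(pairs G C) + 2 ∧ Hits G k D C := ih
  have hnonempty : ∀ T : Finset V, G.IsNClique k T → T.Nonempty := fun T hT => by
    rw [← card_pos, hT.card_eq]; omega
  by_cases hA : ∃ x ∈ S, ∃ C ⊆ S, x ∉ C ∧ G.IsNClique k C ∧ NoExit G C (S.erase x)
  · obtain ⟨x, hxS, C₀, hC₀, hxC₀, hcl, hex⟩ := hA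
    -- By connectedness, any exit-free set of `S \ {x}` is joined to `x` itself.
    have hlink : ∀ C ⊆ S, x ∉ C → C.Nonempty → NoExit G C (S.erase x) → ∃ v ∈ C, G.Adj v x := by
      intro C hC hxC hCn hCe
      obtain ⟨a, ha, b, hb, hbC, hab⟩ := hS C hC hCn (fun h => hxC (h ▸ hxS))
      by_cases hbx : b = x
      · exact ⟨a, ha, hbx ▸ hab⟩
      · exact absurd hab (hCe a ha b (mem_erase.2 ⟨hbx, hb⟩) hbC)
    obtain ⟨v, hv, hvx⟩ := hlink C₀ hC₀ hxC₀ (hnonempty _ hcl) hex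
    refine step hk (X := insert x C₀) (x := x) (insert_subset hxS hC₀) (mem_insert_self _ _) hS
      ih' ?_ ?_ ?_
    · have h1 := card_touching_ge_two (G := G) (subset_insert x C₀) hv (mem_insert_self _ _)
        hxC₀ hvx
      rw [card_pairs_clique hcl] at h1
      exact h1.trans (card_le_card touching_subset)
    · intro T hT hTc hTX
      by_cases hxT : x ∈ T
      · exact ⟨x, hxT, Or.inl rfl⟩
      obtain ⟨a, haT, haX⟩ := not_subset.1 hTX
      have haC : a ∈ C₀ := by
        have := hT haT
        simp only [mem_sdiff, mem_insert, not_and, not_not] at haX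
        rcases haX this with rfl | h
        · exact absurd haT hxT
        · exact h
      have hTC : T ⊆ C₀ := by
        intro b hb
        by_contra hbC
        exact hex a haC b (mem_erase.2 ⟨fun h => hxT (h ▸ hb), hT hb⟩) hbC
          (hTc.isClique haT hb (fun h => hbC (h ▸ haC)))
      have : T = C₀ := eq_of_subset_of_card_le hTC (by rw [hTc.card_eq, hcl.card_eq])
      exact ⟨v, this ▸ hv, Or.inr hvx.symm⟩
    · intro C hC hCe hCc
      left
      have hnot : ∀ a ∈ C, a ∈ S ∧ a ≠ x ∧ a ∉ C₀ := by
        intro a ha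
        have := hC ha
        simp only [mem_sdiff, mem_insert, not_or] at this
        exact this
      obtain ⟨w, hw, hwx⟩ := hlink C (fun a ha => (hnot a ha).1) (fun h => (hnot x h).2.1 rfl)
        (hnonempty _ hCc) (by
          intro a ha b hb hbC hab
          have hb' := mem_erase.1 hb
          by_cases hb0 : b ∈ C₀
          · exact hex b hb0 a (mem_erase.2 ⟨(hnot a ha).2.1, (hnot a ha).1⟩) (hnot a ha).2.2
              hab.symm
          · exact hCe a ha b (by simp [hb'.1, hb'.2, hb0]) hbC hab)
      exact ⟨w, hw, hwx.symm⟩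
  · by_cases hT : ∃ T ⊆ S, G.IsNClique k T
    swap
    · exact ⟨∅, by simp, fun T h1 h2 => absurd ⟨T, h1, h2⟩ hT⟩
    obtain ⟨K, hKS, hK⟩ := hT
    obtain ⟨x, hxK, y, hyS, hyK, hxy⟩ := hS K hKS (hnonempty _ hK) (fun h => hne (h ▸ hK))
    refine step hk (X := S.filter fun v => x = v ∨ G.Adj x v) (x := x) (filter_subset _ _)
      (by simp [hKS hxK]) hS ih' ?_ ?_ ?_
    · have hKX : K ⊆ S.filter fun v => x = v ∨ G.Adj x v := by
        intro v hv
        rw [mem_filter]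
        refine ⟨hKS hv, ?_⟩
        by_cases hxv : x = v
        · exact Or.inl hxv
        · exact Or.inr (hK.isClique hxK hv hxv)
      have h1 := card_touching_ge_two (G := G) hKX hxK (mem_filter.2 ⟨hyS, Or.inr hxy⟩) hyK hxy
      rw [card_pairs_clique hK] at h1
      exact h1.trans (card_le_card touching_subset)
    · intro T hT hTc hTX
      obtain ⟨a, haT, haX⟩ := not_subset.1 hTX
      refine ⟨a, haT, ?_⟩
      by_contra hcon
      exact haX (mem_sdiff.2 ⟨hT haT, fun h => hcon (mem_filter.1 h).2⟩)
    · intro C hC hCe hCc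
      right
      have hCS : C ⊆ S := hC.trans sdiff_subset
      have hxC : x ∉ C := fun h => (mem_sdiff.1 (hC h)).2 (by simp [hKS hxK])
      obtain ⟨a, ha, b, hb, hbC, hab⟩ := hS C hCS (hnonempty _ hCc)
        (fun h => hxC (h ▸ hKS hxK))
      -- `C` is not a component of `S \ {b}`, so it has a second neighbour outside.
      have h2 : ¬ NoExit G C (S.erase b) := fun h => hA ⟨b, hb, C, hCS, hbC, hCc, h⟩
      simp only [NoExit] at h2
      push Not at h2
      obtain ⟨a', ha', b', hb', hbC', hab'⟩ := h2
      rw [mem_erase] at hb'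
      have := card_touching_ge_four (G := G) hCS ha hb hbC hab ha' hb'.2 hbC' hab' hb'.1.symm
      rwa [card_pairs_clique hCc] at this

/-! ### Translation to graphs and isolation numbers -/

lemma cutConn_univ [Fintype V] (h : G.Connected) : CutConn G univ := by
  intro C _ ⟨u, hu⟩ hne
  obtain ⟨v, hv⟩ : ∃ v, v ∉ C := by
    by_contra! hcon
    exact hne (eq_univ_of_forall hcon)
  obtain ⟨p⟩ := h.preconnected u v
  obtain ⟨d, _, h1, h2⟩ := p.exists_boundary_dart (C : Set V) (by simpa using hu) (by simpa using hv)
  exact ⟨d.fst, by simpa using h1, d.snd, mem_univ _, by simpa using h2, d.adj⟩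

lemma card_pairs_univ [Fintype V] [DecidableRel G.Adj] : #(pairs G univ) = 2 * #G.edgeFinset := by
  classical
  rw [← G.sum_degrees_eq_twice_card_edges, pairs, univ_product_univ,
    ← univ_product_univ, card_filter, sum_product]
  refine sum_congr rfl fun v _ => ?_
  rw [← card_neighborFinset_eq_degree, neighborFinset_eq_filter, card_filter]
  exact sum_congr rfl fun w _ => by simp

lemma iso_of_isNClique_univ [Fintype V] (h : G.IsNClique k univ) :
    Nonempty (G ≃g completeGraph (Fin k)) := by
  have hc : Fintype.card V = k := by rw [← h.card_eq, card_univ]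
  refine ⟨⟨Fintype.equivFinOfCardEq hc, ?_⟩⟩
  intro a b
  simp only [completeGraph, top_adj, ne_eq, EmbeddingLike.apply_eq_iff_eq]
  exact ⟨fun hab => h.isClique (by simp) (by simp) hab, fun hab => hab.ne⟩

lemma isolNum_le [Fintype V] {D : Finset V} (h : Hits G k D univ) :
    isolNum G (completeGraph (Fin k)) ≤ #D := by
  classical
  refine Nat.sInf_le ⟨(D : Set V), ?_, Set.ncard_coe_finset D⟩
  rintro ⟨f, hf⟩
  have hinj : Function.Injective fun i => (f i : V) := Subtype.val_injective.comp hf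
  obtain ⟨v, hv, u, hu, huv⟩ := h (univ.image fun i => (f i : V)) (subset_univ _) (by
    rw [isNClique_iff, card_image_of_injective _ hinj, card_univ, Fintype.card_fin]
    refine ⟨?_, rfl⟩
    intro a ha b hb hab
    simp only [coe_image, coe_univ, Set.image_univ, Set.mem_range] at ha hb
    obtain ⟨i, rfl⟩ := ha
    obtain ⟨j, rfl⟩ := hb
    have hij : (completeGraph (Fin k)).Adj i j := fun hij => hab (by rw [hij])
    exact f.map_adj hij)
  obtain ⟨i, -, rfl⟩ := mem_image.1 hv
  refine (f i).2 ?_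
  rcases huv with h | h
  · exact Or.inl (by rw [← h]; exact hu)
  · exact Or.inr ⟨u, hu, h⟩

end CliqueIsolation

theorem stmt11 {V : Type*} [Fintype V] (G : SimpleGraph V) [DecidableRel G.Adj]
    (k : ℕ) (hk : 3 ≤ k) (hconn : G.Connected)
    (hne : ¬ Nonempty (G ≃g completeGraph (Fin k))) (m : ℕ)
    (hm : m = G.edgeFinset.card) :
    (isolNum G (completeGraph (Fin k)) : ℚ) ≤ (m + 1) / ((k : ℚ) * (k - 1) / 2 + 2) := by
  obtain ⟨D, hD, hH⟩ := CliqueIsolation.main (G := G) hk Finset.univ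
    (CliqueIsolation.cutConn_univ hconn) (fun h => hne (CliqueIsolation.iso_of_isNClique_univ h))
  have hle := CliqueIsolation.isolNum_le hH
  rw [CliqueIsolation.card_pairs_univ, ← hm] at hD
  have hkk : k ≤ k * k := Nat.le_mul_self k
  have hD' : ((k : ℚ) * k - k + 4) * (D.card : ℚ) ≤ 2 * m + 2 := by
    have : (((k * k - k + 4) * D.card : ℕ) : ℚ) ≤ ((2 * m + 2 : ℕ) : ℚ) := by exact_mod_cast hD
    push_cast [Nat.cast_sub hkk] at this
    exact this
  have hle' : (isolNum G (completeGraph (Fin k)) : ℚ) ≤ D.card := by exact_mod_cast hle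
  have hk' : (3 : ℚ) ≤ k := by exact_mod_cast hk
  have hpos : (0 : ℚ) < (k : ℚ) * (k - 1) / 2 + 2 := by nlinarith
  refine hle'.trans ((le_div_iff₀ hpos).2 ?_)
  linarith
end

section
/- If G is a connected graph of order n ≥ 3 that is not isomorphic to the 5-cycle C_5, then ι(G, P_2) ≤ n/3, where P_2 is the path on two vertices (a single edge); that is, G has a dominating-style set D of at most n/3 vertices such that G − N[D] contains no edge. -/
/-!
The theorem is proved for all induced subgraphs `G[S]` at once, connected or not. Call a connected
component of `G[S]` *bad* if it is a single edge or an induced 5-cycle, and call `S` *good* if `G[S]`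
has no bad component. The claim (`exists_isolating_of_good`) is that every good `S` has an
isolating set `D` with `3|D| ≤ |S|`; it is proved by strong induction on `|S|`.

The main reduction (`exists_isolating_of_meets`): if every bad component of `G[T]` contains a
neighbour of a vertex `x`, then, once `x` has been selected, `T` costs at most `|T|/3` further
vertices, and at most `(|T| - 2)/3` if there is a bad component, since a single edge with a dominated vertex costs
nothing and a 5-cycle with a dominated vertex costs one. Hence in a minimal counterexample `S`

* deleting one vertex never creates a bad component, and
* deleting `N[v]`, where `v` has maximum degree `≥ 2`, does create a bad component `B`.

Such a `B` is joined to some `x ∈ N(v)` by an edge `xy`. The set `B ∪ {x}` is dominated by at most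
`(|B| + 1)/3` vertices, so deleting it leaves a bad component `B'`. By the first point `B'` is
joined to `B`, and therefore contains `v` and all of `N(v)` except `x`. If `B'` is an edge, the
maximum degree is 2 and `B ∪ B' ∪ {x}` is a 5-cycle component of `G[S]`, contradicting goodness. If
`B'` is a 5-cycle, the maximum degree is 3, the remaining vertices attach to `x` only, and
`B ∪ B' ∪ {x}` (with 8 or 11 vertices) is isolated by 2, respectively 3, explicit vertices that
dominate `x`.
-/

open SimpleGraph

namespace Isolation

variable {V : Type*} {G : SimpleGraph V}

/-- `u` lies in the closed neighbourhood of the finite set `D`. -/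
def Dom (G : SimpleGraph V) (D : Finset V) (u : V) : Prop :=
  ∃ d ∈ D, d = u ∨ G.Adj d u

/-- Every edge of `G[T]` has an end in the closed neighbourhood of `D`, that is, `D` isolates
`G[T]`. The set `D` need not lie in `T`. -/
def Iso (G : SimpleGraph V) (T D : Finset V) : Prop :=
  ∀ u ∈ T, ∀ w ∈ T, G.Adj u w → Dom G D u ∨ Dom G D w

/-- `B` is the vertex set of an edge. -/
def IsEdge [DecidableEq V] (G : SimpleGraph V) (B : Finset V) : Prop :=
  ∃ a b, G.Adj a b ∧ B = {a, b}

/-- `a b c d e` is an induced 5-cycle. Distinctness of non-consecutive vertices is automatic: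
`a = c`, for instance, would turn the edge `cd` into the non-edge `da`. -/
structure Cyc (G : SimpleGraph V) (a b c d e : V) : Prop where
  ab : G.Adj a b
  bc : G.Adj b c
  cd : G.Adj c d
  de : G.Adj d e
  ea : G.Adj e a
  ac : ¬ G.Adj a c
  bd : ¬ G.Adj b d
  ce : ¬ G.Adj c e
  da : ¬ G.Adj d a
  eb : ¬ G.Adj e b

/-- `B` is the vertex set of an induced 5-cycle. -/
def IsCyc [DecidableEq V] (G : SimpleGraph V) (B : Finset V) : Prop :=
  ∃ a b c d e, Cyc G a b c d e ∧ B = {a, b, c, d, e}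

/-- `B` is a union of connected components of `G[S]`. -/
def Closed (G : SimpleGraph V) (S B : Finset V) : Prop :=
  B ⊆ S ∧ ∀ b ∈ B, ∀ u ∈ S, G.Adj b u → u ∈ B

/-- `B` is a connected component of `G[S]` isomorphic to `K₂` or `C₅`. -/
def Bad [DecidableEq V] (G : SimpleGraph V) (S B : Finset V) : Prop :=
  Closed G S B ∧ (IsEdge G B ∨ IsCyc G B)

/-- No connected component of `G[S]` is isomorphic to `K₂` or `C₅`. -/
def Good [DecidableEq V] (G : SimpleGraph V) (S : Finset V) : Prop :=
  ∀ B, ¬ Bad G S B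

lemma Dom.mono {D E : Finset V} (h : D ⊆ E) {u : V} : Dom G D u → Dom G E u :=
  fun ⟨d, hd, h'⟩ => ⟨d, h hd, h'⟩

lemma Cyc.rot {a b c d e : V} (h : Cyc G a b c d e) : Cyc G b c d e a :=
  ⟨h.bc, h.cd, h.de, h.ea, h.ab, h.bd, h.ce, h.da, h.eb, h.ac⟩

lemma Cyc.ne_ac {a b c d e : V} (h : Cyc G a b c d e) : a ≠ c := by
  rintro rfl
  exact h.da h.cd.symm

/-- A set of vertices is isolated if all but two non-adjacent ones are dominated. -/
lemma iso_of_two_left {T D : Finset V} {a b : V} (hab : ¬ G.Adj a b)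
    (h : ∀ t ∈ T, Dom G D t ∨ t = a ∨ t = b) : Iso G T D := by
  intro u hu w hw huw
  rcases h u hu with h1 | rfl | rfl
  · exact Or.inl h1
  · rcases h w hw with h2 | rfl | rfl
    · exact Or.inr h2
    · exact absurd rfl huw.ne
    · exact absurd huw hab
  · rcases h w hw with h2 | rfl | rfl
    · exact Or.inr h2
    · exact absurd huw.symm hab
    · exact absurd rfl huw.ne

/-- A nonempty union of components of a connected graph is everything. -/
lemma eq_univ_of_closed [Fintype V] (hconn : G.Connected) {B : Finset V}
    (hB : Closed G Finset.univ B) {b : V} (hb : b ∈ B) : B = Finset.univ := by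
  ext t
  simp only [Finset.mem_univ, iff_true]
  obtain ⟨w⟩ := hconn.preconnected b t
  induction w with
  | nil => exact hb
  | cons h _ ih => exact ih (hB.2 _ hb _ (Finset.mem_univ _) h)

variable [DecidableEq V]

lemma Cyc.card {a b c d e : V} (h : Cyc G a b c d e) : ({a, b, c, d, e} : Finset V).card = 5 := by
  have h1 := h.ne_ac
  have h2 := h.rot.ne_ac
  have h3 := h.rot.rot.ne_ac
  have h4 := h.rot.rot.rot.ne_ac
  have h5 := h.rot.rot.rot.rot.ne_ac
  have k1 := h.ab.ne
  have k2 := h.bc.ne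
  have k3 := h.cd.ne
  have k4 := h.de.ne
  have k5 := h.ea.ne
  repeat rw [Finset.card_insert_of_notMem (by simp; grind)]
  simp

/-- A 5-cycle may be read starting from any of its vertices. -/
lemma IsCyc.start {B : Finset V} (h : IsCyc G B) {y : V} (hy : y ∈ B) :
    ∃ b c d e, Cyc G y b c d e ∧ B = {y, b, c, d, e} := by
  obtain ⟨a, b, c, d, e, h, rfl⟩ := h
  simp only [Finset.mem_insert, Finset.mem_singleton] at hy
  rcases hy with rfl | rfl | rfl | rfl | rfl
  · exact ⟨_, _, _, _, h, rfl⟩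
  · exact ⟨_, _, _, _, h.rot, by grind⟩
  · exact ⟨_, _, _, _, h.rot.rot, by grind⟩
  · exact ⟨_, _, _, _, h.rot.rot.rot, by grind⟩
  · exact ⟨_, _, _, _, h.rot.rot.rot.rot, by grind⟩

lemma IsEdge.start {B : Finset V} (h : IsEdge G B) {y : V} (hy : y ∈ B) :
    ∃ z, G.Adj y z ∧ B = {y, z} := by
  obtain ⟨a, b, h, rfl⟩ := h
  simp only [Finset.mem_insert, Finset.mem_singleton] at hy
  rcases hy with rfl | rfl
  · exact ⟨_, h, rfl⟩
  · exact ⟨_, h.symm, by grind⟩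

/-- Once a vertex `y` of a bad component `B` is dominated, `(|B| - 2) / 3` further vertices
isolate `B`. -/
lemma bad_cheap {B : Finset V} (h : IsEdge G B ∨ IsCyc G B) {y : V} (hy : y ∈ B) :
    ∃ D : Finset V, 3 * D.card + 2 ≤ B.card ∧
      ∀ u ∈ B, ∀ w ∈ B, G.Adj u w → u = y ∨ w = y ∨ Dom G D u ∨ Dom G D w := by
  rcases h with h | h
  · obtain ⟨z, hz, rfl⟩ := h.start hy
    refine ⟨∅, by simp [Finset.card_pair hz.ne], ?_⟩
    intro u hu w hw huw
    have := huw.ne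
    grind
  · obtain ⟨b, c, d, e, hc, rfl⟩ := h.start hy
    clear h
    refine ⟨{c}, by simp [hc.card], ?_⟩
    intro u hu w hw huw
    have := huw.ne
    have h1 : Dom G {c} c := ⟨c, by simp, Or.inl rfl⟩
    have h2 : Dom G {c} b := ⟨c, by simp, Or.inr hc.bc.symm⟩
    have h3 : Dom G {c} d := ⟨c, by simp, Or.inr hc.cd⟩
    grind

/-- A bad component `B` has a dominating set of size `(|B| + 1) / 3` through any given vertex. -/
lemma bad_dom {B : Finset V} (h : IsEdge G B ∨ IsCyc G B) {y : V} (hy : y ∈ B) :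
    ∃ D : Finset V, 3 * D.card ≤ B.card + 1 ∧ y ∈ D ∧ ∀ u ∈ B, Dom G D u := by
  rcases h with h | h
  · obtain ⟨z, hz, rfl⟩ := h.start hy
    refine ⟨{y}, by simp [Finset.card_pair hz.ne], by simp, ?_⟩
    intro u hu
    refine ⟨y, by simp, ?_⟩
    grind
  · obtain ⟨b, c, d, e, hc, rfl⟩ := h.start hy
    clear h
    refine ⟨{y, c}, by rw [hc.card, Finset.card_pair hc.ne_ac], by simp, ?_⟩
    intro u hu
    simp only [Finset.mem_insert, Finset.mem_singleton] at hu
    rcases hu with rfl | rfl | rfl | rfl | rfl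
    · exact ⟨u, by simp, Or.inl rfl⟩
    · exact ⟨y, by simp, Or.inr hc.ab⟩
    · exact ⟨u, by simp, Or.inl rfl⟩
    · exact ⟨c, by simp, Or.inr hc.cd⟩
    · exact ⟨y, by simp, Or.inr hc.ea.symm⟩

/-- If every bad component of `G[T]` meets the set `A` of vertices that are already dominated, then
`T` is isolated by `|T| / 3` further vertices, and even by `(|T| - 2) / 3` if there is a bad
component. Here the bound `|T| / 3` is assumed for good sets of size less than `N`. -/
lemma exists_isolating_of_meets {N : ℕ}
    (IH : ∀ T : Finset V, T.card < N → Good G T → ∃ D, 3 * D.card ≤ T.card ∧ Iso G T D)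
    (A : V → Prop) (T : Finset V) (hT : T.card < N)
    (hA : ∀ B, Bad G T B → ∃ y ∈ B, A y) :
    ∃ D : Finset V, 3 * D.card ≤ T.card ∧ (¬ Good G T → 3 * D.card + 2 ≤ T.card) ∧
      ∀ u ∈ T, ∀ w ∈ T, G.Adj u w → A u ∨ A w ∨ Dom G D u ∨ Dom G D w := by
  induction T using Finset.strongInduction with
  | H T ih =>
  by_cases hg : Good G T
  · obtain ⟨D, h1, h2⟩ := IH T hT hg
    exact ⟨D, h1, fun h => absurd hg h, fun u hu w hw huw => Or.inr (Or.inr (h2 u hu w hw huw))⟩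
  · obtain ⟨B, hB⟩ : ∃ B, Bad G T B := by simpa [Good] using hg
    obtain ⟨y, hy, hAy⟩ := hA B hB
    obtain ⟨D₁, hc, hD₁⟩ := bad_cheap hB.2 hy
    have hBT := hB.1.1
    have hss : T \ B ⊂ T := Finset.sdiff_ssubset hBT ⟨y, hy⟩
    have hcard : (T \ B).card + B.card = T.card := Finset.card_sdiff_add_card_eq_card hBT
    -- `B` is closed in `T`, so bad components of `T \ B` are bad components of `T`.
    obtain ⟨D₂, h2, -, hD₂⟩ := ih (T \ B) hss (by omega) (by
      intro C hC
      refine hA C ⟨⟨hC.1.1.trans hss.1, ?_⟩, hC.2⟩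
      intro b hb u hu hbu
      have hb' := hC.1.1 hb
      rw [Finset.mem_sdiff] at hb'
      by_cases huB : u ∈ B
      · exact absurd (hB.1.2 u huB b hb'.1 hbu.symm) hb'.2
      · exact hC.1.2 b hb u (Finset.mem_sdiff.2 ⟨hu, huB⟩) hbu)
    have hun := Finset.card_union_le D₁ D₂
    refine ⟨D₁ ∪ D₂, by omega, fun _ => by omega, ?_⟩
    intro u hu w hw huw
    have m1 : ∀ {t}, Dom G D₁ t → Dom G (D₁ ∪ D₂) t := Dom.mono Finset.subset_union_left
    have m2 : ∀ {t}, Dom G D₂ t → Dom G (D₁ ∪ D₂) t := Dom.mono Finset.subset_union_right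
    by_cases huB : u ∈ B
    · rcases hD₁ u huB w (hB.1.2 u huB w hw huw) huw with rfl | rfl | h | h
      · exact Or.inl hAy
      · exact Or.inr (Or.inl hAy)
      · exact Or.inr (Or.inr (Or.inl (m1 h)))
      · exact Or.inr (Or.inr (Or.inr (m1 h)))
    · have hwB : w ∉ B := fun h => huB (hB.1.2 w h u hu huw.symm)
      rcases hD₂ u (by simp [hu, huB]) w (by simp [hw, hwB]) huw with h | h | h | h
      · exact Or.inl h
      · exact Or.inr (Or.inl h)
      · exact Or.inr (Or.inr (Or.inl (m2 h)))
      · exact Or.inr (Or.inr (Or.inr (m2 h)))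

/-- Select `x` and delete it together with a set `Y` of neighbours. If all bad components of the rest
contain neighbours of `x`, this stays within the budget as soon as `|Y| ≥ 2` or a bad component
arises. -/
lemma exists_isolating_of_delete {S : Finset V}
    (IH : ∀ T : Finset V, T.card < S.card → Good G T → ∃ D, 3 * D.card ≤ T.card ∧ Iso G T D)
    {x : V} (hx : x ∈ S) (Y : Finset V) (hY : ∀ y ∈ Y, y ∈ S ∧ G.Adj x y)
    (hA : ∀ B, Bad G (S \ insert x Y) B → ∃ y ∈ B, G.Adj x y)
    (h2 : 2 ≤ Y.card ∨ ¬ Good G (S \ insert x Y)) :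
    ∃ D, 3 * D.card ≤ S.card ∧ Iso G S D := by
  have hsub : insert x Y ⊆ S := by
    intro t ht
    rcases Finset.mem_insert.1 ht with rfl | h
    · exact hx
    · exact (hY t h).1
  have hxY : x ∉ Y := fun h => (hY x h).2.ne rfl
  have hc := Finset.card_sdiff_add_card_eq_card hsub
  rw [Finset.card_insert_of_notMem hxY] at hc
  obtain ⟨D, hD1, hD2, hD3⟩ := exists_isolating_of_meets IH (G.Adj x) (S \ insert x Y) (by omega) hA
  have hi := Finset.card_insert_le x D
  refine ⟨insert x D, ?_, ?_⟩
  · rcases h2 with h2 | h2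
    · omega
    · have := hD2 h2
      omega
  · have m : ∀ {t}, Dom G D t → Dom G (insert x D) t := Dom.mono (Finset.subset_insert _ _)
    have mx : ∀ {t}, G.Adj x t → Dom G (insert x D) t := fun h => ⟨x, by simp, Or.inr h⟩
    have mY : ∀ t ∈ insert x Y, Dom G (insert x D) t := by
      intro t ht
      rcases Finset.mem_insert.1 ht with rfl | h
      · exact ⟨t, by simp, Or.inl rfl⟩
      · exact mx (hY t h).2
    intro u hu w hw huw
    by_cases hu' : u ∈ insert x Y
    · exact Or.inl (mY u hu')
    by_cases hw' : w ∈ insert x Y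
    · exact Or.inr (mY w hw')
    rcases hD3 u (Finset.mem_sdiff.2 ⟨hu, hu'⟩) w (Finset.mem_sdiff.2 ⟨hw, hw'⟩) huw with h | h | h | h
    · exact Or.inl (mx h)
    · exact Or.inr (mx h)
    · exact Or.inl (m h)
    · exact Or.inr (m h)

/-- If all vertices of `G[S]` have degree at most `k`, a list of `k` distinct neighbours of `u`
is complete. -/
lemma mem_of_degree_le {S : Finset V} {k : ℕ} {u : V}
    (hk : ∀ Z : Finset V, (∀ z ∈ Z, z ∈ S ∧ G.Adj u z) → Z.card ≤ k)
    {Z : Finset V} (hZ : ∀ z ∈ Z, z ∈ S ∧ G.Adj u z) (hc : k ≤ Z.card)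
    {t : V} (ht : t ∈ S) (hut : G.Adj u t) : t ∈ Z := by
  by_contra h
  have := hk (insert t Z) (by
    intro z hz
    rcases Finset.mem_insert.1 hz with rfl | hz
    · exact ⟨ht, hut⟩
    · exact hZ z hz)
  rw [Finset.card_insert_of_notMem h] at this
  omega

/-- A bad component of `G[T]` has an edge to a vertex of `S \ T` if `S ⊇ T` is good. -/
lemma exists_link {S T B : Finset V} (hg : Good G S) (hTS : T ⊆ S) (hB : Bad G T B) :
    ∃ y ∈ B, ∃ x ∈ S, x ∉ T ∧ G.Adj y x := by
  by_contra! h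
  refine hg B ⟨⟨hB.1.1.trans hTS, fun b hb u hu hbu => ?_⟩, hB.2⟩
  by_cases huT : u ∈ T
  · exact hB.1.2 b hb u huT hbu
  · exact absurd hbu (h b hb u hu huT)

/-! ### The two configurations left by the reductions -/

/-- In a graph of maximum degree at most 2 every 5-cycle is an induced component. -/
lemma not_good_of_cycle {S : Finset V}
    (hmax : ∀ u ∈ S, ∀ Z : Finset V, (∀ z ∈ Z, z ∈ S ∧ G.Adj u z) → Z.card ≤ 2)
    {a b c d e : V} (ha : a ∈ S) (hb : b ∈ S) (hc : c ∈ S) (hd : d ∈ S) (he : e ∈ S)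
    (ab : G.Adj a b) (bc : G.Adj b c) (cd : G.Adj c d) (de : G.Adj d e) (ea : G.Adj e a)
    (ac' : a ≠ c) (bd' : b ≠ d) (ce' : c ≠ e) (da' : d ≠ a) (eb' : e ≠ b) : ¬ Good G S := by
  have key : ∀ {u p q t : V}, u ∈ S → p ∈ S → q ∈ S → G.Adj u p → G.Adj u q → p ≠ q →
      t ∈ S → G.Adj u t → t = p ∨ t = q := by
    intro u p q t hu hp hq hup huq hpq ht hut
    have := mem_of_degree_le (hmax u hu) (Z := {p, q}) (by grind)
      (by rw [Finset.card_pair hpq]) ht hut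
    simpa using this
  have ka : ∀ {t}, t ∈ S → G.Adj a t → t = b ∨ t = e := key ha hb he ab ea.symm eb'.symm
  have kb : ∀ {t}, t ∈ S → G.Adj b t → t = c ∨ t = a := key hb hc ha bc ab.symm ac'.symm
  have kc : ∀ {t}, t ∈ S → G.Adj c t → t = d ∨ t = b := key hc hd hb cd bc.symm bd'.symm
  have kd : ∀ {t}, t ∈ S → G.Adj d t → t = e ∨ t = c := key hd he hc de cd.symm ce'.symm
  have ke : ∀ {t}, t ∈ S → G.Adj e t → t = a ∨ t = d := key he ha hd ea de.symm da'.symm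
  have := ab.ne
  have := bc.ne
  have := cd.ne
  have := de.ne
  have := ea.ne
  intro hg
  refine hg {a, b, c, d, e} ⟨⟨by intro t; simp; grind, ?_⟩, Or.inr ⟨a, b, c, d, e, ⟨ab, bc, cd, de,
    ea, fun h => ?_, fun h => ?_, fun h => ?_, fun h => ?_, fun h => ?_⟩, rfl⟩⟩
  · intro s hs t ht hst
    simp only [Finset.mem_insert, Finset.mem_singleton] at hs ⊢
    rcases hs with rfl | rfl | rfl | rfl | rfl
    · grind [ka ht hst]
    · grind [kb ht hst]
    · grind [kc ht hst]
    · grind [kd ht hst]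
    · grind [ke ht hst]
  · grind [ka hc h]
  · grind [kb hd h]
  · grind [kc he h]
  · grind [kd ha h]
  · grind [ke hb h]

/-- The case in which the second bad component is an edge `{v, w}`. -/
lemma edge_case {S B : Finset V} (hg : Good G S)
    (hmax : ∀ u ∈ S, ∀ Z : Finset V, (∀ z ∈ Z, z ∈ S ∧ G.Adj u z) → Z.card ≤ 2)
    {v x y w u : V} (hv : v ∈ S) (hx : x ∈ S) (hw : w ∈ S) (hBS : B ⊆ S)
    (hB : IsEdge G B ∨ IsCyc G B) (hxB : x ∉ B) (hvB : v ∉ B) (hwB : w ∉ B) (hwx : w ≠ x)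
    (hvx : G.Adj v x) (hvw : G.Adj v w) (hy : y ∈ B) (hyx : G.Adj y x)
    (hu : u ∈ B) (hwu : G.Adj w u) : False := by
  rcases hB with hB | hB
  · obtain ⟨z, hyz, rfl⟩ := hB.start hy
    have hzS : z ∈ S := hBS (by simp)
    have hyS : y ∈ S := hBS (by simp)
    have hwz : G.Adj w z := by
      simp only [Finset.mem_insert, Finset.mem_singleton] at hu
      rcases hu with rfl | rfl
      · -- `u` would have the three neighbours `x`, `z`, `w`
        have := mem_of_degree_le (hmax u hyS) (Z := {x, z}) (by grind)
          (by rw [Finset.card_pair (by grind)]) hw hwu.symm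
        grind
      · exact hwu
    exact not_good_of_cycle hmax hv hx hyS hzS hw hvx hyx.symm hyz hwz.symm hvw.symm
      (by grind) (by grind) (by grind) (by grind) (by grind) hg
  · obtain ⟨b, c, d, e, h, rfl⟩ := hB.start hy
    have := h.rot.rot.rot.rot.ne_ac
    have := mem_of_degree_le (hmax y (hBS hy)) (Z := {b, e})
      (by
        intro t ht
        simp only [Finset.mem_insert, Finset.mem_singleton] at ht
        rcases ht with rfl | rfl
        · exact ⟨hBS (by simp), h.ab⟩
        · exact ⟨hBS (by simp), h.ea.symm⟩)
      (by rw [Finset.card_pair (by grind)]) hx hyx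
    grind

/-- The case in which the second bad component is a 5-cycle `v p q r s`: two or three vertices
dominate `x` and isolate the 8 or 11 vertices of `B`, the 5-cycle and `x`. -/
lemma cyc_case {S B : Finset V}
    (hmax : ∀ u ∈ S, ∀ Z : Finset V, (∀ z ∈ Z, z ∈ S ∧ G.Adj u z) → Z.card ≤ 3)
    {v x y p q r s : V} (hBS : B ⊆ S) (hPS : ({v, p, q, r, s} : Finset V) ⊆ S)
    (hB : IsEdge G B ∨ IsCyc G B) (hP : Cyc G v p q r s)
    (hdisj : ∀ t ∈ B, t ∉ ({v, p, q, r, s} : Finset V))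
    (hlink : ∀ t ∈ B, ∀ u ∈ ({v, p, q, r, s} : Finset V), G.Adj t u → u = p ∨ u = s)
    (hvx : G.Adj v x) (hy : y ∈ B) (hyx : G.Adj y x) :
    ∃ D : Finset V, 3 * D.card ≤ B.card + 6 ∧ Dom G D x ∧
      Iso G (B ∪ {v, p, q, r, s}) D := by
  have h1 := hP.ne_ac
  have h2 := hP.rot.ne_ac
  have h3 := hP.rot.rot.ne_ac
  have h4 := hP.rot.rot.rot.ne_ac
  have h5 := hP.rot.rot.rot.rot.ne_ac
  have k1 := hP.ab
  have k2 := hP.bc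
  have k3 := hP.cd
  have k4 := hP.de
  have k5 := hP.ea
  have hpS : p ∈ S := hPS (by simp)
  have hsS : s ∈ S := hPS (by simp)
  have hvS : v ∈ S := hPS (by simp)
  have hqS : q ∈ S := hPS (by simp)
  have hrS : r ∈ S := hPS (by simp)
  have self : ∀ {D : Finset V} {t}, t ∈ D → Dom G D t := fun h => ⟨_, h, Or.inl rfl⟩
  have nb : ∀ {D : Finset V} {t u}, t ∈ D → G.Adj t u → Dom G D u := fun h h' => ⟨_, h, Or.inr h'⟩
  rcases hB with hB | hB
  · obtain ⟨z, hyz, rfl⟩ := hB.start hy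
    have hzS : z ∈ S := hBS (by simp)
    have hzs : z ∉ ({v, p, q, r, s} : Finset V) := hdisj z (by simp)
    have hyP : y ∉ ({v, p, q, r, s} : Finset V) := hdisj y (by simp)
    simp only [Finset.mem_insert, Finset.mem_singleton, not_or] at hzs hyP
    have hcy : ({y, z} : Finset V).card = 2 := Finset.card_pair hyz.ne
    have c2 : ∀ a b : V, 3 * ({a, b} : Finset V).card ≤ 2 + 6 := by
      intro a b
      have := Finset.card_le_two (a := a) (b := b)
      omega
    rw [hcy]
    by_cases hzs' : G.Adj z s
    swap
    · refine ⟨{x, q}, c2 _ _, self (by simp), ?_⟩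
      -- only `z` and `s` are left
      have d1 : Dom G {x, q} v := nb (t := x) (by simp) hvx.symm
      have d2 : Dom G {x, q} y := nb (t := x) (by simp) hyx.symm
      have d3 : Dom G {x, q} q := self (by simp)
      have d4 : Dom G {x, q} p := nb (t := q) (by simp) k2.symm
      have d5 : Dom G {x, q} r := nb (t := q) (by simp) k3
      refine iso_of_two_left hzs' fun t ht => ?_
      simp only [Finset.mem_union, Finset.mem_insert, Finset.mem_singleton] at ht
      rcases ht with (rfl | rfl) | rfl | rfl | rfl | rfl | rfl <;>
        first
        | exact Or.inl (by assumption)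
        | exact Or.inr (Or.inl rfl)
        | exact Or.inr (Or.inr rfl)
    by_cases hzp' : G.Adj z p
    swap
    · refine ⟨{x, r}, c2 _ _, self (by simp), ?_⟩
      have d1 : Dom G {x, r} v := nb (t := x) (by simp) hvx.symm
      have d2 : Dom G {x, r} y := nb (t := x) (by simp) hyx.symm
      have d3 : Dom G {x, r} r := self (by simp)
      have d4 : Dom G {x, r} q := nb (t := r) (by simp) k3.symm
      have d5 : Dom G {x, r} s := nb (t := r) (by simp) k4
      refine iso_of_two_left hzp' fun t ht => ?_
      simp only [Finset.mem_union, Finset.mem_insert, Finset.mem_singleton] at ht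
      rcases ht with (rfl | rfl) | rfl | rfl | rfl | rfl | rfl <;>
        first
        | exact Or.inl (by assumption)
        | exact Or.inr (Or.inl rfl)
        | exact Or.inr (Or.inr rfl)
    · refine ⟨{p, v}, c2 _ _, nb (t := v) (by simp) hvx, ?_⟩
      -- only `y` and `r` are left
      have d1 : Dom G {p, v} v := self (by simp)
      have d2 : Dom G {p, v} p := self (by simp)
      have d3 : Dom G {p, v} q := nb (t := p) (by simp) k2
      have d4 : Dom G {p, v} z := nb (t := p) (by simp) hzp'.symm
      have d5 : Dom G {p, v} s := nb (t := v) (by simp) k5.symm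
      have hyr : ¬ G.Adj y r := fun h => by
        rcases hlink y (by simp) r (by simp) h with h | h
        · exact h2 h.symm
        · exact k4.ne h
      refine iso_of_two_left hyr fun t ht => ?_
      simp only [Finset.mem_union, Finset.mem_insert, Finset.mem_singleton] at ht
      rcases ht with (rfl | rfl) | rfl | rfl | rfl | rfl | rfl <;>
        first
        | exact Or.inl (by assumption)
        | exact Or.inr (Or.inl rfl)
        | exact Or.inr (Or.inr rfl)
  · obtain ⟨a, b, c, d, h, rfl⟩ := hB.start hy
    have c3 : ∀ a b c : V, 3 * ({a, b, c} : Finset V).card ≤ 5 + 6 := by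
      intro a b e
      have := Finset.card_le_three (a := a) (b := b) (c := e)
      omega
    have ha : a ∉ ({v, p, q, r, s} : Finset V) := hdisj a (by simp)
    have hd : d ∉ ({v, p, q, r, s} : Finset V) := hdisj d (by simp)
    have had := h.rot.rot.rot.rot.ne_ac
    simp only [Finset.mem_insert, Finset.mem_singleton, not_or] at ha hd
    rw [h.card]
    by_cases hds : G.Adj d s
    swap
    · refine ⟨{x, q, b}, c3 _ _ _, self (by simp), ?_⟩
      -- only `d` and `s` are left
      have d1 : Dom G {x, q, b} v := nb (t := x) (by simp) hvx.symm
      have d2 : Dom G {x, q, b} y := nb (t := x) (by simp) hyx.symm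
      have d3 : Dom G {x, q, b} q := self (by simp)
      have d4 : Dom G {x, q, b} p := nb (t := q) (by simp) k2.symm
      have d5 : Dom G {x, q, b} r := nb (t := q) (by simp) k3
      have d6 : Dom G {x, q, b} b := self (by simp)
      have d7 : Dom G {x, q, b} a := nb (t := b) (by simp) h.bc.symm
      have d8 : Dom G {x, q, b} c := nb (t := b) (by simp) h.cd
      refine iso_of_two_left hds fun t ht => ?_
      simp only [Finset.mem_union, Finset.mem_insert, Finset.mem_singleton] at ht
      rcases ht with (rfl | rfl | rfl | rfl | rfl) | rfl | rfl | rfl | rfl | rfl <;>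
        first
        | exact Or.inl (by assumption)
        | exact Or.inr (Or.inl rfl)
        | exact Or.inr (Or.inr rfl)
    by_cases has : G.Adj a s
    swap
    · refine ⟨{x, q, c}, c3 _ _ _, self (by simp), ?_⟩
      have d1 : Dom G {x, q, c} v := nb (t := x) (by simp) hvx.symm
      have d2 : Dom G {x, q, c} y := nb (t := x) (by simp) hyx.symm
      have d3 : Dom G {x, q, c} q := self (by simp)
      have d4 : Dom G {x, q, c} p := nb (t := q) (by simp) k2.symm
      have d5 : Dom G {x, q, c} r := nb (t := q) (by simp) k3
      have d6 : Dom G {x, q, c} c := self (by simp)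
      have d7 : Dom G {x, q, c} b := nb (t := c) (by simp) h.cd.symm
      have d8 : Dom G {x, q, c} d := nb (t := c) (by simp) h.de
      refine iso_of_two_left has fun t ht => ?_
      simp only [Finset.mem_union, Finset.mem_insert, Finset.mem_singleton] at ht
      rcases ht with (rfl | rfl | rfl | rfl | rfl) | rfl | rfl | rfl | rfl | rfl <;>
        first
        | exact Or.inl (by assumption)
        | exact Or.inr (Or.inl rfl)
        | exact Or.inr (Or.inr rfl)
    · -- `s` would have the four neighbours `v`, `r`, `a`, `d`
      have haS : a ∈ S := hBS (by simp)
      have hdS : d ∈ S := hBS (by simp)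
      have := mem_of_degree_le (hmax s hsS) (Z := {v, r, a})
        (by
          intro t ht
          simp only [Finset.mem_insert, Finset.mem_singleton] at ht
          rcases ht with rfl | rfl | rfl
          · exact ⟨hvS, k5⟩
          · exact ⟨hrS, k4.symm⟩
          · exact ⟨haS, has.symm⟩)
        (by rw [Finset.card_eq_three.2 ⟨v, r, a, by grind, by grind, by grind, rfl⟩]) hdS hds.symm
      grind

/-! ### The induction -/

/-- The bound `|S| / 3` for good vertex sets, connected or not. -/
theorem exists_isolating_of_good (S : Finset V) (hg : Good G S) :
    ∃ D, 3 * D.card ≤ S.card ∧ Iso G S D := by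
  classical
  induction hN : S.card using Nat.strong_induction_on generalizing S with
  | _ N ih =>
  subst hN
  have IH : ∀ T : Finset V, T.card < S.card → Good G T → ∃ D, 3 * D.card ≤ T.card ∧ Iso G T D :=
    fun T hT hgT => ih T.card hT T hgT rfl
  clear ih
  by_contra hcon
  -- deleting a single vertex keeps `S` good
  have herase : ∀ x ∈ S, Good G (S.erase x) := by
    intro x hx
    by_contra hbad
    rw [Finset.erase_eq] at hbad
    refine hcon (exists_isolating_of_delete IH hx ∅ (by simp) ?_ (Or.inr hbad))
    intro B hB
    obtain ⟨y, hy, x', hx', hn, hyx⟩ := exists_link hg Finset.sdiff_subset hB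
    have : x' = x := by simpa [hx'] using hn
    exact ⟨y, hy, this ▸ hyx.symm⟩
  obtain ⟨a, ha, b, hb, hab⟩ : ∃ a ∈ S, ∃ b ∈ S, G.Adj a b := by
    by_contra! h
    exact hcon ⟨∅, by simp, fun u hu w hw huw => absurd huw (h u hu w hw)⟩
  obtain ⟨v, hv, hvmax⟩ := Finset.exists_max_image S (fun u => (S.filter (G.Adj u)).card) ⟨a, ha⟩
  obtain ⟨Y, hYdef⟩ : ∃ Y, Y = S.filter (G.Adj v) := ⟨_, rfl⟩
  have memY : ∀ t, t ∈ Y ↔ t ∈ S ∧ G.Adj v t := by simp [hYdef]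
  have hmax : ∀ u ∈ S, ∀ Z : Finset V, (∀ z ∈ Z, z ∈ S ∧ G.Adj u z) → Z.card ≤ Y.card := by
    intro u hu Z hZ
    rw [hYdef]
    exact (Finset.card_le_card fun z hz => Finset.mem_filter.2 (hZ z hz)).trans (hvmax u hu)
  have hY2 : 2 ≤ Y.card := by
    by_contra hlt
    have key : ∀ {u p t : V}, u ∈ S → p ∈ S → G.Adj u p → t ∈ S → G.Adj u t → t = p := by
      intro u p t hu hp hup ht hut
      by_contra hne
      have := hmax u hu {t, p} (by grind)
      rw [Finset.card_pair hne] at this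
      omega
    refine hg {a, b} ⟨⟨by grind, ?_⟩, Or.inl ⟨a, b, hab, rfl⟩⟩
    intro s hs t ht hst
    simp only [Finset.mem_insert, Finset.mem_singleton] at hs ⊢
    rcases hs with rfl | rfl
    · exact Or.inr (key ha hb hab ht hst)
    · exact Or.inl (key hb ha hab.symm ht hst)
  -- deleting `N[v]` creates a bad component `B`
  obtain ⟨B, hB⟩ : ∃ B, Bad G (S \ insert v Y) B := by
    by_contra hno
    exact hcon (exists_isolating_of_delete IH hv Y (fun y hy => (memY y).1 hy)
      (fun B hB => absurd ⟨B, hB⟩ hno) (Or.inl hY2))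
  have hBmem : ∀ t ∈ B, t ∈ S ∧ t ≠ v ∧ t ∉ Y := by
    intro t ht
    simpa using hB.1.1 ht
  have hBS : B ⊆ S := fun t ht => (hBmem t ht).1
  have hBv : ∀ t ∈ B, ¬ G.Adj v t := fun t ht h =>
    (hBmem t ht).2.2 ((memY t).2 ⟨(hBmem t ht).1, h⟩)
  have hBlink : ∀ t ∈ B, ∀ u ∈ S, G.Adj t u → u ∈ B ∨ u ∈ Y := by
    intro t ht u hu htu
    by_cases huY : u ∈ Y
    · exact Or.inr huY
    · refine Or.inl (hB.1.2 t ht u ?_ htu)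
      have : u ≠ v := by
        rintro rfl
        exact hBv t ht htu.symm
      simp [hu, this, huY]
  obtain ⟨y, hy, x, hx, hxn, hyx⟩ := exists_link hg Finset.sdiff_subset hB
  have hxB : x ∉ B := fun h => hxn (hB.1.1 h)
  have hxY : x ∈ Y := (hBlink y hy x hx hyx).resolve_left hxB
  have hvx : G.Adj v x := ((memY x).1 hxY).2
  have hXS : insert x B ⊆ S := Finset.insert_subset hx hBS
  have hXcard := Finset.card_sdiff_add_card_eq_card hXS
  rw [Finset.card_insert_of_notMem hxB] at hXcard
  -- deleting `B ∪ {x}` creates a bad component `B'`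
  obtain ⟨B', hB'⟩ : ∃ B', Bad G (S \ insert x B) B' := by
    by_contra hno
    obtain ⟨D₁, hc1, hyD, hD1⟩ := bad_dom hB.2 hy
    obtain ⟨D₂, hc2, hD2⟩ := IH (S \ insert x B) (by omega) (fun B' h => hno ⟨B', h⟩)
    have hun := Finset.card_union_le D₁ D₂
    have hd : ∀ t ∈ insert x B, Dom G (D₁ ∪ D₂) t := by
      intro t ht
      rcases Finset.mem_insert.1 ht with rfl | ht
      · exact ⟨y, by simp [hyD], Or.inr hyx⟩
      · exact (hD1 t ht).mono Finset.subset_union_left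
    refine hcon ⟨D₁ ∪ D₂, by omega, fun u hu w hw huw => ?_⟩
    by_cases hu' : u ∈ insert x B
    · exact Or.inl (hd u hu')
    by_cases hw' : w ∈ insert x B
    · exact Or.inr (hd w hw')
    exact (hD2 u (Finset.mem_sdiff.2 ⟨hu, hu'⟩) w (Finset.mem_sdiff.2 ⟨hw, hw'⟩) huw).imp
      (Dom.mono Finset.subset_union_right) (Dom.mono Finset.subset_union_right)
  have hB'mem : ∀ t ∈ B', t ∈ S ∧ t ≠ x ∧ t ∉ B := by
    intro t ht
    simpa using hB'.1.1 ht
  have hB'S : B' ⊆ S := fun t ht => (hB'mem t ht).1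
  have hB'link : ∀ t ∈ B', ∀ u ∈ S, G.Adj t u → u ∈ B' ∨ u ∈ B ∨ u = x := by
    intro t ht u hu htu
    by_cases h : u ∈ insert x B
    · exact Or.inr (Or.symm (Finset.mem_insert.1 h))
    · exact Or.inl (hB'.1.2 t ht u (Finset.mem_sdiff.2 ⟨hu, h⟩) htu)
  -- `B'` is joined to `B`, because it is not a component after deleting `x` alone
  obtain ⟨t, ht, u, hu, hun, htu⟩ := exists_link (herase x hx)
    (fun s hs => by
        simp only [Finset.mem_sdiff, Finset.mem_insert, Finset.mem_erase] at hs ⊢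
        tauto) hB'
  have huB : u ∈ B := by
    simp at hu hun
    tauto
  have htY : t ∈ Y := (hBlink u huB t (hB'S ht) htu.symm).resolve_left (hB'mem t ht).2.2
  have hvt : G.Adj v t := ((memY t).1 htY).2
  have hvB : v ∉ B := fun h => (hBmem v h).2.1 rfl
  have hvB' : v ∈ B' := by
    rcases hB'link t ht v hv hvt.symm with h | h | h
    · exact h
    · exact absurd h hvB
    · exact absurd h hvx.ne
  have hYsub : ∀ s ∈ Y, s ∈ B' ∨ s = x := by
    intro s hs
    rcases hB'link v hvB' s ((memY s).1 hs).1 ((memY s).1 hs).2 with h | h | h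
    · exact Or.inl h
    · exact absurd hs (hBmem s h).2.2
    · exact Or.inr h
  rcases hB'.2 with hE | hC
  · obtain ⟨w, hvw, rfl⟩ := hE.start hvB'
    have htw : t = w := by
      have := hvt.ne
      grind
    subst htw
    have hYle : Y.card ≤ 2 := by
      have hs : Y ⊆ {t, x} := by
        intro s hs
        have := ((memY s).1 hs).2.ne
        grind
      exact (Finset.card_le_card hs).trans Finset.card_le_two
    exact edge_case hg (fun u hu Z hZ => (hmax u hu Z hZ).trans hYle) hv hx (hB'S ht) hBS hB.2
      hxB hvB (hB'mem t ht).2.2 (hB'mem t ht).2.1 hvx hvw hy hyx huB htu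
  · obtain ⟨p, q, r, s, hP, hPdef⟩ := hC.start hvB'
    have hYps : ∀ t ∈ Y, t = p ∨ t = s ∨ t = x := by
      intro t ht
      have hvt := ((memY t).1 ht).2
      rcases hYsub t ht with h | h
      · simp only [hPdef, Finset.mem_insert, Finset.mem_singleton] at h
        rcases h with rfl | rfl | rfl | rfl | rfl
        · exact absurd rfl hvt.ne
        · exact Or.inl rfl
        · exact absurd hvt hP.ac
        · exact absurd hvt.symm hP.da
        · exact Or.inr (Or.inl rfl)
      · exact Or.inr (Or.inr h)
    have hYle : Y.card ≤ 3 := by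
      have hs : Y ⊆ {p, s, x} := by
        intro t ht
        simpa using hYps t ht
      exact (Finset.card_le_card hs).trans Finset.card_le_three
    obtain ⟨D₁, hc1, hD1x, hD1⟩ : ∃ D : Finset V,
        3 * D.card ≤ B.card + 6 ∧ Dom G D x ∧ Iso G (B ∪ B') D := by
      subst hPdef
      refine cyc_case (fun u hu Z hZ => (hmax u hu Z hZ).trans hYle) hBS hB'S hB.2 hP
        (fun t ht h => (hB'mem t h).2.2 ht) (fun t ht u hu htu => ?_) hvx hy hyx
      rcases hBlink t ht u (hB'S hu) htu with h | h
      · exact absurd h (hB'mem u hu).2.2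
      · rcases hYps u h with h | h | h
        · exact Or.inl h
        · exact Or.inr h
        · exact absurd h (hB'mem u hu).2.1
    have hPc : B'.card = 5 := hPdef ▸ hP.card
    have hpP : p ∈ B' := by simp [hPdef]
    have hsP : s ∈ B' := by simp [hPdef]
    -- the remaining vertices are joined to the removed ones through `x` only
    have hout : ∀ t ∈ B ∪ B', ∀ u ∈ S, G.Adj t u → u ∈ B ∪ B' ∨ u = x := by
      intro t ht u hu htu
      rcases Finset.mem_union.1 ht with ht | ht
      · rcases hBlink t ht u hu htu with h | h
        · exact Or.inl (Finset.mem_union_left _ h)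
        · rcases hYps u h with rfl | rfl | h
          · exact Or.inl (Finset.mem_union_right _ hpP)
          · exact Or.inl (Finset.mem_union_right _ hsP)
          · exact Or.inr h
      · rcases hB'link t ht u hu htu with h | h | h
        · exact Or.inl (Finset.mem_union_right _ h)
        · exact Or.inl (Finset.mem_union_left _ h)
        · exact Or.inr h
    have hxU : x ∉ B ∪ B' := by
      intro h
      rcases Finset.mem_union.1 h with h | h
      · exact hxB h
      · exact (hB'mem x h).2.1 rfl
    have hUS : insert x (B ∪ B') ⊆ S := Finset.insert_subset hx (Finset.union_subset hBS hB'S)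
    have hUc := Finset.card_sdiff_add_card_eq_card hUS
    rw [Finset.card_insert_of_notMem hxU, Finset.card_union_of_disjoint
      (Finset.disjoint_left.2 fun t ht h => (hB'mem t h).2.2 ht), hPc] at hUc
    have hR : Good G (S \ insert x (B ∪ B')) := by
      intro C hC
      obtain ⟨c, hc, t, ht, htn, hct⟩ := exists_link (herase x hx)
        (fun s hs => by
        simp only [Finset.mem_sdiff, Finset.mem_insert, Finset.mem_erase] at hs ⊢
        tauto) hC
      have hcm := hC.1.1 hc
      rw [Finset.mem_sdiff, Finset.mem_insert, not_or] at hcm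
      rw [Finset.mem_erase] at ht
      rw [Finset.mem_sdiff, Finset.mem_insert] at htn
      have htU : t ∈ B ∪ B' := by tauto
      rcases hout t htU c hcm.1 hct.symm with h | h
      · exact hcm.2.2 h
      · exact hcm.2.1 h
    obtain ⟨D₂, hc2, hD2⟩ := IH _ (by omega) hR
    have hun := Finset.card_union_le D₁ D₂
    have hDx : Dom G (D₁ ∪ D₂) x := hD1x.mono Finset.subset_union_left
    refine hcon ⟨D₁ ∪ D₂, by omega, fun u hu w hw huw => ?_⟩
    by_cases hux : u = x
    · exact Or.inl (hux ▸ hDx)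
    by_cases hwx : w = x
    · exact Or.inr (hwx ▸ hDx)
    by_cases huU : u ∈ B ∪ B'
    · have hwU := (hout u huU w hw huw).resolve_right hwx
      exact (hD1 u huU w hwU huw).imp
        (Dom.mono Finset.subset_union_left) (Dom.mono Finset.subset_union_left)
    · have hwU : w ∉ B ∪ B' := fun h => huU ((hout w h u hu huw.symm).resolve_right hux)
      exact (hD2 u (by rw [Finset.mem_sdiff, Finset.mem_insert]; tauto)
        w (by rw [Finset.mem_sdiff, Finset.mem_insert]; tauto) huw).imp
        (Dom.mono Finset.subset_union_right) (Dom.mono Finset.subset_union_right)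

/-! ### Connected graphs -/

lemma Cyc.iso [Fintype V] {a b c d e : V} (h : Cyc G a b c d e)
    (hU : ({a, b, c, d, e} : Finset V) = Finset.univ) : Nonempty (G ≃g cycleGraph 5) := by
  have h1 := h.ne_ac
  have h2 := h.rot.ne_ac
  have h3 := h.rot.rot.ne_ac
  have h4 := h.rot.rot.rot.ne_ac
  have h5 := h.rot.rot.rot.rot.ne_ac
  let f : Fin 5 → V := ![a, b, c, d, e]
  have hsurj : Function.Surjective f := by
    intro t
    have ht : t ∈ ({a, b, c, d, e} : Finset V) := hU ▸ Finset.mem_univ t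
    simp only [Finset.mem_insert, Finset.mem_singleton] at ht
    rcases ht with rfl | rfl | rfl | rfl | rfl
    exacts [⟨0, rfl⟩, ⟨1, rfl⟩, ⟨2, rfl⟩, ⟨3, rfl⟩, ⟨4, rfl⟩]
  have hcard : Fintype.card (Fin 5) = Fintype.card V := by
    rw [← Finset.card_univ (α := V), ← hU, h.card, Fintype.card_fin]
  have hbij : Function.Bijective f := (Fintype.bijective_iff_surjective_and_card f).2 ⟨hsurj, hcard⟩
  refine ⟨RelIso.symm ⟨Equiv.ofBijective f hbij, ?_⟩⟩
  have e1 := h.ab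
  have e2 := h.bc
  have e3 := h.cd
  have e4 := h.de
  have e5 := h.ea
  have n1 := h.ac
  have n2 := h.bd
  have n3 := h.ce
  have n4 := h.da
  have n5 := h.eb
  have cyc : ∀ i j : Fin 5, (cycleGraph 5).Adj i j ↔ (i - j = 1 ∨ j - i = 1) :=
    fun i j => cycleGraph_adj
  intro i j
  rw [cyc]
  simp only [Equiv.ofBijective_apply]
  fin_cases i <;> fin_cases j <;>
    first
    | exact iff_of_true e1 (by decide)
    | exact iff_of_true e2 (by decide)
    | exact iff_of_true e3 (by decide)
    | exact iff_of_true e4 (by decide)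
    | exact iff_of_true e5 (by decide)
    | exact iff_of_true e1.symm (by decide)
    | exact iff_of_true e2.symm (by decide)
    | exact iff_of_true e3.symm (by decide)
    | exact iff_of_true e4.symm (by decide)
    | exact iff_of_true e5.symm (by decide)
    | exact iff_of_false (G.loopless.irrefl _) (by decide)
    | exact iff_of_false (n1) (by decide)
    | exact iff_of_false (n2) (by decide)
    | exact iff_of_false (n3) (by decide)
    | exact iff_of_false (n4) (by decide)
    | exact iff_of_false (n5) (by decide)
    | exact iff_of_false (fun h' => n1 h'.symm) (by decide)
    | exact iff_of_false (fun h' => n2 h'.symm) (by decide)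
    | exact iff_of_false (fun h' => n3 h'.symm) (by decide)
    | exact iff_of_false (fun h' => n4 h'.symm) (by decide)
    | exact iff_of_false (fun h' => n5 h'.symm) (by decide)

end Isolation

open Isolation in
theorem stmt12 {V : Type*} [Fintype V] (G : SimpleGraph V)
    (hconn : G.Connected) (n : ℕ) (hn : n = Fintype.card V) (hn3 : 3 ≤ n)
    (hne : ¬ Nonempty (G ≃g cycleGraph 5)) :
    (isolNum G (pathGraph 2) : ℚ) ≤ n / 3 ∧
      ∃ D : Set V, (D.ncard : ℚ) ≤ n / 3 ∧ IsIsolating G (pathGraph 2) D := by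
  classical
  have hg : Good G Finset.univ := by
    rintro B ⟨hcl, ⟨a, b, hab, rfl⟩ | ⟨a, b, c, d, e, h, rfl⟩⟩
    · have := congrArg Finset.card (eq_univ_of_closed hconn hcl (b := a) (by simp))
      rw [Finset.card_pair hab.ne, Finset.card_univ] at this
      omega
    · exact hne (h.iso (eq_univ_of_closed hconn hcl (b := a) (by simp)))
  obtain ⟨D, hc, hD⟩ := exists_isolating_of_good Finset.univ hg
  rw [Finset.card_univ, ← hn] at hc
  have hiso : IsIsolating G (pathGraph 2) (D : Set V) := by
    rintro ⟨f, -⟩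
    have hadj : G.Adj (f 0).1 (f 1).1 := f.map_rel (show (pathGraph 2).Adj 0 1 by simp [pathGraph_adj])
    have hnd : ∀ i, ¬ Dom G D (f i).1 := by
      rintro i ⟨d, hd, h | h⟩
      · exact (f i).2 (Or.inl (h ▸ hd))
      · exact (f i).2 (Or.inr ⟨d, hd, h⟩)
    rcases hD _ (Finset.mem_univ _) _ (Finset.mem_univ _) hadj with h | h
    · exact hnd 0 h
    · exact hnd 1 h
  have hle : ((D : Set V).ncard : ℚ) ≤ n / 3 := by
    rw [Set.ncard_coe_finset, le_div_iff₀ (by norm_num)]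
    have : D.card * 3 ≤ n := by omega
    exact_mod_cast this
  refine ⟨?_, D, hle, hiso⟩
  have hmin : isolNum G (pathGraph 2) ≤ (D : Set V).ncard := Nat.sInf_le ⟨D, hiso, rfl⟩
  exact le_trans (by exact_mod_cast hmin) hle
end
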